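/- Let (Ω, 𝓕, 𝔽, P) satisfy the usual conditions and let 0 < L < U be constants. Let ν be a discrete probability measure on ℝ with ν({0}) = 0 and ∫_ℝ |ξ| ν(dξ) < ∞; let Atom(ν) be its (countable) set of atoms and FS(Atom(ν)) the countable set of all finite sums (including the empty sum 0) of elements of Atom(ν). Let η be a progressively measurable process with L ≤ η ≤ U (P ⊗ dt)-a.e., satisfying: there exist α ∈ (0,1] and, for each T > 0, a constant C_T > 0 with E[|η_t − η_s|] ≤ C_T|t − s|^α for all s, t ∈ [0,T]. Let λ : [0,∞) × FS(Atom(ν)) → [0,∞) be measurable with L ≤ λ(·, x) ≤ U Lebesgue-a.e. for each x. Suppose Ω supports i.i.d. Exp(1) random variables (E_k)_{k≥1} and i.i.d. ν-distributed random variables (J_k)_{k≥1} such that 𝓕_∞, (E_k), (J_k) are independent. Then there exist a filtration 𝔾 ⊇ 𝔽 satisfying the usual conditions and finite 𝔾-stopping times 0 = τ_0 < τ_1 < τ_2 < ⋯ increasing to ∞ P-a.s., such that the pure jump process X_t := Σ_{k=1}^∞ J_k·1_{{τ_k ≤ t}} is well-defined, starts at 0, is 𝔾-adapted, takes values in FS(Atom(ν)),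 and for every measurable h : ℝ → ℝ with h(J_1) integrable, the process Σ_{k=1}^∞ h(J_k)·1_{{τ_k ≤ t}} − (∫_ℝ h(ξ) ν(dξ)) · ∫_0^t (η_s / E[η_s | X_{s−}]) λ(s, X_{s−}) ds, t ≥ 0, is a 𝔾-martingale. (Equivalently, the jump measure of X has 𝔾-compensator (η_t / E[η_t | X_{t−}]) λ(t, X_{t−}) ν(dξ) dt.) -/

import Mathlib

open MeasureTheory ProbabilityTheory Filter Set
open scoped ENNReal Topology

noncomputable section

namespace InvMarkovJump

variable {Ω : Type*}

/-- `F` is a filtration (for times `t ≥ 0`) of sub-σ-algebras of `m0`. -/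
def IsFiltration (m0 : MeasurableSpace Ω) (F : ℝ → MeasurableSpace Ω) : Prop :=
  (∀ s t : ℝ, 0 ≤ s → s ≤ t → F s ≤ F t) ∧ ∀ t : ℝ, F t ≤ m0

/-- The right-continuous regularization `(⋂_{s > t} F s)_{t ≥ 0}` of a filtration. -/
def rcReg (F : ℝ → MeasurableSpace Ω) : ℝ → MeasurableSpace Ω :=
  fun t => ⨅ s ∈ Set.Ioi t, F s

/-- All sample paths of `M` are right-continuous (at every time `t ≥ 0`). -/
def RCPaths (M : ℝ → Ω → ℝ) : Prop :=
  ∀ ω, ∀ t : ℝ, 0 ≤ t → ContinuousWithinAt (fun s => M s ω) (Set.Ici t) t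

/-- `M` is a martingale (for times `t ≥ 0`) with respect to the filtration `F`
under the measure `μ`: it is adapted, integrable, and `E[M_t | F_s] = M_s` a.s.
for all `0 ≤ s ≤ t`. -/
def IsMartingale {m0 : MeasurableSpace Ω} (μ : Measure Ω)
    (F : ℝ → MeasurableSpace Ω) (M : ℝ → Ω → ℝ) : Prop :=
  (∀ t : ℝ, 0 ≤ t → Integrable (M t) μ) ∧
  (∀ t : ℝ, 0 ≤ t → Measurable[F t] (M t)) ∧
  ∀ s t : ℝ, 0 ≤ s → s ≤ t → μ[M t|F s] =ᵐ[μ] M s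

/-- `F` is immersed in `G`: `F ⊆ G` and every `F`-martingale (with right-continuous
sample paths) is a `G`-martingale. -/
def Immersed {m0 : MeasurableSpace Ω} (μ : Measure Ω)
    (F G : ℝ → MeasurableSpace Ω) : Prop :=
  (∀ t : ℝ, 0 ≤ t → F t ≤ G t) ∧
  ∀ M : ℝ → Ω → ℝ, RCPaths M → IsMartingale μ F M → IsMartingale μ G M

/-- The usual conditions: the filtration is right-continuous and `F 0` contains
all `μ`-null sets. -/
def UsualConditions {m0 : MeasurableSpace Ω} (μ : Measure Ω)
    (F : ℝ → MeasurableSpace Ω) : Prop :=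
  IsFiltration m0 F ∧ (∀ t : ℝ, 0 ≤ t → F t = rcReg F t) ∧
    ∀ s : Set Ω, μ s = 0 → MeasurableSet[F 0] s

/-- `E` is `Exp(1)`-distributed: `P(E > x) = e^{-x}` for all `x ≥ 0`. -/
def IsExpOne {m0 : MeasurableSpace Ω} (μ : Measure Ω) (E : Ω → ℝ) : Prop :=
  Measurable E ∧ ∀ x : ℝ, 0 ≤ x → μ {ω | x < E ω} = ENNReal.ofReal (Real.exp (-x))

/-- `F_∞ = ⋁_{t ≥ 0} F t`. -/
def Finfty (F : ℝ → MeasurableSpace Ω) : MeasurableSpace Ω :=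
  ⨆ t ∈ Set.Ici (0:ℝ), F t

/-- The natural filtration `(σ(Y_s : 0 ≤ s ≤ t))_{t ≥ 0}` of a process `Y`. -/
def natFilt {β : Type*} [MeasurableSpace β] (Y : ℝ → Ω → β) : ℝ → MeasurableSpace Ω :=
  fun t => ⨆ s ∈ Set.Icc (0:ℝ) t, MeasurableSpace.comap (Y s) inferInstance

/-- Progressive measurability of a process `u` with respect to the filtration `F`:
for every `t ≥ 0`, `(s, ω) ↦ u s ω` on `[0, t] × Ω` is `B([0,t]) ⊗ F t`-measurable. -/
def ProgMeas (F : ℝ → MeasurableSpace Ω) (u : ℝ → Ω → ℝ) : Prop :=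
  ∀ t : ℝ, 0 ≤ t →
    Measurable[MeasurableSpace.prod inferInstance (F t)]
      (fun p : Set.Icc (0:ℝ) t × Ω => u p.1 p.2)

/-- The set of atoms of a measure `ν` on `ℝ`. -/
def atomSet (ν : Measure ℝ) : Set ℝ := {x : ℝ | ν {x} ≠ 0}

/-- `ν` is a discrete probability measure: it is carried by a countable set. -/
def IsDiscrete (ν : Measure ℝ) : Prop := ∃ S : Set ℝ, S.Countable ∧ ν Sᶜ = 0

/-- `FS A`: the set of all finite sums (including the empty sum `0`) of elements of `A`. -/
def FS (A : Set ℝ) : Set ℝ :=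
  {x : ℝ | ∃ (k : ℕ) (a : Fin k → ℝ), (∀ i, a i ∈ A) ∧ x = ∑ i, a i}

/-- The pure jump process `X_t = Σ_{k ≥ 1} J_k·1_{τ_k ≤ t}`. -/
def jumpX (τ : ℕ → Ω → ℝ) (J : ℕ → Ω → ℝ) (t : ℝ) (ω : Ω) : ℝ :=
  ∑' k : ℕ, if τ (k + 1) ω ≤ t then J k ω else 0

/-- The left limit `X_{t-} = Σ_{k ≥ 1} J_k·1_{τ_k < t}`. -/
def jumpXminus (τ : ℕ → Ω → ℝ) (J : ℕ → Ω → ℝ) (t : ℝ) (ω : Ω) : ℝ :=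
  ∑' k : ℕ, if τ (k + 1) ω < t then J k ω else 0

set_option linter.unusedSectionVars false

/-! ### Deterministic jump times -/

/-- Jump times obtained from the rates `c` and the clocks `e`. -/
def jt (c : ℕ → ℝ → ℝ) (e : ℕ → ℝ) : ℕ → ℝ
  | 0 => 0
  | k + 1 => sInf {t | e k ≤ ∫ s in Ioc (jt c e k) t, c k s}

/-- Integrated rate after the `k`-th jump. -/
def Lam (c : ℕ → ℝ → ℝ) (e : ℕ → ℝ) (k : ℕ) (t : ℝ) : ℝ :=
  ∫ s in Ioc (jt c e k) t, c k s

/-- Rates are measurable and bounded above and below. -/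
structure Rate (lo up : ℝ) (c : ℝ → ℝ) : Prop where
  lo_pos : 0 < lo
  meas : Measurable c
  lower : ∀ s, lo ≤ c s
  upper : ∀ s, c s ≤ up

namespace Rate
variable {lo up : ℝ} {c : ℝ → ℝ}

lemma up_pos (h : Rate lo up c) : 0 < up :=
  h.lo_pos.trans_le ((h.lower 0).trans (h.upper 0))

lemma intOn (h : Rate lo up c) (a b : ℝ) : IntegrableOn c (Ioc a b) := by
  refine Measure.integrableOn_of_bounded (M := up) (by simp) h.meas.aestronglyMeasurable ?_
  refine ae_of_all _ fun s => ?_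
  rw [Real.norm_eq_abs, abs_of_pos (h.lo_pos.trans_le (h.lower s))]
  exact h.upper s

lemma int_le (h : Rate lo up c) {a b : ℝ} (hab : a ≤ b) : ∫ s in Ioc a b, c s ≤ up * (b - a) := by
  have := setIntegral_mono (μ := volume) (s := Ioc a b) (h.intOn a b)
    (integrableOn_const (by simp)) (g := fun _ => up) (fun s => h.upper s)
  simpa [hab, mul_comm] using this

lemma le_int (h : Rate lo up c) {a b : ℝ} (hab : a ≤ b) : lo * (b - a) ≤ ∫ s in Ioc a b, c s := by
  have := setIntegral_mono (μ := volume) (s := Ioc a b) (f := fun _ => lo)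
    (integrableOn_const (by simp)) (h.intOn a b) (fun s => h.lower s)
  simpa [hab, mul_comm] using this

lemma int_add (h : Rate lo up c) {a s t : ℝ} (has : a ≤ s) (hst : s ≤ t) :
    ∫ r in Ioc a t, c r = (∫ r in Ioc a s, c r) + ∫ r in Ioc s t, c r := by
  rw [← Ioc_union_Ioc_eq_Ioc has hst, setIntegral_union _ measurableSet_Ioc
    (h.intOn _ _) (h.intOn _ _)]
  exact Ioc_disjoint_Ioc_of_le le_rfl

lemma int_zero {a t : ℝ} (h : t ≤ a) : ∫ r in Ioc a t, c r = 0 := by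
  simp [Ioc_eq_empty_of_le h]

lemma int_nonneg (h : Rate lo up c) (a t : ℝ) : 0 ≤ ∫ r in Ioc a t, c r :=
  integral_nonneg fun s => (h.lo_pos.trans_le (h.lower s)).le

lemma int_mono (h : Rate lo up c) (a : ℝ) : Monotone fun t => ∫ r in Ioc a t, c r := by
  intro s t hst
  exact setIntegral_mono_set (h.intOn a t) (ae_of_all _ fun s => (h.lo_pos.trans_le (h.lower s)).le)
    (Ioc_subset_Ioc_right hst).eventuallyLE

lemma int_cont (h : Rate lo up c) (a : ℝ) : Continuous fun t => ∫ r in Ioc a t, c r := by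
  have key : ∀ s t, s ≤ t → |(∫ r in Ioc a t, c r) - ∫ r in Ioc a s, c r| ≤ up * (t - s) := by
    intro s t hst
    rw [abs_of_nonneg (sub_nonneg.2 (h.int_mono a hst))]
    beta_reduce
    rcases le_total a s with has | has
    · rw [h.int_add has hst]
      have := h.int_le hst
      linarith
    · rw [int_zero has]
      rcases le_total a t with hat | hat
      · have := h.int_le hat
        nlinarith [h.up_pos]
      · rw [int_zero hat]
        nlinarith [h.up_pos]
  have : LipschitzWith (Real.toNNReal up) fun t => ∫ r in Ioc a t, c r := by
    refine LipschitzWith.of_dist_le_mul fun x y => ?_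
    rw [Real.coe_toNNReal _ h.up_pos.le, Real.dist_eq, Real.dist_eq]
    rcases le_total x y with hxy | hxy
    · rw [abs_sub_comm, abs_sub_comm x y, abs_of_nonneg (sub_nonneg.2 hxy)]
      exact key _ _ hxy
    · rw [abs_of_nonneg (sub_nonneg.2 hxy)]
      exact key _ _ hxy
  exact this.continuous

lemma sInf_le_iff (h : Rate lo up c) {a e : ℝ} (he : 0 < e) (t : ℝ) :
    sInf {t | e ≤ ∫ s in Ioc a t, c s} ≤ t ↔ e ≤ ∫ s in Ioc a t, c s := by
  set A := {t | e ≤ ∫ s in Ioc a t, c s} with hA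
  have hbdd : BddBelow A := by
    refine ⟨a, fun t ht => ?_⟩
    by_contra hlt
    rw [hA, mem_ofPred_eq, int_zero (not_le.1 hlt).le] at ht
    linarith
  have hne : A.Nonempty := by
    have hpos := div_pos he h.lo_pos
    refine ⟨a + e / lo, ?_⟩
    have := h.le_int (a := a) (b := a + e / lo) (by linarith)
    rw [hA, mem_ofPred_eq]
    refine le_trans (le_of_eq ?_) this
    field_simp [h.lo_pos.ne']
    ring
  have hcl : IsClosed A := isClosed_le continuous_const (h.int_cont a)
  have hmem : sInf A ∈ A := hcl.csInf_mem hne hbdd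
  constructor
  · intro hle
    exact le_trans hmem (h.int_mono a hle)
  · intro hle
    exact csInf_le hbdd hle

end Rate

section jtlemmas
variable {lo up : ℝ} {c : ℕ → ℝ → ℝ} {e : ℕ → ℝ}

@[simp] lemma jt_zero : jt c e 0 = 0 := rfl

lemma jt_succ_le_iff (hc : ∀ k, Rate lo up (c k)) (he : ∀ k, 0 < e k) (k : ℕ) (t : ℝ) :
    jt c e (k + 1) ≤ t ↔ e k ≤ Lam c e k t := by
  rw [jt, Lam]
  exact (hc k).sInf_le_iff (he k) t

lemma Lam_zero {k : ℕ} {t : ℝ} (h : t ≤ jt c e k) : Lam c e k t = 0 := Rate.int_zero h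

lemma Lam_nonneg (hc : ∀ k, Rate lo up (c k)) (k : ℕ) (t : ℝ) : 0 ≤ Lam c e k t :=
  (hc k).int_nonneg _ _

lemma jt_lt_succ (hc : ∀ k, Rate lo up (c k)) (he : ∀ k, 0 < e k) (k : ℕ) :
    jt c e k < jt c e (k + 1) := by
  by_contra hlt
  rw [not_lt, jt_succ_le_iff hc he, Lam_zero le_rfl] at hlt
  exact absurd (he k) (not_lt.2 hlt)

lemma jt_strictMono (hc : ∀ k, Rate lo up (c k)) (he : ∀ k, 0 < e k) : StrictMono (jt c e) :=
  strictMono_nat_of_lt_succ (jt_lt_succ hc he)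

lemma jt_nonneg (hc : ∀ k, Rate lo up (c k)) (he : ∀ k, 0 < e k) (k : ℕ) : 0 ≤ jt c e k :=
  (jt_strictMono hc he).monotone (Nat.zero_le k)

lemma Lam_jt_succ (hc : ∀ k, Rate lo up (c k)) (he : ∀ k, 0 < e k) (k : ℕ) :
    Lam c e k (jt c e (k + 1)) = e k := by
  apply le_antisymm _ ((jt_succ_le_iff hc he k _).1 le_rfl)
  have hcont : Continuous (Lam c e k) := (hc k).int_cont _
  have h1 : Tendsto (Lam c e k) (𝓝[<] (jt c e (k + 1))) (𝓝 (Lam c e k (jt c e (k + 1)))) :=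
    hcont.continuousAt.mono_left nhdsWithin_le_nhds
  refine le_of_tendsto h1 ?_
  filter_upwards [self_mem_nhdsWithin] with t ht
  have := (jt_succ_le_iff hc he k t).not.1 (not_le.2 ht)
  exact (not_le.1 this).le

lemma jt_succ_lt_iff (hc : ∀ k, Rate lo up (c k)) (he : ∀ k, 0 < e k) (k : ℕ) (t : ℝ) :
    jt c e (k + 1) < t ↔ e k < Lam c e k t := by
  constructor
  · intro h
    rw [Lam, (hc k).int_add (jt_lt_succ hc he k).le h.le]
    have h1 : ∫ r in Ioc (jt c e k) (jt c e (k + 1)), c k r = e k := Lam_jt_succ hc he k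
    have h2 := (hc k).le_int h.le
    have h3 := mul_pos (hc k).lo_pos (sub_pos.2 h)
    linarith
  · intro h
    refine lt_of_le_of_ne ((jt_succ_le_iff hc he k t).2 h.le) ?_
    rintro rfl
    rw [Lam_jt_succ hc he] at h
    exact lt_irrefl _ h

lemma Lam_le (hc : ∀ k, Rate lo up (c k)) {k : ℕ} {t : ℝ} (h : jt c e k ≤ t) :
    Lam c e k t ≤ up * (t - jt c e k) := (hc k).int_le h

lemma Lam_le' (hc : ∀ k, Rate lo up (c k)) (he : ∀ k, 0 < e k) {k : ℕ} {t : ℝ} (ht : 0 ≤ t) :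
    Lam c e k t ≤ up * t := by
  rcases le_total (jt c e k) t with h | h
  · have := Lam_le hc h
    nlinarith [(hc k).up_pos, jt_nonneg hc he k]
  · rw [Lam_zero h]
    exact mul_nonneg (hc k).up_pos.le ht

lemma jt_succ_le (hc : ∀ k, Rate lo up (c k)) (he : ∀ k, 0 < e k) (k : ℕ) :
    jt c e (k + 1) ≤ jt c e k + e k / lo := by
  rw [jt_succ_le_iff hc he]
  have hpos := div_pos (he k) (hc k).lo_pos
  have := (hc k).le_int (a := jt c e k) (b := jt c e k + e k / lo) (by linarith)
  refine le_trans (le_of_eq ?_) this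
  have := (hc k).lo_pos.ne'
  field_simp
  ring

lemma min_eq_Lam (hc : ∀ k, Rate lo up (c k)) (he : ∀ k, 0 < e k) (k : ℕ) (t : ℝ) :
    min (Lam c e k t) (e k) = Lam c e k (min t (jt c e (k + 1))) := by
  have hm : Monotone (Lam c e k) := (hc k).int_mono _
  rw [hm.map_min, Lam_jt_succ hc he]

lemma min_eq_integral (hc : ∀ k, Rate lo up (c k)) (he : ∀ k, 0 < e k) (k : ℕ) (t : ℝ) :
    min (Lam c e k t) (e k) =
      ∫ s in Ioc 0 t, indicator (Ioc (jt c e k) (jt c e (k + 1))) (c k) s := by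
  rw [min_eq_Lam hc he, setIntegral_indicator measurableSet_Ioc, Ioc_inter_Ioc, Lam,
    sup_eq_right.2 (jt_nonneg hc he k)]

lemma sum_min_le (hc : ∀ k, Rate lo up (c k)) (he : ∀ k, 0 < e k) (n : ℕ) {t : ℝ} (ht : 0 ≤ t) :
    ∑ k ∈ Finset.range n, min (Lam c e k t) (e k) ≤ up * t := by
  have h1 : ∀ k, min (Lam c e k t) (e k) ≤
      up * (min t (jt c e (k + 1))) - up * (min t (jt c e k)) := by
    intro k
    rw [min_eq_Lam hc he]
    have hlt := (jt_lt_succ hc he k).le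
    rcases le_total t (jt c e k) with h | h
    · rw [min_eq_left (h.trans hlt), min_eq_left h, Lam_zero h]
      simp
    · rw [min_eq_right h]
      have := Lam_le (e := e) hc (k := k) (t := min t (jt c e (k + 1))) (le_min h hlt)
      linarith
  refine (Finset.sum_le_sum fun k _ => h1 k).trans ?_
  rw [Finset.sum_range_sub (fun k => up * (min t (jt c e k)))]
  have h2 : min t (jt c e n) ≤ t := min_le_left _ _
  simp only [jt_zero, min_eq_right ht, mul_zero, sub_zero]
  exact mul_le_mul_of_nonneg_left h2 (hc 0).up_pos.le

end jtlemmas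

section jtmeas
variable {Ω : Type*} [MeasurableSpace Ω]

lemma meas_int {c : Ω → ℝ → ℝ} {τ : Ω → ℝ} (hc : Measurable (fun p : Ω × ℝ => c p.1 p.2))
    (hτ : Measurable τ) (t : ℝ) : Measurable fun ω => ∫ s in Ioc (τ ω) t, c ω s := by
  have h1 : ∀ ω, ∫ s in Ioc (τ ω) t, c ω s = ∫ s, indicator (Ioc (τ ω) t) (c ω) s := fun ω =>
    (integral_indicator measurableSet_Ioc).symm
  simp_rw [h1]
  have h2 : Measurable (fun p : Ω × ℝ => indicator (Ioc (τ p.1) t) (c p.1) p.2) := by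
    have hs : MeasurableSet {p : Ω × ℝ | p.2 ∈ Ioc (τ p.1) t} := by
      apply MeasurableSet.inter
      · exact measurableSet_lt (hτ.comp measurable_fst) measurable_snd
      · exact measurableSet_le measurable_snd measurable_const
    have := hc.indicator hs
    convert this using 2
    simp [indicator]
  exact (h2.stronglyMeasurable.integral_prod_right (ν := volume)).measurable

lemma meas_jt_succ {lo up : ℝ} {c : ℕ → Ω → ℝ → ℝ} {e : ℕ → Ω → ℝ} 
    (hr : ∀ k ω, Rate lo up (c k ω)) (he : ∀ k ω, 0 < e k ω) {k : ℕ}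
    (hm : ∀ t, Measurable fun ω => Lam (fun k => c k ω) (fun k => e k ω) k t)
    (hek : Measurable (e k)) :
    Measurable fun ω => jt (fun k => c k ω) (fun k => e k ω) (k + 1) := by
  refine measurable_of_Iic fun t => ?_
  have : (fun ω => jt (fun k => c k ω) (fun k => e k ω) (k + 1)) ⁻¹' Iic t =
    {ω | e k ω ≤ Lam (fun k => c k ω) (fun k => e k ω) k t} := by
    ext ω
    exact jt_succ_le_iff (fun k => hr k ω) (fun k => he k ω) k t
  rw [this]
  exact measurableSet_le hek (hm t)

end jtmeas

/-! ### Exponential clocks -/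

lemma indep_lintegral {Ω α β : Type*} {m0 : MeasurableSpace Ω} [MeasurableSpace α]
    [MeasurableSpace β] {μ : Measure Ω} [IsProbabilityMeasure μ] {X : Ω → α} {Y : Ω → β}
    (hX : Measurable X) (hY : Measurable Y) (h : IndepFun X Y μ) {f : α × β → ℝ≥0∞}
    (hf : Measurable f) :
    ∫⁻ ω, f (X ω, Y ω) ∂μ = ∫⁻ ω, ∫⁻ ω', f (X ω, Y ω') ∂μ ∂μ := by
  have h1 := (indepFun_iff_map_prod_eq_prod_map_map hX.aemeasurable hY.aemeasurable).1 h
  have : IsProbabilityMeasure (μ.map Y) := Measure.isProbabilityMeasure_map hY.aemeasurable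
  rw [← lintegral_map (f := f) (g := fun ω => (X ω, Y ω)) hf (hX.prodMk hY), h1, lintegral_prod _ hf.aemeasurable,
    lintegral_map (hf.lintegral_prod_right') hX]
  refine lintegral_congr fun ω => ?_
  exact lintegral_map (hf.comp measurable_prodMk_left) hY

/-- Version with a sub-σ-algebra. -/
lemma indep_lintegral' {Ω β : Type*} {m m0 : MeasurableSpace Ω}
    {mβ : MeasurableSpace β} {μ : Measure Ω} [IsProbabilityMeasure μ]
    (hm : m ≤ m0) {Y : Ω → β} (hY : Measurable Y) (h : Indep m (MeasurableSpace.comap Y mβ) μ)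
    {f : Ω × β → ℝ≥0∞} (hf : Measurable[m.prod mβ] f) :
    ∫⁻ ω, f (ω, Y ω) ∂μ = ∫⁻ ω, ∫⁻ ω', f (ω, Y ω') ∂μ ∂μ := by
  refine @indep_lintegral Ω Ω β m0 m mβ μ _ id Y (measurable_id'' hm) hY ?_ f hf
  have h2 := @IndepFun_iff_Indep Ω Ω β m0 m mβ id Y μ
  rw [h2, MeasurableSpace.comap_id]
  exact h

section expo
variable {Ω : Type*} {m0 : MeasurableSpace Ω} {μ : Measure Ω} [IsProbabilityMeasure μ] {e : Ω → ℝ}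

lemma exp_le (h : IsExpOne μ e) {a : ℝ} (ha : 0 ≤ a) :
    μ {ω | e ω ≤ a} = ENNReal.ofReal (1 - Real.exp (-a)) := by
  have h1 : {ω | e ω ≤ a} = {ω | a < e ω}ᶜ := by ext; simp
  rw [h1, prob_compl_eq_one_sub (measurableSet_lt measurable_const h.1), h.2 a ha,
    ENNReal.ofReal_sub _ (Real.exp_pos _).le, ENNReal.ofReal_one]

lemma exp_lt (h : IsExpOne μ e) {a : ℝ} (ha : 0 ≤ a) :
    μ {ω | e ω < a} = ENNReal.ofReal (1 - Real.exp (-a)) := by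
  apply le_antisymm
  · rw [← exp_le h ha]
    exact measure_mono fun ω (hω : e ω < a) => le_of_lt hω
  · rcases ha.eq_or_lt with rfl | ha
    · simp
    have ht : Tendsto (fun b : ℝ => ENNReal.ofReal (1 - Real.exp (-b))) (𝓝[<] a)
        (𝓝 (ENNReal.ofReal (1 - Real.exp (-a)))) := by
      apply Tendsto.mono_left _ nhdsWithin_le_nhds
      apply Continuous.tendsto
      exact ENNReal.continuous_ofReal.comp (by fun_prop)
    refine le_of_tendsto ht ?_
    filter_upwards [Ioo_mem_nhdsLT ha] with b hb
    rw [← exp_le h hb.1.le]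
    exact measure_mono fun ω hω => lt_of_le_of_lt hω hb.2

lemma exp_pos_ae (h : IsExpOne μ e) : ∀ᵐ ω ∂μ, 0 < e ω := by
  have := exp_le h le_rfl
  simp only [neg_zero, Real.exp_zero, sub_self, ENNReal.ofReal_zero] at this
  rw [ae_iff]
  simpa using this

lemma exp_min (h : IsExpOne μ e) {a : ℝ} (ha : 0 ≤ a) :
    ∫⁻ ω, ENNReal.ofReal (min a (e ω)) ∂μ = ENNReal.ofReal (1 - Real.exp (-a)) := by
  rw [lintegral_eq_lintegral_meas_lt μ (f := fun ω => min a (e ω))]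
  · have h1 : ∀ t ∈ Ioi (0:ℝ), μ {ω | t < min a (e ω)} =
        indicator (Iio a) (fun t => ENNReal.ofReal (Real.exp (-t))) t := by
      intro t ht
      by_cases hta : t < a
      · rw [indicator_of_mem (by exact hta), ← h.2 t (le_of_lt ht)]
        simp [hta]
      · rw [indicator_of_notMem (by exact hta)]
        simp [hta]
    rw [setLIntegral_congr_fun measurableSet_Ioi h1, setLIntegral_indicator measurableSet_Iio,
      ← ofReal_integral_eq_lintegral_ofReal]
    · congr 1
      have : Iio a ∩ Ioi 0 = Ioo 0 a := by rw [inter_comm]; rfl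
      rw [this, ← integral_Ioc_eq_integral_Ioo, ← intervalIntegral.integral_of_le ha]
      have := intervalIntegral.integral_comp_neg (a := 0) (b := a) (fun x => Real.exp x)
      rw [this]
      simp
    · have : Iio a ∩ Ioi 0 = Ioo 0 a := by rw [inter_comm]; rfl
      rw [this]
      exact (Continuous.integrableOn_Icc (by fun_prop)).mono_set Ioo_subset_Icc_self
    · exact ae_of_all _ fun t => (Real.exp_pos _).le
  · filter_upwards [exp_pos_ae h] with ω hω
    exact le_min ha hω.le
  · exact (measurable_const.min h.1).aemeasurable

end expo

lemma core_le {Ω : Type*} {H m0 : MeasurableSpace Ω} {μ : Measure Ω} [IsProbabilityMeasure μ]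
    {e : Ω → ℝ} (hH : H ≤ m0) (h : IsExpOne μ e)
    (hi : Indep H (MeasurableSpace.comap e inferInstance) μ) {A : Ω → ℝ} (hA : Measurable[H] A)
    (hA0 : ∀ ω, 0 ≤ A ω) {B : Set Ω} (hB : MeasurableSet[H] B) :
    μ (B ∩ {ω | e ω ≤ A ω}) = ∫⁻ ω in B, ENNReal.ofReal (min (A ω) (e ω)) ∂μ ∧
    μ (B ∩ {ω | e ω < A ω}) = ∫⁻ ω in B, ENNReal.ofReal (min (A ω) (e ω)) ∂μ := by
  have hA' : Measurable A := hA.mono hH le_rfl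
  have hB' : MeasurableSet B := hH _ hB
  have hB1 : Measurable[H.prod inferInstance] (fun p : Ω × ℝ => indicator B (1 : Ω → ℝ≥0∞) p.1) := by
    let _ := H
    exact (measurable_one.indicator hB).comp measurable_fst
  have hfst : Measurable[H.prod inferInstance] (fun p : Ω × ℝ => A p.1) := by
    let _ := H
    exact hA.comp measurable_fst
  have hsnd : Measurable[H.prod inferInstance] (fun p : Ω × ℝ => p.2) := by
    let _ := H
    exact measurable_snd
  have key1 : μ (B ∩ {ω | e ω ≤ A ω}) =
      ∫⁻ ω, indicator B 1 ω * ENNReal.ofReal (1 - Real.exp (-A ω)) ∂μ := by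
    have h1 : μ (B ∩ {ω | e ω ≤ A ω}) = ∫⁻ ω, (fun p : Ω × ℝ => indicator B 1 p.1 *
        indicator {p : Ω × ℝ | p.2 ≤ A p.1} 1 p) (ω, e ω) ∂μ := by
      rw [← lintegral_indicator_one (hB'.inter (measurableSet_le h.1 hA'))]
      refine lintegral_congr fun ω => ?_
      by_cases h1 : ω ∈ B <;> simp [indicator, h1]
    rw [h1, indep_lintegral' hH h.1 hi (f := (fun p : Ω × ℝ => indicator B 1 p.1 * indicator {p : Ω × ℝ | p.2 ≤ A p.1} 1 p))]
    · refine lintegral_congr fun ω => ?_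
      simp only
      rw [lintegral_const_mul]
      · rw [← exp_le h (hA0 ω), ← lintegral_indicator_one (measurableSet_le h.1 measurable_const)]
        rfl
      · exact measurable_one.indicator (measurableSet_le h.1 (measurable_const (a := A ω)))
    · let _ : MeasurableSpace Ω := H
      exact hB1.mul (measurable_one.indicator (measurableSet_le hsnd hfst))
  have key2 : μ (B ∩ {ω | e ω < A ω}) =
      ∫⁻ ω, indicator B 1 ω * ENNReal.ofReal (1 - Real.exp (-A ω)) ∂μ := by
    have h1 : μ (B ∩ {ω | e ω < A ω}) = ∫⁻ ω, (fun p : Ω × ℝ => indicator B 1 p.1 *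
        indicator {p : Ω × ℝ | p.2 < A p.1} 1 p) (ω, e ω) ∂μ := by
      rw [← lintegral_indicator_one (hB'.inter (measurableSet_lt h.1 hA'))]
      refine lintegral_congr fun ω => ?_
      by_cases h1 : ω ∈ B <;> simp [indicator, h1]
    rw [h1, indep_lintegral' hH h.1 hi (f := (fun p : Ω × ℝ => indicator B 1 p.1 * indicator {p : Ω × ℝ | p.2 < A p.1} 1 p))]
    · refine lintegral_congr fun ω => ?_
      simp only
      rw [lintegral_const_mul]
      · rw [← exp_lt h (hA0 ω), ← lintegral_indicator_one (measurableSet_lt h.1 measurable_const)]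
        rfl
      · exact measurable_one.indicator (measurableSet_lt h.1 (measurable_const (a := A ω)))
    · let _ : MeasurableSpace Ω := H
      exact hB1.mul (measurable_one.indicator (measurableSet_lt hsnd hfst))
  have key3 : ∫⁻ ω in B, ENNReal.ofReal (min (A ω) (e ω)) ∂μ =
      ∫⁻ ω, indicator B 1 ω * ENNReal.ofReal (1 - Real.exp (-A ω)) ∂μ := by
    have h1 : ∫⁻ ω in B, ENNReal.ofReal (min (A ω) (e ω)) ∂μ =
        ∫⁻ ω, (fun p : Ω × ℝ => indicator B 1 p.1 * ENNReal.ofReal (min (A p.1) p.2)) (ω, e ω) ∂μ := by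
      rw [← lintegral_indicator hB']
      refine lintegral_congr fun ω => ?_
      simp [indicator]
    rw [h1, indep_lintegral' hH h.1 hi (f := (fun p : Ω × ℝ => indicator B 1 p.1 * ENNReal.ofReal (min (A p.1) p.2)))]
    · refine lintegral_congr fun ω => ?_
      simp only
      rw [lintegral_const_mul]
      · rw [← exp_min h (hA0 ω)]
      · exact (measurable_const.min h.1).ennreal_ofReal
    · let _ : MeasurableSpace Ω := H
      exact hB1.mul (hfst.min hsnd).ennreal_ofReal
  exact ⟨key1.trans key3.symm, key2.trans key3.symm⟩

/-- Random jump times. -/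
def tau {Ω : Type*} (c : ℕ → Ω → ℝ → ℝ) (e : ℕ → Ω → ℝ) (k : ℕ) (ω : Ω) : ℝ :=
  jt (fun k => c k ω) (fun k => e k ω) k

/-- Random integrated rates. -/
def LamR {Ω : Type*} (c : ℕ → Ω → ℝ → ℝ) (e : ℕ → Ω → ℝ) (k : ℕ) (t : ℝ) (ω : Ω) : ℝ :=
  Lam (fun k => c k ω) (fun k => e k ω) k t

/-- The standing stochastic setup. -/
structure Setup {Ω : Type*} {m0 : MeasurableSpace Ω} (μ : Measure Ω) (lo up : ℝ)
    (H : ℕ → MeasurableSpace Ω) (c : ℕ → Ω → ℝ → ℝ) (e : ℕ → Ω → ℝ) : Prop where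
  Hle : ∀ k, H k ≤ m0
  Hmono : Monotone H
  rate : ∀ k ω, Rate lo up (c k ω)
  epos : ∀ k ω, 0 < e k ω
  cmeas : ∀ k, Measurable[(H k).prod inferInstance] (fun p : Ω × ℝ => c k p.1 p.2)
  emeas : ∀ k, Measurable[H (k + 1)] (e k)
  indep : ∀ k, Indep (H k) (MeasurableSpace.comap (e k) inferInstance) μ
  eexp : ∀ k, IsExpOne μ (e k)

namespace Setup
variable {Ω : Type*} {m0 : MeasurableSpace Ω} {μ : Measure Ω} [IsProbabilityMeasure μ] {lo up : ℝ}
    {H : ℕ → MeasurableSpace Ω} {c : ℕ → Ω → ℝ → ℝ} {e : ℕ → Ω → ℝ}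

lemma LamR_meas_of (S : Setup μ lo up H c e) {k : ℕ} (h : Measurable[H k] (tau c e k)) (t : ℝ) :
    Measurable[H k] (LamR c e k t) :=
  @meas_int Ω (H k) (c k) (tau c e k) (S.cmeas k) h t

lemma tau_meas (S : Setup μ lo up H c e) (k : ℕ) : Measurable[H k] (tau c e k) := by
  induction k with
  | zero => exact @measurable_const _ _ _ (H 0) 0
  | succ k ih =>
    refine @meas_jt_succ Ω (H (k + 1)) lo up c e S.rate S.epos k ?_ (S.emeas k)
    intro t
    exact (S.LamR_meas_of ih t).mono (S.Hmono k.le_succ) le_rfl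

lemma LamR_meas (S : Setup μ lo up H c e) (k : ℕ) (t : ℝ) :
    Measurable[H k] (LamR c e k t) := S.LamR_meas_of (S.tau_meas k) t

lemma core_le (S : Setup μ lo up H c e) (k : ℕ) (t : ℝ) {B : Set Ω} (hB : MeasurableSet[H k] B) :
    μ (B ∩ {ω | tau c e (k + 1) ω ≤ t}) =
      ∫⁻ ω in B, ENNReal.ofReal (min (LamR c e k t ω) (e k ω)) ∂μ := by
  rw [← (InvMarkovJump.core_le (S.Hle k) (S.eexp k) (S.indep k) (S.LamR_meas k t)
    (fun ω => Lam_nonneg (fun k => S.rate k ω) _ _) hB).1]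
  congr 2
  ext ω
  exact jt_succ_le_iff (fun k => S.rate k ω) (fun k => S.epos k ω) k t

lemma core_lt (S : Setup μ lo up H c e) (k : ℕ) (t : ℝ) {B : Set Ω} (hB : MeasurableSet[H k] B) :
    μ (B ∩ {ω | tau c e (k + 1) ω < t}) =
      ∫⁻ ω in B, ENNReal.ofReal (min (LamR c e k t ω) (e k ω)) ∂μ := by
  rw [← (InvMarkovJump.core_le (S.Hle k) (S.eexp k) (S.indep k) (S.LamR_meas k t)
    (fun ω => Lam_nonneg (fun k => S.rate k ω) _ _) hB).2]
  congr 2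
  ext ω
  exact jt_succ_lt_iff (fun k => S.rate k ω) (fun k => S.epos k ω) k t

lemma min_nonneg (S : Setup μ lo up H c e) (k : ℕ) (t : ℝ) (ω : Ω) :
    0 ≤ min (LamR c e k t ω) (e k ω) :=
  le_min (Lam_nonneg (fun k => S.rate k ω) _ _) (S.epos k ω).le

lemma tsum_le (S : Setup μ lo up H c e) {t : ℝ} (ht : 0 ≤ t) :
    ∑' k, μ {ω | tau c e (k + 1) ω ≤ t} ≤ ENNReal.ofReal (up * t) := by
  have h1 : ∀ k, μ {ω | tau c e (k + 1) ω ≤ t} =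
      ∫⁻ ω, ENNReal.ofReal (min (LamR c e k t ω) (e k ω)) ∂μ := by
    intro k
    have := S.core_le k t (B := univ) MeasurableSet.univ
    simpa using this
  simp_rw [h1]
  rw [← lintegral_tsum]
  · calc _ ≤ ∫⁻ _, ENNReal.ofReal (up * t) ∂μ := by
          refine lintegral_mono fun ω => ?_
          refine ENNReal.tsum_le_of_sum_range_le fun n => ?_
          rw [← ENNReal.ofReal_sum_of_nonneg fun k _ => S.min_nonneg k t ω]
          exact ENNReal.ofReal_le_ofReal
            (sum_min_le (fun k => S.rate k ω) (fun k => S.epos k ω) n ht)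
      _ = _ := by simp
  · intro k
    exact (((S.LamR_meas k t).mono (S.Hle k) le_rfl).min (S.eexp k).1).ennreal_ofReal.aemeasurable

lemma strictMono (S : Setup μ lo up H c e) (ω : Ω) : StrictMono fun k => tau c e k ω :=
  jt_strictMono (fun k => S.rate k ω) (fun k => S.epos k ω)

lemma ae_tendsto (S : Setup μ lo up H c e) :
    ∀ᵐ ω ∂μ, Tendsto (fun k => tau c e k ω) atTop atTop := by
  have h1 : ∀ n : ℕ, ∀ᵐ ω ∂μ, ∀ᶠ k in atTop, ω ∉ {ω | tau c e (k + 1) ω ≤ n} := fun n =>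
    ae_eventually_notMem (ne_top_of_le_ne_top ENNReal.ofReal_ne_top (S.tsum_le n.cast_nonneg))
  filter_upwards [ae_all_iff.2 h1] with ω hω
  refine tendsto_atTop_atTop_of_monotone (S.strictMono ω).monotone fun b => ?_
  obtain ⟨n, hn⟩ := exists_nat_ge b
  obtain ⟨k, hk⟩ := (hω n).exists
  refine ⟨k + 1, hn.trans ?_⟩
  exact (not_le.1 hk).le

end Setup

/-! ### The enlarged filtration and the martingale property -/

/-- Events that agree with an `H k`-event before the `(k+1)`-th jump. -/
@[reducible] def Gpre {Ω : Type*} (m0 : MeasurableSpace Ω) (H : ℕ → MeasurableSpace Ω) (τ : ℕ → Ω → ℝ) (t : ℝ) :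
    MeasurableSpace Ω where
  MeasurableSet' A := MeasurableSet[m0] A ∧
    ∀ k, ∃ B, MeasurableSet[H k] B ∧ ∀ ω, t < τ (k + 1) ω → (ω ∈ A ↔ ω ∈ B)
  measurableSet_empty := ⟨@MeasurableSet.empty _ m0, fun k => ⟨∅, @MeasurableSet.empty _ (H k), by simp⟩⟩
  measurableSet_compl := by
    rintro A ⟨hA, h⟩
    refine ⟨hA.compl, fun k => ?_⟩
    obtain ⟨B, hB, hAB⟩ := h k
    exact ⟨Bᶜ, hB.compl, fun ω hω => not_congr (hAB ω hω)⟩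
  measurableSet_iUnion := by
    intro f hf
    refine ⟨MeasurableSet.iUnion fun n => (hf n).1, fun k => ?_⟩
    choose B hB hAB using fun n => (hf n).2 k
    refine ⟨⋃ n, B n, MeasurableSet.iUnion hB, fun ω hω => ?_⟩
    simp only [mem_iUnion]
    exact exists_congr fun n => hAB n ω hω

/-- The enlarged filtration. -/
@[reducible] def GF {Ω : Type*} (m0 : MeasurableSpace Ω) (H : ℕ → MeasurableSpace Ω) (τ : ℕ → Ω → ℝ) (t : ℝ) :
    MeasurableSpace Ω := if t < 0 then m0 else Gpre m0 H τ t

lemma GF_neg {Ω : Type*} (m0 : MeasurableSpace Ω) (H : ℕ → MeasurableSpace Ω) (τ : ℕ → Ω → ℝ) {t : ℝ}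
    (ht : t < 0) : GF m0 H τ t = m0 := by simp [GF, ht]

lemma GF_nonneg {Ω : Type*} (m0 : MeasurableSpace Ω) (H : ℕ → MeasurableSpace Ω) (τ : ℕ → Ω → ℝ) {t : ℝ}
    (ht : 0 ≤ t) : GF m0 H τ t = Gpre m0 H τ t := by simp [GF, not_lt.2 ht]

lemma GF_le {Ω : Type*} (m0 : MeasurableSpace Ω) (H : ℕ → MeasurableSpace Ω) (τ : ℕ → Ω → ℝ) (t : ℝ) :
    GF m0 H τ t ≤ m0 := by
  rcases lt_or_ge t 0 with ht | ht
  · rw [GF_neg _ _ _ ht]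
  · rw [GF_nonneg _ _ _ ht]
    exact fun A hA => hA.1

lemma Gpre_mono {Ω : Type*} (m0 : MeasurableSpace Ω) (H : ℕ → MeasurableSpace Ω) (τ : ℕ → Ω → ℝ) {s t : ℝ}
    (hst : s ≤ t) : Gpre m0 H τ s ≤ Gpre m0 H τ t := by
  rintro A ⟨hA, h⟩
  refine ⟨hA, fun k => ?_⟩
  obtain ⟨B, hB, hAB⟩ := h k
  exact ⟨B, hB, fun ω hω => hAB ω (hst.trans_lt hω)⟩

lemma GF_usual {Ω : Type*} {m0 : MeasurableSpace Ω} {μ : Measure Ω} {H : ℕ → MeasurableSpace Ω}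
    {τ : ℕ → Ω → ℝ} (hH : ∀ k, H k ≤ m0)
    (hnull : ∀ k, ∀ s : Set Ω, μ s = 0 → MeasurableSet[H k] s) :
    UsualConditions μ (GF m0 H τ) := by
  refine ⟨⟨?_, GF_le _ _ _⟩, ?_, ?_⟩
  · intro s t hs hst
    rw [GF_nonneg _ _ _ hs, GF_nonneg _ _ _ (hs.trans hst)]
    exact Gpre_mono _ _ _ hst
  · intro t ht
    apply le_antisymm
    · refine le_iInf₂ fun s hs => ?_
      have hs : t < s := hs
      rw [GF_nonneg _ _ _ ht, GF_nonneg _ _ _ (ht.trans hs.le)]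
      exact Gpre_mono _ _ _ hs.le
    · intro A hA
      have hA' : ∀ s, t < s → MeasurableSet[Gpre m0 H τ s] A := by
        intro s hs
        have := iInf₂_le (f := fun s (_ : s ∈ Ioi t) => GF m0 H τ s) s hs A hA
        rwa [GF_nonneg _ _ _ (ht.trans hs.le)] at this
      rw [GF_nonneg _ _ _ ht]
      refine ⟨(hA' (t + 1) (by linarith)).1, fun k => ?_⟩
      have hpos : ∀ n : ℕ, t < t + 1 / ((n : ℝ) + 1) := fun n => by
        have : 0 < 1 / ((n : ℝ) + 1) := by positivity
        linarith
      choose B hB hAB using fun n : ℕ => (hA' _ (hpos n)).2 k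
      refine ⟨⋃ n, ⋂ m, B (n + m), MeasurableSet.iUnion fun n => MeasurableSet.iInter fun m => hB _, ?_⟩
      intro ω hω
      have hlim : Tendsto (fun n : ℕ => t + 1 / ((n : ℝ) + 1)) atTop (𝓝 (t + 0)) :=
        tendsto_const_nhds.add tendsto_one_div_add_atTop_nhds_zero_nat
      rw [add_zero] at hlim
      obtain ⟨N, hN⟩ := eventually_atTop.1 (hlim.eventually_lt_const hω)
      simp only [mem_iUnion, mem_iInter]
      constructor
      · intro h
        exact ⟨N, fun m => (hAB _ ω (hN _ (by omega))).1 h⟩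
      · rintro ⟨n, hn⟩
        have := hn N
        exact (hAB _ ω (hN _ (by omega))).2 this
  · intro s hs
    rw [GF_nonneg _ _ _ le_rfl]
    exact ⟨hH 0 _ (hnull 0 s hs), fun k => ⟨s, hnull k s hs, fun _ _ => Iff.rfl⟩⟩

lemma GF_meas {Ω : Type*} {m0 : MeasurableSpace Ω} {μ : Measure Ω} {H : ℕ → MeasurableSpace Ω}
    {τ : ℕ → Ω → ℝ} (hH : ∀ k, H k ≤ m0) (hτ : ∀ k, Measurable (τ k))
    (hnull : ∀ s : Set Ω, μ s = 0 → MeasurableSet s)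
    {t : ℝ} (ht : 0 ≤ t)
    (hex : ∀ᵐ ω ∂μ, ∃ k, t < τ (k + 1) ω) {Y : Ω → ℝ} {Z : ℕ → Ω → ℝ}
    (hZ : ∀ k, Measurable[H k] (Z k)) (hYZ : ∀ k ω, t < τ (k + 1) ω → Y ω = Z k ω) :
    Measurable[GF m0 H τ t] Y := by
  rw [GF_nonneg _ _ _ ht]
  intro A hA
  refine ⟨?_, fun k => ⟨Z k ⁻¹' A, hZ k hA, fun ω hω => by simp [hYZ k ω hω]⟩⟩
  have h1 : Y ⁻¹' A = (⋃ k, (Z k ⁻¹' A) ∩ {ω | t < τ (k + 1) ω}) ∪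
      ((Y ⁻¹' A) ∩ {ω | ¬ ∃ k, t < τ (k + 1) ω}) := by
    ext ω
    simp only [mem_preimage, mem_union, mem_iUnion, mem_inter_iff, mem_ofPred_eq]
    constructor
    · intro h
      by_cases hk : ∃ k, t < τ (k + 1) ω
      · left
        obtain ⟨k, hk⟩ := hk
        exact ⟨k, by rwa [← hYZ k ω hk], hk⟩
      · exact Or.inr ⟨h, hk⟩
    · rintro (⟨k, h, hk⟩ | h)
      · rwa [hYZ k ω hk]
      · exact h.1
  rw [h1]
  refine MeasurableSet.union (MeasurableSet.iUnion fun k => ?_) (hnull _ ?_)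
  · exact (hH k _ (hZ k hA)).inter (measurableSet_lt measurable_const (hτ _))
  · exact measure_mono_null inter_subset_right (ae_iff.1 hex)

/-- Setup including the jump sizes. -/
structure JSetup {Ω : Type*} {m0 : MeasurableSpace Ω} (μ : Measure Ω) (lo up : ℝ) (ν : Measure ℝ)
    (H : ℕ → MeasurableSpace Ω) (c : ℕ → Ω → ℝ → ℝ) (e : ℕ → Ω → ℝ) (J : ℕ → Ω → ℝ) : Prop
    extends Setup μ lo up H c e where
  Jmeas : ∀ k, Measurable[H (k + 1)] (J k)
  Jlaw : ∀ k, μ.map (J k) = ν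
  Jindep : ∀ k, Indep (MeasurableSpace.comap (J k) inferInstance)
    (H k ⊔ MeasurableSpace.comap (e k) inferInstance) μ
  Hnull : ∀ s : Set Ω, μ s = 0 → MeasurableSet[H 0] s

namespace JSetup
variable {Ω : Type*} {m0 : MeasurableSpace Ω} {μ : Measure Ω} [IsProbabilityMeasure μ] {lo up : ℝ}
    {ν : Measure ℝ}
    {H : ℕ → MeasurableSpace Ω} {c : ℕ → Ω → ℝ → ℝ} {e : ℕ → Ω → ℝ} {J : ℕ → Ω → ℝ}

lemma null_meas (S : JSetup μ lo up ν H c e J) (k : ℕ) (s : Set Ω) (hs : μ s = 0) :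
    MeasurableSet[H k] s := S.Hmono (Nat.zero_le k) _ (S.Hnull s hs)

lemma Jm (S : JSetup μ lo up ν H c e J) (k : ℕ) : Measurable (J k) :=
  (S.Jmeas k).mono (S.Hle _) le_rfl

lemma taum (S : JSetup μ lo up ν H c e J) (k : ℕ) : Measurable (tau c e k) :=
  (S.tau_meas k).mono (S.Hle _) le_rfl

lemma usual (S : JSetup μ lo up ν H c e J) : UsualConditions μ (GF m0 H (tau c e)) :=
  GF_usual S.Hle S.null_meas

lemma G_meas (S : JSetup μ lo up ν H c e J) {t : ℝ} (ht : 0 ≤ t) {Y : Ω → ℝ} {Z : ℕ → Ω → ℝ}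
    (hZ : ∀ k, Measurable[H k] (Z k)) (hYZ : ∀ k ω, t < tau c e (k + 1) ω → Y ω = Z k ω) :
    Measurable[GF m0 H (tau c e) t] Y := by
  refine GF_meas S.Hle S.taum (fun s hs => S.Hle 0 _ (S.Hnull s hs)) ht ?_ hZ hYZ
  filter_upwards [S.ae_tendsto] with ω hω
  obtain ⟨k, hk⟩ := ((hω.comp (tendsto_add_atTop_nat 1)).eventually_gt_atTop t).exists
  exact ⟨k, hk⟩

lemma stop_meas (S : JSetup μ lo up ν H c e J) (k : ℕ) (t : ℝ) :
    MeasurableSet[GF m0 H (tau c e) t] {ω | tau c e k ω ≤ t} := by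
  rcases lt_or_ge t 0 with ht | ht
  · rw [GF_neg _ _ _ ht]
    exact measurableSet_le (S.taum k) measurable_const
  rw [GF_nonneg _ _ _ ht]
  refine ⟨measurableSet_le (S.taum k) measurable_const, fun j => ?_⟩
  rcases le_or_gt k j with hkj | hkj
  · refine ⟨{ω | tau c e k ω ≤ t}, ?_, fun _ _ => Iff.rfl⟩
    exact S.Hmono hkj _ (S.tau_meas k measurableSet_Iic)
  · refine ⟨∅, @MeasurableSet.empty _ (H j), fun ω hω => ?_⟩
    have : tau c e (j + 1) ω ≤ tau c e k ω := (S.strictMono ω).monotone hkj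
    simp only [mem_ofPred_eq, mem_empty_iff_false, iff_false, not_le]
    exact hω.trans_le this

lemma setInt_J (S : JSetup μ lo up ν H c e J) (k : ℕ) {φ : ℝ → ℝ} (hφ : Measurable φ)
    (hi : Integrable (fun ω => φ (J k ω)) μ) {D : Set Ω}
    (hD : MeasurableSet[H k ⊔ MeasurableSpace.comap (e k) inferInstance] D) :
    ∫ ω in D, φ (J k ω) ∂μ = μ.real D * ∫ x, φ x ∂ν := by
  have hle : H k ⊔ MeasurableSpace.comap (e k) inferInstance ≤ m0 :=
    sup_le (S.Hle k) (S.eexp k).1.comap_le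
  have h1 : StronglyMeasurable[MeasurableSpace.comap (J k) inferInstance] (fun ω => φ (J k ω)) :=
    (hφ.comp (comap_measurable (J k))).stronglyMeasurable
  have h2 := condExp_indep_eq (S.Jm k).comap_le hle h1 (S.Jindep k)
  rw [← setIntegral_condExp hle hi hD, setIntegral_congr_ae (g := fun _ => ∫ ω, φ (J k ω) ∂μ) (hle _ hD)
    (by filter_upwards [h2] with ω hω _ using hω), setIntegral_const, ← S.Jlaw k,
    integral_map (S.Jm k).aemeasurable hφ.aestronglyMeasurable, smul_eq_mul]

lemma setLInt_J (S : JSetup μ lo up ν H c e J) (k : ℕ) {φ : ℝ → ℝ≥0∞} (hφ : Measurable φ) {D : Set Ω}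
    (hD : MeasurableSet[H k ⊔ MeasurableSpace.comap (e k) inferInstance] D) :
    ∫⁻ ω in D, φ (J k ω) ∂μ = μ D * ∫⁻ x, φ x ∂ν := by
  have hle : H k ⊔ MeasurableSpace.comap (e k) inferInstance ≤ m0 :=
    sup_le (S.Hle k) (S.eexp k).1.comap_le
  have h1 : ∫⁻ ω in D, φ (J k ω) ∂μ =
      ∫⁻ ω, (fun p : Ω × ℝ => indicator D 1 p.1 * φ p.2) (ω, J k ω) ∂μ := by
    rw [← lintegral_indicator (hle _ hD)]
    refine lintegral_congr fun ω => ?_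
    by_cases h : ω ∈ D <;> simp [h]
  rw [h1, indep_lintegral' hle (S.Jm k) (S.Jindep k).symm
    (f := fun p : Ω × ℝ => indicator D 1 p.1 * φ p.2)]
  · simp only
    have h3 : ∫⁻ x, φ x ∂ν = ∫⁻ ω, φ (J k ω) ∂μ := by
      rw [← S.Jlaw k, lintegral_map hφ (S.Jm k)]
    have h4 : ∀ ω, ∫⁻ ω', indicator D (1 : Ω → ℝ≥0∞) ω * φ (J k ω') ∂μ =
        indicator D (1 : Ω → ℝ≥0∞) ω * ∫⁻ ω', φ (J k ω') ∂μ :=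
      fun ω => lintegral_const_mul _ (hφ.comp (S.Jm k))
    simp_rw [h4]
    rw [lintegral_mul_const _ (measurable_one.indicator (hle _ hD)), lintegral_indicator_one (hle _ hD), h3]
  · let _ : MeasurableSpace Ω := H k ⊔ MeasurableSpace.comap (e k) inferInstance
    exact ((measurable_one.indicator hD).comp measurable_fst).mul (hφ.comp measurable_snd)

lemma tau_succ_meas (S : JSetup μ lo up ν H c e J) (k : ℕ) :
    Measurable[H k ⊔ MeasurableSpace.comap (e k) inferInstance] (tau c e (k + 1)) := by
  let _ : MeasurableSpace Ω := H k ⊔ MeasurableSpace.comap (e k) inferInstance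
  refine meas_jt_succ S.rate S.epos (fun t => ?_) ?_
  · exact (S.LamR_meas k t).mono le_sup_left le_rfl
  · exact (comap_measurable (e k)).mono le_sup_right le_rfl

/-- The `k`-th piece of the compensated process. -/
def Mk (c : ℕ → Ω → ℝ → ℝ) (e J : ℕ → Ω → ℝ) (h : ℝ → ℝ) (m : ℝ) (k : ℕ) (t : ℝ) (ω : Ω) : ℝ :=
  (if tau c e (k + 1) ω ≤ t then h (J k ω) else 0) - m * min (LamR c e k t ω) (e k ω)

lemma lint_N (S : JSetup μ lo up ν H c e J) {h : ℝ → ℝ} (hh : Measurable h) (k : ℕ) (t : ℝ) :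
    ∫⁻ ω, ‖if tau c e (k + 1) ω ≤ t then h (J k ω) else 0‖ₑ ∂μ =
      μ {ω | tau c e (k + 1) ω ≤ t} * ∫⁻ x, ‖h x‖ₑ ∂ν := by
  have h0 := S.setLInt_J k (D := {ω | tau c e (k + 1) ω ≤ t}) (φ := fun x => ‖h x‖ₑ) (by fun_prop)
    (S.tau_succ_meas k measurableSet_Iic)
  rw [← h0]
  have := lintegral_indicator (μ := μ) (S.taum (k + 1) (measurableSet_Iic (a := t)))
    (fun ω => ‖h (J k ω)‖ₑ)
  refine Eq.trans ?_ this
  refine lintegral_congr fun ω => ?_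
  by_cases hω : tau c e (k + 1) ω ≤ t <;> simp [indicator, hω]

lemma lint_C (S : JSetup μ lo up ν H c e J) (k : ℕ) (t : ℝ) :
    ∫⁻ ω, ‖min (LamR c e k t ω) (e k ω)‖ₑ ∂μ = μ {ω | tau c e (k + 1) ω ≤ t} := by
  have := S.core_le k t (B := univ) MeasurableSet.univ
  simp only [univ_inter, Measure.restrict_univ] at this
  rw [this]
  refine lintegral_congr fun ω => ?_
  exact Real.enorm_of_nonneg (S.min_nonneg k t ω)

lemma C_meas (S : JSetup μ lo up ν H c e J) (k : ℕ) (t : ℝ) :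
    Measurable (fun ω => min (LamR c e k t ω) (e k ω)) :=
  ((S.LamR_meas k t).mono (S.Hle k) le_rfl).min (S.eexp k).1

lemma N_meas (S : JSetup μ lo up ν H c e J) {h : ℝ → ℝ} (hh : Measurable h) (k : ℕ) (t : ℝ) :
    Measurable[H (k + 1)] (fun ω => if tau c e (k + 1) ω ≤ t then h (J k ω) else 0) :=
  Measurable.ite (S.tau_meas (k + 1) measurableSet_Iic) (hh.comp (S.Jmeas k))
    (@measurable_const _ _ _ (H (k + 1)) _)

lemma C_int (S : JSetup μ lo up ν H c e J) (k : ℕ) (t : ℝ) :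
    Integrable (fun ω => min (LamR c e k t ω) (e k ω)) μ :=
  ⟨(S.C_meas k t).aestronglyMeasurable, by
    rw [HasFiniteIntegral, S.lint_C]; exact measure_lt_top _ _⟩

lemma hν (S : JSetup μ lo up ν H c e J) {h : ℝ → ℝ} (hh : Measurable h)
    (hi : Integrable (fun ω => h (J 0 ω)) μ) : Integrable h ν := by
  rw [← S.Jlaw 0, integrable_map_measure hh.aestronglyMeasurable (S.Jm 0).aemeasurable]
  exact hi

lemma N_int (S : JSetup μ lo up ν H c e J) {h : ℝ → ℝ} (hh : Measurable h) (hi : Integrable h ν)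
    (k : ℕ) (t : ℝ) :
    Integrable (fun ω => if tau c e (k + 1) ω ≤ t then h (J k ω) else 0) μ :=
  ⟨((S.N_meas hh k t).mono (S.Hle _) le_rfl).aestronglyMeasurable, by
    rw [HasFiniteIntegral, S.lint_N hh]; exact ENNReal.mul_lt_top (measure_lt_top _ _) hi.2⟩

lemma Mk_int (S : JSetup μ lo up ν H c e J) {h : ℝ → ℝ} (hh : Measurable h) (hi : Integrable h ν)
    (m : ℝ) (k : ℕ) (t : ℝ) : Integrable (Mk c e J h m k t) μ :=
  (S.N_int hh hi k t).sub ((S.C_int k t).const_mul m)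

lemma Mk_sum (S : JSetup μ lo up ν H c e J) {h : ℝ → ℝ} (hh : Measurable h) (hi : Integrable h ν)
    (m : ℝ) {t : ℝ} (ht : 0 ≤ t) : ∑' k, ∫⁻ ω, ‖Mk c e J h m k t ω‖ₑ ∂μ ≠ ∞ := by
  have h1 : ∀ k, ∫⁻ ω, ‖Mk c e J h m k t ω‖ₑ ∂μ ≤
      μ {ω | tau c e (k + 1) ω ≤ t} * (∫⁻ x, ‖h x‖ₑ ∂ν + ‖m‖ₑ) := by
    intro k
    calc _ ≤ ∫⁻ ω, ‖if tau c e (k + 1) ω ≤ t then h (J k ω) else 0‖ₑ +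
            ‖m‖ₑ * ‖min (LamR c e k t ω) (e k ω)‖ₑ ∂μ := by
          refine lintegral_mono fun ω => ?_
          refine (enorm_sub_le).trans ?_
          rw [enorm_mul]
      _ = _ := by
          rw [lintegral_add_right _ ((S.C_meas k t).enorm.const_mul _),
            lintegral_const_mul _ (S.C_meas k t).enorm, S.lint_C, S.lint_N hh, mul_add, mul_comm ‖m‖ₑ]
  refine ne_top_of_le_ne_top ?_ (ENNReal.tsum_le_tsum h1)
  rw [ENNReal.tsum_mul_right]
  refine ENNReal.mul_ne_top (ne_top_of_le_ne_top ENNReal.ofReal_ne_top (S.tsum_le ht)) ?_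
  exact ENNReal.add_ne_top.2 ⟨hi.2.ne, enorm_ne_top⟩

lemma Mk_mart (S : JSetup μ lo up ν H c e J) {h : ℝ → ℝ} (hh : Measurable h) (hi : Integrable h ν)
    (k : ℕ) {s t : ℝ} (hs : 0 ≤ s) (hst : s ≤ t) {A : Set Ω}
    (hA : MeasurableSet[GF m0 H (tau c e) s] A) :
    ∫ ω in A, Mk c e J h (∫ x, h x ∂ν) k t ω ∂μ = ∫ ω in A, Mk c e J h (∫ x, h x ∂ν) k s ω ∂μ := by
  rw [GF_nonneg _ _ _ hs] at hA
  obtain ⟨hA0, hA1⟩ := hA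
  obtain ⟨B, hB, hAB⟩ := hA1 k
  set m := ∫ x, h x ∂ν with hm
  have hB0 : MeasurableSet B := S.Hle k _ hB
  -- the set of a jump in `(s, t]`
  set D := {ω | tau c e (k + 1) ω ≤ t} \ {ω | tau c e (k + 1) ω ≤ s} with hD
  have hDm : MeasurableSet[H k ⊔ MeasurableSpace.comap (e k) inferInstance] D :=
    (S.tau_succ_meas k measurableSet_Iic).diff (S.tau_succ_meas k measurableSet_Iic)
  have hle : H k ⊔ MeasurableSpace.comap (e k) inferInstance ≤ m0 :=
    sup_le (S.Hle k) (S.eexp k).1.comap_le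
  have hBD : MeasurableSet[H k ⊔ MeasurableSpace.comap (e k) inferInstance] (B ∩ D) :=
    MeasurableSet.inter (le_sup_left (a := H k) _ hB) hDm
  have hJi : Integrable (fun ω => h (J k ω)) μ := by
    rw [← S.Jlaw k, integrable_map_measure hh.aestronglyMeasurable (S.Jm k).aemeasurable] at hi
    exact hi
  have hADB : A ∩ D = B ∩ D := by
    ext ω
    simp only [mem_inter_iff, and_congr_left_iff]
    intro hω
    exact hAB ω (not_le.1 hω.2)
  have hCt := S.C_int k t
  have hCs := S.C_int k s
  -- jump part
  have e1 : ∫ ω in A, (if tau c e (k + 1) ω ≤ t then h (J k ω) else 0) ∂μ -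
      ∫ ω in A, (if tau c e (k + 1) ω ≤ s then h (J k ω) else 0) ∂μ = μ.real (B ∩ D) * m := by
    rw [← integral_sub (S.N_int hh hi k t).integrableOn (S.N_int hh hi k s).integrableOn,
      ← S.setInt_J k hh hJi hBD, ← hADB, ← setIntegral_indicator (hle _ hDm)]
    refine integral_congr_ae (ae_of_all _ fun ω => ?_)
    by_cases h1 : tau c e (k + 1) ω ≤ s
    · have h2 := h1.trans hst
      simp [indicator, hD, h1, h2]
    · by_cases h2 : tau c e (k + 1) ω ≤ t <;> simp [indicator, hD, h1, h2]
  have cB : ∀ r, μ.real (B ∩ {ω | tau c e (k + 1) ω ≤ r}) =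
      ∫ ω in B, min (LamR c e k r ω) (e k ω) ∂μ := by
    intro r
    rw [Measure.real, S.core_le k r hB, integral_eq_lintegral_of_nonneg_ae
      (ae_of_all _ fun ω => S.min_nonneg k r ω) (S.C_meas k r).aestronglyMeasurable]
  have e2 : μ.real (B ∩ D) = ∫ ω in B, min (LamR c e k t ω) (e k ω) ∂μ -
      ∫ ω in B, min (LamR c e k s ω) (e k ω) ∂μ := by
    rw [← cB, ← cB, ← measureReal_sdiff]
    · congr 1
      ext ω
      simp only [hD, mem_inter_iff, Set.mem_sdiff, mem_ofPred_eq]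
      tauto
    · exact inter_subset_inter_right _ fun ω (hω : _ ≤ _) => le_trans hω hst
    · exact hB0.inter (S.taum (k + 1) measurableSet_Iic)
  have e3 : ∫ ω in B, min (LamR c e k t ω) (e k ω) ∂μ -
      ∫ ω in B, min (LamR c e k s ω) (e k ω) ∂μ =
      ∫ ω in A, min (LamR c e k t ω) (e k ω) ∂μ -
      ∫ ω in A, min (LamR c e k s ω) (e k ω) ∂μ := by
    rw [← integral_sub hCt.integrableOn hCs.integrableOn,
      ← integral_sub hCt.integrableOn hCs.integrableOn, ← integral_indicator hB0,
      ← integral_indicator hA0]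
    congr 1
    ext ω
    by_cases h1 : tau c e (k + 1) ω ≤ s
    · have h2 := h1.trans hst
      have h3 := (jt_succ_le_iff (fun k => S.rate k ω) (fun k => S.epos k ω) k s).1 h1
      have h4 := (jt_succ_le_iff (fun k => S.rate k ω) (fun k => S.epos k ω) k t).1 h2
      have h5 : min (LamR c e k t ω) (e k ω) - min (LamR c e k s ω) (e k ω) = 0 := by
        rw [LamR, LamR, min_eq_right h3, min_eq_right h4, sub_self]
      simp [indicator, h5]
    · have := hAB ω (not_le.1 h1)
      by_cases hb : ω ∈ B
      · have ha := this
        simp only [hb] at ha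
        simp [indicator, hb, show ω ∈ A by tauto]
      · simp [indicator, hb, show ω ∉ A by tauto]
  have : ∀ r, ∫ ω in A, Mk c e J h m k r ω ∂μ =
      ∫ ω in A, (if tau c e (k + 1) ω ≤ r then h (J k ω) else 0) ∂μ -
        m * ∫ ω in A, min (LamR c e k r ω) (e k ω) ∂μ := by
    intro r
    rw [← integral_const_mul, ← integral_sub (S.N_int hh hi k r).integrableOn
      ((S.C_int k r).const_mul m).integrableOn]
    rfl
  rw [this, this]
  have e4 := e2.trans e3
  rw [e4] at e1
  linarith

lemma M_meas (S : JSetup μ lo up ν H c e J) {h : ℝ → ℝ} (hh : Measurable h) (m : ℝ) {t : ℝ} (ht : 0 ≤ t) :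
    Measurable[GF m0 H (tau c e) t] (fun ω => ∑' k, Mk c e J h m k t ω) := by
  refine S.G_meas ht (Z := fun j ω => ∑ k ∈ Finset.range j, Mk c e J h m k t ω - m * LamR c e j t ω)
    (fun j => ?_) fun j ω hω => ?_
  · let _ : MeasurableSpace Ω := H j
    refine Measurable.sub (Finset.measurable_sum _ fun k hk => ?_) ((S.LamR_meas j t).const_mul m)
    have hk := Finset.mem_range.1 hk
    refine Measurable.sub ((S.N_meas hh k t).mono (S.Hmono hk) le_rfl) (Measurable.const_mul ?_ m)
    refine Measurable.min ((S.LamR_meas k t).mono (S.Hmono hk.le) le_rfl)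
      ((S.emeas k).mono (S.Hmono hk) le_rfl)
  · rw [tsum_eq_sum (s := Finset.range (j + 1)), Finset.sum_range_succ]
    · rw [sub_eq_add_neg]
      congr 1
      have h1 : LamR c e j t ω < e j ω := by
        have := (jt_succ_le_iff (fun k => S.rate k ω) (fun k => S.epos k ω) j t).not.1 (not_le.2 hω)
        exact not_le.1 this
      simp [Mk, not_le.2 hω, min_eq_left h1.le]
    · intro k hk
      have hk : j + 1 ≤ k := by simpa using hk
      have h1 : t < tau c e k ω := hω.trans_le ((S.strictMono ω).monotone hk)
      have h2 : t < tau c e (k + 1) ω := h1.trans (S.strictMono ω k.lt_succ_self)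
      have h3 : LamR c e k t ω = 0 := Lam_zero h1.le
      simp [Mk, not_le.2 h2, h3, (S.epos k ω).le]

theorem M_mart (S : JSetup μ lo up ν H c e J) {h : ℝ → ℝ} (hh : Measurable h) (hi : Integrable h ν) :
    IsMartingale μ (GF m0 H (tau c e)) (fun t ω => ∑' k, Mk c e J h (∫ x, h x ∂ν) k t ω) := by
  set m := ∫ x, h x ∂ν with hm
  have hintg : ∀ t : ℝ, 0 ≤ t → Integrable (fun ω => ∑' k, Mk c e J h m k t ω) μ := by
    intro t ht
    refine ⟨((S.M_meas hh m ht).mono (GF_le _ _ _ _) le_rfl).aestronglyMeasurable, ?_⟩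
    refine lt_of_le_of_lt ?_ (lt_top_iff_ne_top.2 (S.Mk_sum hh hi m ht))
    rw [← lintegral_tsum fun k => (S.Mk_int hh hi m k t).aestronglyMeasurable.enorm]
    exact lintegral_mono fun ω => enorm_tsum_le_tsum_enorm
  refine ⟨hintg, fun t ht => S.M_meas hh m ht, fun s t hs hst => ?_⟩
  refine (ae_eq_condExp_of_forall_setIntegral_eq (GF_le _ _ _ _) (hintg t (hs.trans hst))
    (fun A _ _ => (hintg s hs).integrableOn) (fun A hA _ => ?_)
    (S.M_meas hh m hs).aestronglyMeasurable).symm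
  have hsum : ∀ r, 0 ≤ r → ∫ ω in A, ∑' k, Mk c e J h m k r ω ∂μ = ∑' k, ∫ ω in A, Mk c e J h m k r ω ∂μ := by
    intro r hr
    refine integral_tsum (fun k => (S.Mk_int hh hi m k r).aestronglyMeasurable.restrict) ?_
    refine ne_top_of_le_ne_top (S.Mk_sum hh hi m hr) (ENNReal.tsum_le_tsum fun k => ?_)
    exact setLIntegral_le_lintegral _ _
  rw [hsum s hs, hsum t (hs.trans hst)]
  exact tsum_congr fun k => (S.Mk_mart hh hi k hs hst hA).symm

end JSetup

lemma IsMartingale.congr {Ω : Type*} {m0 : MeasurableSpace Ω} {μ : Measure Ω} [IsProbabilityMeasure μ]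
    {G : ℝ → MeasurableSpace Ω} (hG : UsualConditions μ G) {M M' : ℝ → Ω → ℝ}
    (hM : IsMartingale μ G M) (h : ∀ t, 0 ≤ t → M' t =ᵐ[μ] M t) : IsMartingale μ G M' := by
  refine ⟨fun t ht => (hM.1 t ht).congr (h t ht).symm, fun t ht => ?_, fun s t hs hst => ?_⟩
  · intro A hA
    have hn : ∀ s : Set Ω, μ s = 0 → MeasurableSet[G t] s := fun s hs =>
      hG.1.1 0 t le_rfl ht _ (hG.2.2 s hs)
    have h0 : μ {ω | M' t ω ≠ M t ω} = 0 := ae_iff.1 (h t ht)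
    have h1 : M' t ⁻¹' A = ((M t ⁻¹' A) \ {ω | M' t ω ≠ M t ω}) ∪
        ((M' t ⁻¹' A) ∩ {ω | M' t ω ≠ M t ω}) := by
      ext ω
      by_cases hω : M' t ω = M t ω <;> simp [hω]
    rw [h1]
    exact ((hM.2.1 t ht hA).diff (hn _ h0)).union (hn _ (measure_mono_null inter_subset_right h0))
  · exact (condExp_congr_ae (h t (hs.trans hst))).trans ((hM.2.2 s t hs hst).trans (h s hs).symm)

section weighted

/-- Exponentially weighted Lebesgue measure on `(0, ∞)`. -/
def wexp (C : ℝ) : Measure ℝ :=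
  (volume.restrict (Ioi (0:ℝ))).withDensity (fun t => ENNReal.ofReal (Real.exp (-C * t)))

lemma wexp_lintegral (C : ℝ) {φ : ℝ → ℝ≥0∞} (hφ : Measurable φ) :
    ∫⁻ t, φ t ∂(wexp C) = ∫⁻ t in Ioi 0, ENNReal.ofReal (Real.exp (-C * t)) * φ t := by
  unfold wexp
  rw [lintegral_withDensity_eq_lintegral_mul _ (by fun_prop) hφ]
  rfl

instance (C : ℝ) : SFinite (wexp C) := by
  unfold wexp; infer_instance

lemma exp_tail {C : ℝ} (hC : 0 < C) (s : ℝ) :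
    ∫⁻ t in Ioi s, ENNReal.ofReal (Real.exp (-C * t)) =
      ENNReal.ofReal (1 / C) * ENNReal.ofReal (Real.exp (-C * s)) := by
  rw [← ofReal_integral_eq_lintegral_ofReal (integrableOn_exp_mul_Ioi (by linarith) s)
    (ae_of_all _ fun _ => (Real.exp_pos _).le), integral_exp_mul_Ioi (by linarith) s,
    ← ENNReal.ofReal_mul (by positivity)]
  congr 1
  field_simp

lemma wexp_univ {C : ℝ} (hC : 0 < C) : wexp C univ < ∞ := by
  have := wexp_lintegral C (φ := fun _ => 1) measurable_const
  simp only [lintegral_const, one_mul, mul_one, exp_tail hC] at this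
  rw [this]
  exact ENNReal.mul_lt_top ENNReal.ofReal_lt_top ENNReal.ofReal_lt_top

lemma time_fubini {C : ℝ} (hC : 0 < C) {φ : ℝ → ℝ≥0∞} (hφ : Measurable φ) :
    ∫⁻ t, (∫⁻ s in Ioc 0 t, φ s) ∂(wexp C) = ENNReal.ofReal (1 / C) * ∫⁻ s, φ s ∂(wexp C) := by
  have hm : Measurable (fun p : ℝ × ℝ => indicator {p : ℝ × ℝ | 0 < p.2 ∧ p.2 ≤ p.1}
      (fun p => φ p.2) p) :=
    (hφ.comp measurable_snd).indicator
      ((measurableSet_lt measurable_const measurable_snd).inter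
        (measurableSet_le measurable_snd measurable_fst))
  have h1 : ∀ t, ∫⁻ s in Ioc 0 t, φ s = ∫⁻ s, indicator {p : ℝ × ℝ | 0 < p.2 ∧ p.2 ≤ p.1}
      (fun p => φ p.2) (t, s) := by
    intro t
    rw [← lintegral_indicator measurableSet_Ioc]
    rfl
  simp_rw [h1]
  rw [lintegral_lintegral_swap hm.aemeasurable]
  have h2 : ∀ s, ∫⁻ t, indicator {p : ℝ × ℝ | 0 < p.2 ∧ p.2 ≤ p.1} (fun p => φ p.2) (t, s)
      ∂(wexp C) = indicator (Ioi 0) (fun s => ENNReal.ofReal (1 / C) *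
        (ENNReal.ofReal (Real.exp (-C * s)) * φ s)) s := by
    intro s
    rw [wexp_lintegral C (φ := fun t => indicator {p : ℝ × ℝ | 0 < p.2 ∧ p.2 ≤ p.1}
      (fun p => φ p.2) (t, s)) (hm.comp measurable_prodMk_right)]
    by_cases hs : 0 < s
    · have h3 : ∀ t, ENNReal.ofReal (Real.exp (-C * t)) *
          indicator {p : ℝ × ℝ | 0 < p.2 ∧ p.2 ≤ p.1} (fun p => φ p.2) (t, s) =
          indicator (Ici s) (fun t => ENNReal.ofReal (Real.exp (-C * t)) * φ s) t := by
        intro t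
        by_cases h : s ≤ t <;> simp [indicator, h, hs]
      simp_rw [h3]
      rw [lintegral_indicator measurableSet_Ici, Measure.restrict_restrict measurableSet_Ici,
        inter_eq_left.2 (Ici_subset_Ioi.2 hs),
        lintegral_mul_const _ (by fun_prop), restrict_Ioi_eq_restrict_Ici.symm, exp_tail hC]
      simp [indicator, hs, mul_assoc]
    · simp [indicator, hs]
  simp_rw [h2]
  rw [lintegral_indicator measurableSet_Ioi, lintegral_const_mul _ (by fun_prop), wexp_lintegral _ hφ]

variable {m0 : MeasurableSpace Ω}

/-- Shift in the counting variable. -/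
def shf (v : ℝ × (Ω × ℕ) → ℝ) (p : ℝ × (Ω × ℕ)) : ℝ :=
  if p.2.2 = 0 then 0 else v (p.1, (p.2.1, p.2.2 - 1))

/-- Time integral of the jump flow. -/
def flow (v : ℝ × (Ω × ℕ) → ℝ) (p : ℝ × (Ω × ℕ)) : ℝ :=
  ∫ s in Ioc 0 p.1, (shf v (s, p.2) - v (s, p.2))

/-- The state measure. -/
def kap (μ : Measure Ω) : Measure (Ω × ℕ) := μ.prod Measure.count

instance (μ : Measure Ω) [IsProbabilityMeasure μ] : SigmaFinite (kap μ) := by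
  unfold kap; infer_instance

lemma shf_meas {v : ℝ × (Ω × ℕ) → ℝ} (hv : Measurable v) : Measurable (shf v) := by
  unfold shf
  refine Measurable.ite ?_ measurable_const ?_
  · exact (measurable_snd.comp measurable_snd) (measurableSet_singleton 0)
  · exact hv.comp (measurable_fst.prodMk ((measurable_fst.comp measurable_snd).prodMk
      ((measurable_of_countable (fun n : ℕ => n - 1)).comp (measurable_snd.comp measurable_snd))))

lemma flow_meas {v : ℝ × (Ω × ℕ) → ℝ} (hv : Measurable v) : Measurable (flow v) := by
  have h : flow v = fun p : ℝ × (Ω × ℕ) => ∫ s, indicator {q : (ℝ × (Ω × ℕ)) × ℝ | 0 < q.2 ∧ q.2 ≤ q.1.1}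
      (fun q => shf v (q.2, q.1.2) - v (q.2, q.1.2)) (p, s) := by
    funext p
    unfold flow
    rw [← integral_indicator measurableSet_Ioc]
    rfl
  rw [h]
  refine (StronglyMeasurable.integral_prod_right (f := fun (p : ℝ × (Ω × ℕ)) (s : ℝ) =>
    indicator {q : (ℝ × (Ω × ℕ)) × ℝ | 0 < q.2 ∧ q.2 ≤ q.1.1}
      (fun q => shf v (q.2, q.1.2) - v (q.2, q.1.2)) (p, s)) ?_).measurable
  refine Measurable.stronglyMeasurable ?_
  refine Measurable.indicator ?_ ((measurableSet_lt measurable_const measurable_snd).inter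
        (measurableSet_le measurable_snd (measurable_fst.comp measurable_fst)))
  have : Measurable (fun q : (ℝ × (Ω × ℕ)) × ℝ => ((q.2, q.1.2) : ℝ × (Ω × ℕ))) := by fun_prop
  exact ((shf_meas hv).comp this).sub (hv.comp this)

lemma kap_shift (μ : Measure Ω) [IsProbabilityMeasure μ] {F : Ω × ℕ → ℝ≥0∞} (hF : Measurable F) :
    ∫⁻ y, (if y.2 = 0 then 0 else F (y.1, y.2 - 1)) ∂(kap μ) = ∫⁻ y, F y ∂(kap μ) := by
  have hF' : Measurable (fun y : Ω × ℕ => if y.2 = 0 then 0 else F (y.1, y.2 - 1)) := by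
    refine Measurable.ite (measurable_snd (measurableSet_singleton 0)) measurable_const ?_
    exact hF.comp (measurable_fst.prodMk ((measurable_of_countable (fun n : ℕ => n - 1)).comp measurable_snd))
  unfold kap
  rw [lintegral_prod _ hF'.aemeasurable, lintegral_prod _ hF.aemeasurable]
  refine lintegral_congr fun ω => ?_
  rw [lintegral_count, lintegral_count, tsum_eq_zero_add' ENNReal.summable]
  simp

lemma flow_bound (μ : Measure Ω) [IsProbabilityMeasure μ] {C : ℝ} (hC : 0 < C)
    {v : ℝ × (Ω × ℕ) → ℝ} (hv : Measurable v) :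
    ∫⁻ p, ‖flow v p‖ₑ ∂((wexp C).prod (kap μ)) ≤
      ENNReal.ofReal (2 / C) * ∫⁻ p, ‖v p‖ₑ ∂((wexp C).prod (kap μ)) := by
  have hΦ : Measurable (fun p : ℝ × (Ω × ℕ) => ‖shf v p‖ₑ + ‖v p‖ₑ) :=
    (shf_meas hv).enorm.add hv.enorm
  have h1 : ∫⁻ p, ‖flow v p‖ₑ ∂((wexp C).prod (kap μ)) =
      ∫⁻ y, ∫⁻ t, ‖flow v (t, y)‖ₑ ∂(wexp C) ∂(kap μ) :=
    lintegral_prod_symm _ (flow_meas hv).enorm.aemeasurable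
  have h2 : ∀ y, ∫⁻ t, ‖flow v (t, y)‖ₑ ∂(wexp C) ≤
      ENNReal.ofReal (1 / C) * ∫⁻ s, (‖shf v (s, y)‖ₑ + ‖v (s, y)‖ₑ) ∂(wexp C) := by
    intro y
    rw [← time_fubini hC (φ := fun s => ‖shf v (s, y)‖ₑ + ‖v (s, y)‖ₑ)
      (hΦ.comp measurable_prodMk_right)]
    refine lintegral_mono fun t => ?_
    refine (enorm_integral_le_lintegral_enorm _).trans ?_
    exact lintegral_mono fun s => enorm_sub_le
  rw [h1]
  refine (lintegral_mono h2).trans ?_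
  have h3 : ∫⁻ y, ∫⁻ s, (‖shf v (s, y)‖ₑ + ‖v (s, y)‖ₑ) ∂(wexp C) ∂(kap μ) =
      2 * ∫⁻ p, ‖v p‖ₑ ∂((wexp C).prod (kap μ)) := by
    rw [← lintegral_prod_symm (fun p : ℝ × (Ω × ℕ) => ‖shf v p‖ₑ + ‖v p‖ₑ) hΦ.aemeasurable,
      lintegral_add_left (shf_meas hv).enorm, two_mul]
    congr 1
    rw [lintegral_prod _ (shf_meas hv).enorm.aemeasurable, lintegral_prod _ hv.enorm.aemeasurable]
    refine lintegral_congr fun s => ?_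
    rw [← kap_shift μ (F := fun y => ‖v (s, y)‖ₑ) (hv.enorm.comp measurable_prodMk_left)]
    refine lintegral_congr fun y => ?_
    by_cases h : y.2 = 0 <;> simp [shf, h]
  rw [lintegral_const_mul _ (Measurable.lintegral_prod_left' hΦ), h3, ← mul_assoc]
  gcongr
  rw [show (2 : ℝ≥0∞) = ENNReal.ofReal 2 by simp, ← ENNReal.ofReal_mul (by positivity)]
  apply le_of_eq; congr 1; ring

end weighted

section lip
variable {Y : Type*} {mY : MeasurableSpace Y} {κ : Measure Y} {L U : ℝ}

/-- Lipschitz bound for the projected ratio on one fibre. -/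
lemma fibre_lip (hL : 0 < L) (hLU : L < U) {f f' θ : Y → ℝ} {g g' : ℝ}
    (hf : Integrable f κ) (hf' : Integrable f' κ) (hf0 : ∀ y, 0 ≤ f y) (hf0' : ∀ y, 0 ≤ f' y)
    (hθ : Measurable θ) (hθL : ∀ y, L ≤ θ y) (hθU : ∀ y, θ y ≤ U)
    (hg : L ≤ g ∧ g ≤ U) (hg' : L ≤ g' ∧ g' ≤ U)
    (h : g * ∫ y, f y ∂κ = ∫ y, θ y * f y ∂κ) (h' : g' * ∫ y, f' y ∂κ = ∫ y, θ y * f' y ∂κ) :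
    ∫ y, |θ y / g * f y - θ y / g' * f' y| ∂κ ≤ (2 * U / L + 1) * ∫ y, |f y - f' y| ∂κ := by
  have hg0 : 0 < g := hL.trans_le hg.1
  have hg0' : 0 < g' := hL.trans_le hg'.1
  have bdd : ∀ φ : Y → ℝ, Integrable φ κ → Integrable (fun y => θ y * φ y) κ := fun φ hφ =>
    hφ.bdd_mul (c := U) hθ.aestronglyMeasurable (ae_of_all _ fun y => by
      rw [Real.norm_eq_abs, abs_of_pos (hL.trans_le (hθL y))]; exact hθU y)
  have hU : 0 < U := hL.trans hLU
  set D := ∫ y, |f y - f' y| ∂κ with hD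
  have hD0 : 0 ≤ D := integral_nonneg fun _ => abs_nonneg _
  have ia : Integrable (fun y => f y - f' y) κ := hf.sub hf'
  have pt : ∀ y, |θ y / g * f y - θ y / g' * f' y| ≤
      U / L * |f y - f' y| + |1 / g - 1 / g'| * (θ y * f' y) := by
    intro y
    have h0 : 0 < θ y := hL.trans_le (hθL y)
    have e1 : θ y / g * f y - θ y / g' * f' y =
        θ y / g * (f y - f' y) + (1 / g - 1 / g') * (θ y * f' y) := by ring
    rw [e1]
    refine (abs_add_le _ _).trans ?_
    rw [abs_mul, abs_mul, abs_of_pos (div_pos h0 hg0), abs_of_nonneg (mul_nonneg h0.le (hf0' y))]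
    gcongr
    · exact hθU y
    · exact hg.1
  have i1 : Integrable (fun y => U / L * |f y - f' y| + |1 / g - 1 / g'| * (θ y * f' y)) κ :=
    (ia.abs.const_mul _).add ((bdd _ hf').const_mul _)
  have s1 : ∫ y, |θ y / g * f y - θ y / g' * f' y| ∂κ ≤
      U / L * D + |1 / g - 1 / g'| * (∫ y, θ y * f' y ∂κ) := by
    refine (integral_mono_of_nonneg (ae_of_all _ fun _ => abs_nonneg _) i1 (ae_of_all _ pt)).trans ?_
    rw [integral_add (ia.abs.const_mul _) ((bdd _ hf').const_mul _), integral_const_mul,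
      integral_const_mul]
  have ha : |(∫ y, f y ∂κ) - ∫ y, f' y ∂κ| ≤ D := by
    rw [← integral_sub hf hf']; exact abs_integral_le_integral_abs
  have hb : |(∫ y, θ y * f y ∂κ) - ∫ y, θ y * f' y ∂κ| ≤ U * D := by
    rw [← integral_sub (bdd _ hf) (bdd _ hf'), hD, ← integral_const_mul]
    refine (abs_integral_le_integral_abs).trans ?_
    refine integral_mono_of_nonneg (ae_of_all _ fun _ => abs_nonneg _) (ia.abs.const_mul _)
      (ae_of_all _ fun y => ?_)
    simp only [← mul_sub, abs_mul, abs_of_pos (hL.trans_le (hθL y))]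
    gcongr
    exact hθU y
  have ha0' : 0 ≤ ∫ y, f' y ∂κ := integral_nonneg hf0'
  rw [← h, ← h'] at hb
  set a := ∫ y, f y ∂κ
  set a' := ∫ y, f' y ∂κ
  rw [← h'] at s1
  have e2 : |1 / g - 1 / g'| * (g' * a') = |(g' * a' - g * a) + g * (a - a')| / g := by
    have e3 : 1 / g - 1 / g' = (g' - g) / (g * g') := by field_simp
    rw [e3, abs_div, abs_of_pos (mul_pos hg0 hg0')]
    have e4 : (g' * a' - g * a) + g * (a - a') = (g' - g) * a' := by ring
    rw [e4, abs_mul, abs_of_nonneg ha0']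
    field_simp
  have e5 : |(g' * a' - g * a) + g * (a - a')| / g ≤ U * D / L + D := by
    have : |(g' * a' - g * a) + g * (a - a')| ≤ U * D + g * D := by
      refine (abs_add_le _ _).trans (add_le_add ?_ ?_)
      · rw [abs_sub_comm]; exact hb
      · rw [abs_mul, abs_of_pos hg0]; gcongr
    rw [div_le_iff₀ hg0]
    refine this.trans ?_
    have : U * D ≤ U * D / L * g := by
      rw [div_mul_eq_mul_div, le_div_iff₀ hL]
      gcongr
      exact hg.1
    nlinarith
  calc _ ≤ _ := s1
    _ ≤ U / L * D + (U * D / L + D) := by rw [e2]; gcongr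
    _ = _ := by ring

lemma fibre_sum {A : Set ℝ} (hA : A.Countable) {S : Y → ℝ} (hS : Measurable S) (hSA : ∀ᵐ y ∂κ, S y ∈ A)
    {φ ψ : Y → ℝ≥0∞} (h : ∀ x ∈ A, ∫⁻ y in S ⁻¹' {x}, φ y ∂κ ≤ ∫⁻ y in S ⁻¹' {x}, ψ y ∂κ) :
    ∫⁻ y, φ y ∂κ ≤ ∫⁻ y, ψ y ∂κ := by
  have e : ∀ χ : Y → ℝ≥0∞, ∫⁻ y, χ y ∂κ = ∑' x : A, ∫⁻ y in S ⁻¹' {x.1}, χ y ∂κ := by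
    intro χ
    rw [← lintegral_biUnion hA (fun x _ => hS (measurableSet_singleton x))]
    · rw [← setLIntegral_univ]
      refine setLIntegral_congr ?_
      filter_upwards [hSA] with y hy
      apply propext
      constructor
      · intro _
        exact mem_biUnion hy rfl
      · intro _; trivial
    · intro x _ y _ hxy
      exact Disjoint.preimage _ (by simpa using hxy)
  rw [e, e]
  exact ENNReal.tsum_le_tsum fun x => h x.1 x.2

end lip

section fp
variable {m0 : MeasurableSpace Ω}

/-- Standing data for the fixed point problem. -/
structure Dat (μ : Measure Ω) (L U : ℝ) (A : Set ℝ) (Sk : ℕ → Ω → ℝ) (et : ℝ → Ω → ℝ)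
    (lt : ℝ → ℝ → ℝ) : Prop where
  hL : 0 < L
  hLU : L < U
  hA : A.Countable
  Skm : ∀ k, Measurable (Sk k)
  SkA : ∀ k, ∀ᵐ ω ∂μ, Sk k ω ∈ A
  etm : Measurable (fun p : ℝ × Ω => et p.1 p.2)
  etL : ∀ s ω, L ≤ et s ω
  etU : ∀ s ω, et s ω ≤ U
  ltm : Measurable (fun p : ℝ × ℝ => lt p.1 p.2)
  ltL : ∀ s x, L ≤ lt s x
  ltU : ∀ s x, lt s x ≤ U

/-- Mass at `x`. -/
def aa (μ : Measure Ω) (Sk : ℕ → Ω → ℝ) (f : ℝ × (Ω × ℕ) → ℝ) (s x : ℝ) : ℝ :=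
  ∫ y, (if Sk y.2 y.1 = x then max (f (s, y)) 0 else 0) ∂(kap μ)

/-- Weighted mass at `x`. -/
def bb (μ : Measure Ω) (Sk : ℕ → Ω → ℝ) (et : ℝ → Ω → ℝ) (f : ℝ × (Ω × ℕ) → ℝ) (s x : ℝ) : ℝ :=
  ∫ y, (if Sk y.2 y.1 = x then et s y.1 * max (f (s, y)) 0 else 0) ∂(kap μ)

/-- Clamped ratio. -/
def gg (μ : Measure Ω) (L U : ℝ) (Sk : ℕ → Ω → ℝ) (et : ℝ → Ω → ℝ) (f : ℝ × (Ω × ℕ) → ℝ)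
    (s x : ℝ) : ℝ := max L (min U (bb μ Sk et f s x / aa μ Sk f s x))

/-- Intensity attached to a ratio `g`. -/
def rt (Sk : ℕ → Ω → ℝ) (et : ℝ → Ω → ℝ) (lt g : ℝ → ℝ → ℝ) (p : ℝ × (Ω × ℕ)) : ℝ :=
  et p.1 p.2.1 * lt p.1 (Sk p.2.2 p.2.1) / g p.1 (Sk p.2.2 p.2.1)

/-- The nonlinear flux. -/
def VV (μ : Measure Ω) (L U : ℝ) (Sk : ℕ → Ω → ℝ) (et : ℝ → Ω → ℝ) (lt : ℝ → ℝ → ℝ)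
    (f : ℝ × (Ω × ℕ) → ℝ) (p : ℝ × (Ω × ℕ)) : ℝ :=
  rt Sk et lt (gg μ L U Sk et f) p * max (f p) 0

variable {μ : Measure Ω} [IsProbabilityMeasure μ] {L U : ℝ} {A : Set ℝ} {Sk : ℕ → Ω → ℝ}
  {et : ℝ → Ω → ℝ} {lt : ℝ → ℝ → ℝ}

lemma gg_mem (hLU : L < U) (f : ℝ × (Ω × ℕ) → ℝ) (s x : ℝ) :
    L ≤ gg μ L U Sk et f s x ∧ gg μ L U Sk et f s x ≤ U :=
  ⟨le_max_left _ _, max_le hLU.le (min_le_left _ _)⟩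

namespace Dat

lemma SYm (d : Dat μ L U A Sk et lt) : Measurable (fun y : Ω × ℕ => Sk y.2 y.1) :=
  measurable_from_prod_countable_left fun k => d.Skm k

lemma SYA (d : Dat μ L U A Sk et lt) : ∀ᵐ y ∂(kap μ), Sk y.2 y.1 ∈ A := by
  have hm : MeasurableSet {y : Ω × ℕ | Sk y.2 y.1 ∈ A} := d.SYm d.hA.measurableSet
  unfold kap
  rw [Measure.ae_prod_iff_ae_ae hm]
  filter_upwards [ae_all_iff.2 d.SkA] with ω hω
  exact ae_of_all _ hω

lemma aa_meas (d : Dat μ L U A Sk et lt) {f : ℝ × (Ω × ℕ) → ℝ} (hf : Measurable f) :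
    Measurable (fun p : ℝ × ℝ => aa μ Sk f p.1 p.2) := by
  refine (StronglyMeasurable.integral_prod_right (f := fun (p : ℝ × ℝ) (y : Ω × ℕ) =>
    (if Sk y.2 y.1 = p.2 then max (f (p.1, y)) 0 else 0)) ?_).measurable
  refine Measurable.stronglyMeasurable ?_
  refine Measurable.ite (measurableSet_eq_fun (d.SYm.comp measurable_snd) (by fun_prop)) ?_ measurable_const
  exact (hf.comp (by fun_prop : Measurable fun q : (ℝ × ℝ) × (Ω × ℕ) => (q.1.1, q.2))).max measurable_const

lemma bb_meas (d : Dat μ L U A Sk et lt) {f : ℝ × (Ω × ℕ) → ℝ} (hf : Measurable f) :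
    Measurable (fun p : ℝ × ℝ => bb μ Sk et f p.1 p.2) := by
  refine (StronglyMeasurable.integral_prod_right (f := fun (p : ℝ × ℝ) (y : Ω × ℕ) =>
    (if Sk y.2 y.1 = p.2 then et p.1 y.1 * max (f (p.1, y)) 0 else 0)) ?_).measurable
  refine Measurable.stronglyMeasurable ?_
  refine Measurable.ite (measurableSet_eq_fun (d.SYm.comp measurable_snd) (by fun_prop)) ?_ measurable_const
  exact (d.etm.comp (by fun_prop : Measurable fun q : (ℝ × ℝ) × (Ω × ℕ) => (q.1.1, q.2.1))).mul
    ((hf.comp (by fun_prop : Measurable fun q : (ℝ × ℝ) × (Ω × ℕ) => (q.1.1, q.2))).max measurable_const)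

lemma gg_meas (d : Dat μ L U A Sk et lt) {f : ℝ × (Ω × ℕ) → ℝ} (hf : Measurable f) :
    Measurable (fun p : ℝ × ℝ => gg μ L U Sk et f p.1 p.2) :=
  measurable_const.max (measurable_const.min ((d.bb_meas hf).div (d.aa_meas hf)))

lemma rt_meas (d : Dat μ L U A Sk et lt) {g : ℝ → ℝ → ℝ} (hg : Measurable (fun p : ℝ × ℝ => g p.1 p.2)) :
    Measurable (rt Sk et lt g) := by
  have h1 : Measurable (fun p : ℝ × (Ω × ℕ) => (p.1, Sk p.2.2 p.2.1)) :=
    measurable_fst.prodMk (d.SYm.comp measurable_snd)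
  exact ((d.etm.comp (by fun_prop : Measurable fun q : ℝ × (Ω × ℕ) => (q.1, q.2.1))).mul
    (d.ltm.comp h1)).div (hg.comp h1)

lemma VV_meas (d : Dat μ L U A Sk et lt) {f : ℝ × (Ω × ℕ) → ℝ} (hf : Measurable f) :
    Measurable (VV μ L U Sk et lt f) :=
  (d.rt_meas (d.gg_meas hf)).mul (hf.max measurable_const)

lemma rt_bd (d : Dat μ L U A Sk et lt) {g : ℝ → ℝ → ℝ} (hg : ∀ s x, L ≤ g s x ∧ g s x ≤ U)
    (p : ℝ × (Ω × ℕ)) : L ^ 2 / U ≤ rt Sk et lt g p ∧ rt Sk et lt g p ≤ U ^ 2 / L := by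
  have hL := d.hL
  have hU := d.hL.trans d.hLU
  have h1 := hg p.1 (Sk p.2.2 p.2.1)
  have h2 := d.etL p.1 p.2.1
  have h3 := d.etU p.1 p.2.1
  have h4 := d.ltL p.1 (Sk p.2.2 p.2.1)
  have h5 := d.ltU p.1 (Sk p.2.2 p.2.1)
  have h6 : 0 < g p.1 (Sk p.2.2 p.2.1) := hL.trans_le h1.1
  unfold rt
  rw [sq, sq]
  constructor
  · apply div_le_div₀ (by nlinarith) _ h6 h1.2
    exact mul_le_mul h2 h4 hL.le (by linarith)
  · apply div_le_div₀ (by positivity) _ hL h1.1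
    exact mul_le_mul h3 h5 (by linarith) hU.le

lemma fib (d : Dat μ L U A Sk et lt) (x : ℝ) (φ : Ω × ℕ → ℝ) :
    ∫ y, (if Sk y.2 y.1 = x then φ y else 0) ∂(kap μ) =
      ∫ y in (fun y : Ω × ℕ => Sk y.2 y.1) ⁻¹' {x}, φ y ∂(kap μ) := by
  rw [← integral_indicator (d.SYm (measurableSet_singleton x))]
  rfl

lemma et_mul (d : Dat μ L U A Sk et lt) (s : ℝ) {κ : Measure (Ω × ℕ)} {φ : Ω × ℕ → ℝ} (hφ : Integrable φ κ) :
    Integrable (fun y => et s y.1 * φ y) κ :=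
  hφ.bdd_mul (c := U) (d.etm.comp (by fun_prop : Measurable fun q : Ω × ℕ => (s, q.1))).aestronglyMeasurable
    (ae_of_all _ fun y => by
      rw [Real.norm_eq_abs, abs_of_pos (d.hL.trans_le (d.etL s y.1))]; exact d.etU s y.1)

lemma gab (d : Dat μ L U A Sk et lt) {f : ℝ × (Ω × ℕ) → ℝ} {s : ℝ}
    (hf : Integrable (fun y => f (s, y)) (kap μ)) (x : ℝ) :
    gg μ L U Sk et f s x * aa μ Sk f s x = bb μ Sk et f s x := by
  have hp : Integrable (fun y => max (f (s, y)) 0) ((kap μ).restrict ((fun y : Ω × ℕ => Sk y.2 y.1) ⁻¹' {x})) :=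
    hf.pos_part.integrableOn
  have h1 : L * aa μ Sk f s x ≤ bb μ Sk et f s x := by
    unfold aa bb
    rw [d.fib, d.fib, ← integral_const_mul]
    refine integral_mono (hp.const_mul _) (d.et_mul s hp) fun y => ?_
    exact mul_le_mul_of_nonneg_right (d.etL _ _) (le_max_right _ _)
  have h2 : bb μ Sk et f s x ≤ U * aa μ Sk f s x := by
    unfold aa bb
    rw [d.fib, d.fib, ← integral_const_mul]
    refine integral_mono (d.et_mul s hp) (hp.const_mul _) fun y => ?_
    exact mul_le_mul_of_nonneg_right (d.etU _ _) (le_max_right _ _)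
  have h0 : 0 ≤ aa μ Sk f s x := by
    unfold aa
    rw [d.fib]
    exact integral_nonneg fun y => le_max_right _ _
  rcases h0.eq_or_lt with h | h
  · rw [← h] at h1 h2 ⊢
    linarith
  · have h3 : L ≤ bb μ Sk et f s x / aa μ Sk f s x := (le_div_iff₀ h).2 h1
    have h4 : bb μ Sk et f s x / aa μ Sk f s x ≤ U := (div_le_iff₀ h).2 h2
    unfold gg
    rw [min_eq_right h4, max_eq_right h3, div_mul_cancel₀ _ h.ne']

lemma VV_lip (d : Dat μ L U A Sk et lt) {f f' : ℝ × (Ω × ℕ) → ℝ} (hfm : Measurable f) (hfm' : Measurable f')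
    {s : ℝ} (hf : Integrable (fun y => f (s, y)) (kap μ)) (hf' : Integrable (fun y => f' (s, y)) (kap μ)) :
    ∫⁻ y, ‖VV μ L U Sk et lt f (s, y) - VV μ L U Sk et lt f' (s, y)‖ₑ ∂(kap μ) ≤
      ∫⁻ y, ENNReal.ofReal (U * (2 * U / L + 1)) * ‖f (s, y) - f' (s, y)‖ₑ ∂(kap μ) := by
  have hL := d.hL
  have hU := d.hL.trans d.hLU
  refine fibre_sum d.hA d.SYm d.SYA fun x _ => ?_
  set κ := (kap μ).restrict ((fun y : Ω × ℕ => Sk y.2 y.1) ⁻¹' {x}) with hκ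
  have hsm := d.SYm (measurableSet_singleton x)
  have hp : Integrable (fun y => max (f (s, y)) 0) κ := hf.pos_part.integrableOn
  have hp' : Integrable (fun y => max (f' (s, y)) 0) κ := hf'.pos_part.integrableOn
  have hi : Integrable (fun y => f (s, y) - f' (s, y)) κ := (hf.sub hf').integrableOn
  have key := fibre_lip (κ := κ) hL d.hLU (θ := fun y => et s y.1) hp hp' (fun _ => le_max_right _ _)
    (fun _ => le_max_right _ _) (d.etm.comp (by fun_prop : Measurable fun q : Ω × ℕ => (s, q.1)))
    (fun y => d.etL _ _) (fun y => d.etU _ _) (gg_mem (μ := μ) (Sk := Sk) (et := et) d.hLU f s x)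
    (gg_mem (μ := μ) (Sk := Sk) (et := et) d.hLU f' s x)
    (by have := d.gab hf x; unfold aa bb at this; rwa [d.fib, d.fib] at this)
    (by have := d.gab hf' x; unfold aa bb at this; rwa [d.fib, d.fib] at this)
  set g := gg μ L U Sk et f s x
  set g' := gg μ L U Sk et f' s x
  have iV : Integrable (fun y => et s y.1 / g * max (f (s, y)) 0 - et s y.1 / g' * max (f' (s, y)) 0) κ := by
    have := ((d.et_mul s hp).const_mul (1 / g)).sub ((d.et_mul s hp').const_mul (1 / g'))
    refine this.congr (ae_of_all _ fun y => ?_)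
    simp only [Pi.sub_apply]
    ring
  have e1 : ∫⁻ y, ‖VV μ L U Sk et lt f (s, y) - VV μ L U Sk et lt f' (s, y)‖ₑ ∂κ ≤
      ∫⁻ y, ENNReal.ofReal U * ‖et s y.1 / g * max (f (s, y)) 0 - et s y.1 / g' * max (f' (s, y)) 0‖ₑ ∂κ := by
    refine lintegral_mono_ae ?_
    filter_upwards [ae_restrict_mem hsm] with y hy
    have hy' : Sk y.2 y.1 = x := hy
    have : VV μ L U Sk et lt f (s, y) - VV μ L U Sk et lt f' (s, y) = lt s x *
      (et s y.1 / g * max (f (s, y)) 0 - et s y.1 / g' * max (f' (s, y)) 0) := by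
      simp only [VV, rt, hy', g, g']
      ring
    rw [this, enorm_mul]
    gcongr
    rw [Real.enorm_of_nonneg (hL.le.trans (d.ltL s x))]
    exact ENNReal.ofReal_le_ofReal (d.ltU s x)
  refine e1.trans ?_
  have hcm : Measurable (fun y => ‖f (s, y) - f' (s, y)‖ₑ) :=
    ((hfm.comp measurable_prodMk_left).sub (hfm'.comp measurable_prodMk_left)).enorm
  rw [lintegral_const_mul' _ _ ENNReal.ofReal_ne_top, lintegral_const_mul _ hcm,
    ← ofReal_integral_norm_eq_lintegral_enorm iV, ← ofReal_integral_norm_eq_lintegral_enorm hi,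
    ← ENNReal.ofReal_mul hU.le, ← ENNReal.ofReal_mul (by positivity)]
  apply ENNReal.ofReal_le_ofReal
  rw [mul_assoc]
  apply mul_le_mul_of_nonneg_left _ hU.le
  refine key.trans ?_
  apply mul_le_mul_of_nonneg_left _ (by positivity)
  refine integral_mono_of_nonneg (ae_of_all _ fun _ => abs_nonneg _) hi.norm (ae_of_all _ fun y => ?_)
  exact abs_max_sub_max_le_abs _ _ _

end Dat
end fp

section fpx
variable {m0 : MeasurableSpace Ω}
variable {μ : Measure Ω} [IsProbabilityMeasure μ] {L U : ℝ} {A : Set ℝ} {Sk : ℕ → Ω → ℝ}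
  {et : ℝ → Ω → ℝ} {lt : ℝ → ℝ → ℝ} {C : ℝ}

/-- Initial condition. -/
def ini (p : ℝ × (Ω × ℕ)) : ℝ := if p.2.2 = 0 then 1 else 0

lemma ini_meas : Measurable (ini : ℝ × (Ω × ℕ) → ℝ) :=
  Measurable.ite ((measurable_snd.comp measurable_snd) (measurableSet_singleton 0))
    measurable_const measurable_const

lemma ini_int (hC : 0 < C) : Integrable (ini : ℝ × (Ω × ℕ) → ℝ) ((wexp C).prod (kap μ)) := by
  refine ⟨ini_meas.aestronglyMeasurable, ?_⟩
  have h : ∀ p : ℝ × (Ω × ℕ), ‖(ini p : ℝ)‖ₑ = if p.2.2 = 0 then 1 else 0 := by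
    intro p; unfold ini; split_ifs <;> simp
  unfold HasFiniteIntegral
  have h1 : Measurable (fun y : Ω × ℕ => if y.2 = 0 then (1 : ℝ≥0∞) else 0) :=
    Measurable.ite (measurable_snd (measurableSet_singleton 0)) measurable_const measurable_const
  simp_rw [h]
  have h3 : Measurable (fun p : ℝ × (Ω × ℕ) => if p.2.2 = 0 then (1 : ℝ≥0∞) else 0) :=
    h1.comp measurable_snd
  rw [lintegral_prod _ h3.aemeasurable]
  simp only
  have h2 : ∫⁻ y : Ω × ℕ, (if y.2 = 0 then (1 : ℝ≥0∞) else 0) ∂(kap μ) = 1 := by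
    unfold kap
    rw [lintegral_prod _ h1.aemeasurable]
    simp [lintegral_count]
  rw [lintegral_congr (g := fun _ => 1) (fun x => h2)]
  simpa using wexp_univ hC

lemma shf_lint (v : ℝ × (Ω × ℕ) → ℝ) (hv : Measurable v) :
    ∫⁻ p, ‖shf v p‖ₑ ∂((wexp C).prod (kap μ)) = ∫⁻ p, ‖v p‖ₑ ∂((wexp C).prod (kap μ)) := by
  rw [lintegral_prod _ (shf_meas hv).enorm.aemeasurable, lintegral_prod _ hv.enorm.aemeasurable]
  refine lintegral_congr fun s => ?_
  rw [← kap_shift μ (F := fun y => ‖v (s, y)‖ₑ) (hv.enorm.comp measurable_prodMk_left)]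
  refine lintegral_congr fun y => ?_
  by_cases h : y.2 = 0 <;> simp [shf, h]

lemma loc_int1 (hC : 0 < C) {φ : ℝ → ℝ} (hφ : Measurable φ) (h : Integrable φ (wexp C)) (t : ℝ) :
    IntegrableOn φ (Ioc 0 t) := by
  refine ⟨hφ.aestronglyMeasurable, ?_⟩
  have h1 : ∫⁻ s, ‖φ s‖ₑ ∂(wexp C) < ∞ := h.2
  rw [wexp_lintegral _ hφ.enorm] at h1
  unfold HasFiniteIntegral
  have h2 : ∫⁻ s in Ioc 0 t, ‖φ s‖ₑ ≤ ENNReal.ofReal (Real.exp (C * t)) *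
      ∫⁻ s in Ioi 0, ENNReal.ofReal (Real.exp (-C * s)) * ‖φ s‖ₑ := by
    rw [← lintegral_const_mul' _ _ ENNReal.ofReal_ne_top]
    refine le_trans ?_ (lintegral_mono_set (s := Ioc 0 t) Ioc_subset_Ioi_self)
    refine lintegral_mono_ae ?_
    filter_upwards [ae_restrict_mem measurableSet_Ioc] with s hs
    rw [← mul_assoc, ← ENNReal.ofReal_mul (Real.exp_pos _).le, ← Real.exp_add]
    have : 1 ≤ ENNReal.ofReal (Real.exp (C * t + -C * s)) := by
      rw [ENNReal.one_le_ofReal]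
      apply Real.one_le_exp
      nlinarith [hs.2]
    calc ‖φ s‖ₑ = 1 * ‖φ s‖ₑ := (one_mul _).symm
      _ ≤ _ := by gcongr
  exact h2.trans_lt (ENNReal.mul_lt_top ENNReal.ofReal_lt_top h1)

lemma loc_int (hC : 0 < C) {v : ℝ × (Ω × ℕ) → ℝ} (hv : Measurable v)
    (hi : Integrable v ((wexp C).prod (kap μ))) :
    ∀ᵐ y ∂(kap μ), ∀ t, IntegrableOn (fun s => v (s, y)) (Ioc 0 t) := by
  filter_upwards [hi.prod_left_ae] with y hy t
  exact loc_int1 hC (hv.comp measurable_prodMk_right) hy t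

lemma shf_int {v : ℝ × (Ω × ℕ) → ℝ} (hv : Measurable v)
    (hi : Integrable v ((wexp C).prod (kap μ))) : Integrable (shf v) ((wexp C).prod (kap μ)) := by
  refine ⟨(shf_meas hv).aestronglyMeasurable, ?_⟩
  unfold HasFiniteIntegral
  rw [shf_lint v hv]
  exact hi.2

lemma flow_sub (hC : 0 < C) {v v' : ℝ × (Ω × ℕ) → ℝ} (hv : Measurable v) (hv' : Measurable v')
    (hi : Integrable v ((wexp C).prod (kap μ))) (hi' : Integrable v' ((wexp C).prod (kap μ))) :
    ∀ᵐ p ∂((wexp C).prod (kap μ)), flow v p - flow v' p = flow (fun q => v q - v' q) p := by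
  have h : ∀ᵐ y ∂(kap μ), ∀ t : ℝ, flow v (t, y) - flow v' (t, y) = flow (fun q => v q - v' q) (t, y) := by
    filter_upwards [loc_int hC hv hi, loc_int hC hv' hi', loc_int hC (shf_meas hv) (shf_int hv hi),
      loc_int hC (shf_meas hv') (shf_int hv' hi')] with y h1 h2 h3 h4 t
    unfold flow
    simp only
    have i1 : IntegrableOn (fun s => shf v (s, y) - v (s, y)) (Ioc 0 t) := (h3 t).sub (h1 t)
    have i2 : IntegrableOn (fun s => shf v' (s, y) - v' (s, y)) (Ioc 0 t) := (h4 t).sub (h2 t)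
    rw [← integral_sub i1 i2]
    congr 1
    ext s
    simp only [shf]
    split_ifs <;> ring
  have h5 := Measure.quasiMeasurePreserving_snd (μ := wexp C) (ν := kap μ) |>.ae h
  filter_upwards [h5] with p hp
  exact hp p.1

/-- The fixed point operator. -/
def KK (μ : Measure Ω) (L U : ℝ) (Sk : ℕ → Ω → ℝ) (et : ℝ → Ω → ℝ) (lt : ℝ → ℝ → ℝ)
    (f : ℝ × (Ω × ℕ) → ℝ) (p : ℝ × (Ω × ℕ)) : ℝ := ini p + flow (VV μ L U Sk et lt f) p

lemma Dat.VV_int (d : Dat μ L U A Sk et lt) {f : ℝ × (Ω × ℕ) → ℝ} (hfm : Measurable f)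
    (hi : Integrable f ((wexp C).prod (kap μ))) :
    Integrable (VV μ L U Sk et lt f) ((wexp C).prod (kap μ)) := by
  refine hi.pos_part.bdd_mul (c := U ^ 2 / L) (d.rt_meas (d.gg_meas hfm)).aestronglyMeasurable
    (ae_of_all _ fun p => ?_)
  have := d.rt_bd (g := gg μ L U Sk et f) (gg_mem d.hLU f) p
  have h0 : 0 < L ^ 2 / U := div_pos (pow_pos d.hL 2) (d.hL.trans d.hLU)
  rw [Real.norm_eq_abs, abs_of_pos (h0.trans_le this.1)]
  exact this.2

lemma Dat.KK_meas (d : Dat μ L U A Sk et lt) {f : ℝ × (Ω × ℕ) → ℝ} (hfm : Measurable f) :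
    Measurable (KK μ L U Sk et lt f) := ini_meas.add (flow_meas (d.VV_meas hfm))

lemma flow_int (hC : 0 < C) {v : ℝ × (Ω × ℕ) → ℝ} (hv : Measurable v)
    (hi : Integrable v ((wexp C).prod (kap μ))) : Integrable (flow v) ((wexp C).prod (kap μ)) :=
  ⟨(flow_meas hv).aestronglyMeasurable, (flow_bound μ hC hv).trans_lt
    (ENNReal.mul_lt_top ENNReal.ofReal_lt_top hi.2)⟩

lemma Dat.KK_int (d : Dat μ L U A Sk et lt) (hC : 0 < C) {f : ℝ × (Ω × ℕ) → ℝ} (hfm : Measurable f)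
    (hi : Integrable f ((wexp C).prod (kap μ))) :
    Integrable (KK μ L U Sk et lt f) ((wexp C).prod (kap μ)) :=
  (ini_int hC).add (flow_int hC (d.VV_meas hfm) (d.VV_int hfm hi))

lemma Dat.KK_lip (d : Dat μ L U A Sk et lt) (hC : 0 < C) {f f' : ℝ × (Ω × ℕ) → ℝ} (hfm : Measurable f)
    (hfm' : Measurable f') (hi : Integrable f ((wexp C).prod (kap μ)))
    (hi' : Integrable f' ((wexp C).prod (kap μ))) :
    ∫⁻ p, ‖KK μ L U Sk et lt f p - KK μ L U Sk et lt f' p‖ₑ ∂((wexp C).prod (kap μ)) ≤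
      ENNReal.ofReal (2 / C) * (ENNReal.ofReal (U * (2 * U / L + 1)) *
        ∫⁻ p, ‖f p - f' p‖ₑ ∂((wexp C).prod (kap μ))) := by
  have h1 : ∫⁻ p, ‖KK μ L U Sk et lt f p - KK μ L U Sk et lt f' p‖ₑ ∂((wexp C).prod (kap μ)) =
      ∫⁻ p, ‖flow (fun q => VV μ L U Sk et lt f q - VV μ L U Sk et lt f' q) p‖ₑ
        ∂((wexp C).prod (kap μ)) := by
    refine lintegral_congr_ae ?_
    filter_upwards [flow_sub hC (d.VV_meas hfm) (d.VV_meas hfm') (d.VV_int hfm hi)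
      (d.VV_int hfm' hi')] with p hp
    rw [← hp]
    unfold KK
    congr 1
    ring
  rw [h1]
  refine (flow_bound μ hC ((d.VV_meas hfm).sub (d.VV_meas hfm'))).trans ?_
  gcongr
  have hm1 : Measurable (fun p => ‖f p - f' p‖ₑ) := (hfm.sub hfm').enorm
  rw [← lintegral_const_mul _ hm1,
    lintegral_prod _ ((d.VV_meas hfm).sub (d.VV_meas hfm')).enorm.aemeasurable,
    lintegral_prod _ (hm1.const_mul _).aemeasurable]
  refine lintegral_mono_ae ?_
  filter_upwards [hi.prod_right_ae, hi'.prod_right_ae] with s h2 h3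
  exact d.VV_lip hfm hfm' h2 h3

/-- The weight used for the contraction. -/
def Cst (L U : ℝ) : ℝ := 4 * (U * (2 * U / L + 1))

lemma Dat.Cst_pos (d : Dat μ L U A Sk et lt) : 0 < Cst L U := by
  have hL := d.hL
  have hU := d.hL.trans d.hLU
  unfold Cst; positivity

theorem Dat.exists_fixed (d : Dat μ L U A Sk et lt) :
    ∃ f : ℝ × (Ω × ℕ) → ℝ, Measurable f ∧ Integrable f ((wexp (Cst L U)).prod (kap μ)) ∧
      f =ᵐ[(wexp (Cst L U)).prod (kap μ)] KK μ L U Sk et lt f := by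
  have hC := d.Cst_pos
  set C := Cst L U with hCd
  set m := (wexp C).prod (kap μ) with hm
  have hfm : ∀ f : Lp ℝ 1 m, Measurable f := fun f => (Lp.stronglyMeasurable f).measurable
  have hfi : ∀ f : Lp ℝ 1 m, Integrable f m := fun f => L1.integrable_coeFn f
  let Φ : Lp ℝ 1 m → Lp ℝ 1 m := fun f =>
    MemLp.toLp (KK μ L U Sk et lt f) (memLp_one_iff_integrable.2 (d.KK_int hC (hfm f) (hfi f)))
  have hΦ : ContractingWith (1/2) Φ := by
    refine ⟨by norm_num, fun f f' => ?_⟩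
    rw [Lp.edist_toLp_toLp, Lp.edist_def, eLpNorm_one_eq_lintegral_enorm, eLpNorm_one_eq_lintegral_enorm]
    refine (d.KK_lip hC (hfm f) (hfm f') (hfi f) (hfi f')).trans ?_
    rw [← mul_assoc, ← ENNReal.ofReal_mul (by positivity)]
    gcongr
    · have : 2 / C * (U * (2 * U / L + 1)) = 1 / 2 := by
        have h2 : C = 4 * (U * (2 * U / L + 1)) := rfl
        rw [h2] at hC ⊢
        have : U * (2 * U / L + 1) ≠ 0 := by intro h; rw [h] at hC; simp at hC
        generalize U * (2 * U / L + 1) = z at *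
        field_simp
        norm_num
      rw [this]
      rw [ENNReal.ofReal_le_iff_le_toReal (by simp)]
      simp
    · rfl
  refine ⟨hΦ.fixedPoint, hfm _, hfi _, ?_⟩
  have h1 : Φ hΦ.fixedPoint = hΦ.fixedPoint := hΦ.fixedPoint_isFixedPt
  have h2 := MemLp.coeFn_toLp (memLp_one_iff_integrable.2 (d.KK_int hC (hfm hΦ.fixedPoint) (hfi hΦ.fixedPoint)))
  have h3 : (Φ hΦ.fixedPoint : ℝ × (Ω × ℕ) → ℝ) =ᵐ[m] KK μ L U Sk et lt hΦ.fixedPoint := h2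
  rwa [h1] at h3

/-- Uniqueness for the linear forward system. -/
theorem Dat.unique (d : Dat μ L U A Sk et lt) {f q : ℝ × (Ω × ℕ) → ℝ} (hf : Measurable f) (hq : Measurable q)
    (hfi : Integrable f ((wexp (Cst L U)).prod (kap μ)))
    (hqi : Integrable q ((wexp (Cst L U)).prod (kap μ)))
    (hff : f =ᵐ[(wexp (Cst L U)).prod (kap μ)] KK μ L U Sk et lt f) (hq0 : ∀ p, 0 ≤ q p)
    (hqq : ∀ᵐ p ∂((wexp (Cst L U)).prod (kap μ)), q p = ini p +
      flow (fun p => rt Sk et lt (gg μ L U Sk et f) p * q p) p) :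
    f =ᵐ[(wexp (Cst L U)).prod (kap μ)] q := by
  have hC := d.Cst_pos
  have hL := d.hL
  have hU := d.hL.trans d.hLU
  have h0 : 0 < L ^ 2 / U := div_pos (pow_pos d.hL 2) (d.hL.trans d.hLU)
  have hrb := d.rt_bd (g := gg μ L U Sk et f) (gg_mem d.hLU f)
  have hrm := d.rt_meas (d.gg_meas hf)
  set C := Cst L U with hCd
  set m := (wexp C).prod (kap μ) with hm
  set r := rt Sk et lt (gg μ L U Sk et f) with hr
  have hvm : Measurable (fun p => r p * q p) := hrm.mul hq
  have hvi : Integrable (fun p => r p * q p) m := by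
    refine hqi.bdd_mul (c := U ^ 2 / L) hrm.aestronglyMeasurable (ae_of_all _ fun p => ?_)
    rw [Real.norm_eq_abs, abs_of_pos (h0.trans_le (hrb p).1)]
    exact (hrb p).2
  set D := ∫⁻ p, ‖f p - q p‖ₑ ∂m with hD
  have hsm : Measurable (fun p => ‖f p - q p‖ₑ) := (hf.sub hq).enorm
  have hDt : D < ∞ := (hfi.sub hqi).2
  have h1 : D = ∫⁻ p, ‖flow (fun p => VV μ L U Sk et lt f p - r p * q p) p‖ₑ ∂m := by
    refine lintegral_congr_ae ?_
    filter_upwards [flow_sub hC (d.VV_meas hf) hvm (d.VV_int hf hfi) hvi, hff, hqq] with p h1 h2 h3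
    rw [← h1, h2, h3]
    unfold KK
    congr 1
    ring
  have h2 : D ≤ ENNReal.ofReal (1 / 2) * D := by
    calc D ≤ ENNReal.ofReal (2 / C) * ∫⁻ p, ‖VV μ L U Sk et lt f p - r p * q p‖ₑ ∂m := by
          conv_lhs => rw [h1]
          exact flow_bound μ hC ((d.VV_meas hf).sub hvm)
      _ ≤ ENNReal.ofReal (2 / C) * ∫⁻ p, ENNReal.ofReal (U ^ 2 / L) * ‖f p - q p‖ₑ ∂m := by
          gcongr with p
          have : VV μ L U Sk et lt f p - r p * q p = r p * (max (f p) 0 - max (q p) 0) := by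
            rw [max_eq_left (hq0 p)]; unfold VV; ring
          rw [this, enorm_mul]
          gcongr
          · rw [Real.enorm_of_nonneg (h0.le.trans (hrb p).1)]
            exact ENNReal.ofReal_le_ofReal (hrb p).2
          · rw [enorm_le_iff_norm_le]
            exact abs_max_sub_max_le_abs _ _ _
      _ ≤ ENNReal.ofReal (1 / 2) * D := by
          rw [lintegral_const_mul _ hsm, ← mul_assoc, ← ENNReal.ofReal_mul (by positivity)]
          gcongr
          rw [div_mul_eq_mul_div, div_le_iff₀ hC, hCd, Cst]
          have : U * (2 * U / L + 1) = 2 * (U ^ 2 / L) + U := by ring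
          rw [this]
          have : 0 < U ^ 2 / L := by positivity
          nlinarith
  have hD0 : D = 0 := by
    by_contra hne
    have h3 : ENNReal.ofReal (1 / 2) * D < 1 * D := by
      rw [ENNReal.mul_lt_mul_iff_left hne hDt.ne]
      simp
    rw [one_mul] at h3
    exact absurd h2 (not_le.2 h3)
  rw [hD, lintegral_eq_zero_iff hsm] at hD0
  filter_upwards [hD0] with p hp
  simpa [sub_eq_zero] using hp

end fpx

section ident

/-- Positive version of the clock variables. -/
def pe (x : ℝ) : ℝ := if 0 < x then x else 1

lemma pe_pos (x : ℝ) : 0 < pe x := by unfold pe; split_ifs with h <;> simp [h]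

lemma pe_meas : Measurable pe :=
  Measurable.ite measurableSet_Ioi measurable_id measurable_const

/-- Measurability of jump times. -/
lemma meas_jt {Z : Type*} {mZ : MeasurableSpace Z} {lo up : ℝ} {c : ℕ → Z → ℝ → ℝ} {e : ℕ → Z → ℝ}
    (hr : ∀ k z, Rate lo up (c k z)) (he : ∀ k z, 0 < e k z)
    (hc : ∀ k, Measurable (fun p : Z × ℝ => c k p.1 p.2)) (hem : ∀ k, Measurable (e k)) (k : ℕ) :
    Measurable (fun z => jt (fun k => c k z) (fun k => e k z) k) := by
  induction k with
  | zero => exact measurable_const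
  | succ k ih => exact meas_jt_succ hr he (fun t => meas_int (hc k) ih t) (hem k)

variable {m0 : MeasurableSpace Ω} {μ : Measure Ω} [IsProbabilityMeasure μ] {lo up : ℝ}
    {H : ℕ → MeasurableSpace Ω}

/-- Occupation probability, deterministic rates. -/
def Qd (μ : Measure Ω) (c : ℕ → ℝ → ℝ) (e : ℕ → Ω → ℝ) (k : ℕ) (s : ℝ) : ℝ :=
  μ.real {ω | jt c (fun j => e j ω) k < s ∧ s ≤ jt c (fun j => e j ω) (k + 1)}

lemma Qd_int {c : ℕ → ℝ → ℝ} {e : ℕ → Ω → ℝ} (S : Setup μ lo up H (fun k _ => c k) e) (k : ℕ) (t : ℝ) :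
    μ.real {ω | jt c (fun j => e j ω) (k + 1) < t} = ∫ s in Ioc 0 t, c k s * Qd μ c e k s ∧
    Measurable (Qd μ c e k) := by
  obtain ⟨ω0⟩ : Nonempty Ω := nonempty_of_isProbabilityMeasure μ
  have hr : ∀ k, Rate lo up (c k) := fun k => S.rate k ω0
  have htm : ∀ k, Measurable (fun ω => jt c (fun j => e j ω) k) := fun k =>
    (S.tau_meas k).mono (S.Hle k) le_rfl
  have hset : MeasurableSet {p : Ω × ℝ | jt c (fun j => e j p.1) k < p.2 ∧ p.2 ≤ jt c (fun j => e j p.1) (k + 1)} :=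
    (measurableSet_lt ((htm k).comp measurable_fst) measurable_snd).inter
      (measurableSet_le measurable_snd ((htm (k + 1)).comp measurable_fst))
  have hQm : Measurable (Qd μ c e k) :=
    (measurable_measure_prodMk_right hset).ennreal_toReal
  refine ⟨?_, hQm⟩
  have h1 := S.core_lt k t (B := univ) MeasurableSet.univ
  simp only [univ_inter, Measure.restrict_univ] at h1
  have h2 : ∀ ω, ENNReal.ofReal (min (LamR (fun k _ => c k) e k t ω) (e k ω)) =
      ∫⁻ s in Ioc 0 t, indicator {p : Ω × ℝ | jt c (fun j => e j p.1) k < p.2 ∧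
        p.2 ≤ jt c (fun j => e j p.1) (k + 1)} (fun p => ENNReal.ofReal (c k p.2)) (ω, s) := by
    intro ω
    rw [LamR, min_eq_integral hr (fun k => S.epos k ω), ofReal_integral_eq_lintegral_ofReal]
    · refine lintegral_congr fun s => ?_
      by_cases hs : s ∈ Ioc (jt c (fun j => e j ω) k) (jt c (fun j => e j ω) (k + 1))
      · rw [indicator_of_mem hs, indicator_of_mem (show (ω, s) ∈ _ from hs)]
      · rw [indicator_of_notMem hs, indicator_of_notMem (show (ω, s) ∉ _ from hs), ENNReal.ofReal_zero]
    · exact (((hr k).intOn 0 t).integrable.indicator measurableSet_Ioc)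
    · refine ae_of_all _ fun s => indicator_nonneg (fun s _ => ?_) s
      exact (hr k).lo_pos.le.trans ((hr k).lower s)
  have hm2 : Measurable (fun p : Ω × ℝ => indicator {p : Ω × ℝ | jt c (fun j => e j p.1) k < p.2 ∧
        p.2 ≤ jt c (fun j => e j p.1) (k + 1)} (fun p => ENNReal.ofReal (c k p.2)) p) :=
    ((hr k).meas.comp measurable_snd).ennreal_ofReal.indicator hset
  have h3 : μ {ω | jt c (fun j => e j ω) (k + 1) < t} =
      ∫⁻ s in Ioc 0 t, ENNReal.ofReal (c k s * Qd μ c e k s) := by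
    refine h1.trans ?_
    simp_rw [h2]
    rw [lintegral_lintegral_swap hm2.aemeasurable]
    refine lintegral_congr fun s => ?_
    rw [ENNReal.ofReal_mul ((hr k).lo_pos.le.trans ((hr k).lower s)), Qd, Measure.real,
      ENNReal.ofReal_toReal (measure_ne_top _ _)]
    have hs2 : MeasurableSet {ω | jt c (fun j => e j ω) k < s ∧ s ≤ jt c (fun j => e j ω) (k + 1)} :=
      measurable_prodMk_right hset
    rw [← setLIntegral_const, ← lintegral_indicator hs2]
    rfl
  rw [Measure.real, h3, integral_eq_lintegral_of_nonneg_ae]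
  · refine ae_of_all _ fun s => mul_nonneg ((hr k).lo_pos.le.trans ((hr k).lower s)) measureReal_nonneg
  · exact ((hr k).meas.mul hQm).aestronglyMeasurable

lemma Qd_sub {c : ℕ → ℝ → ℝ} {e : ℕ → Ω → ℝ} (S : Setup μ lo up H (fun k _ => c k) e) (k : ℕ) (t : ℝ) :
    Qd μ c e k t = μ.real {ω | jt c (fun j => e j ω) k < t} -
      μ.real {ω | jt c (fun j => e j ω) (k + 1) < t} := by
  have htm : ∀ k, Measurable (fun ω => jt c (fun j => e j ω) k) := fun k =>
    (S.tau_meas k).mono (S.Hle k) le_rfl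
  rw [← measureReal_sdiff]
  · unfold Qd
    congr 1
    ext ω
    simp
  · intro ω hω
    exact lt_trans (S.strictMono ω k.lt_succ_self) hω
  · exact htm (k + 1) measurableSet_Iio

/-- The occupation probabilities solve the forward equation. -/
lemma Qd_flow {c : ℕ → ℝ → ℝ} {e : ℕ → Ω → ℝ} (S : Setup μ lo up H (fun k _ => c k) e) (k : ℕ) {t : ℝ}
    (ht : 0 < t) :
    Qd μ c e k t = (if k = 0 then 1 else 0) + ∫ s in Ioc 0 t,
      ((if k = 0 then 0 else c (k - 1) s * Qd μ c e (k - 1) s) - c k s * Qd μ c e k s) := by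
  obtain ⟨ω0⟩ : Nonempty Ω := nonempty_of_isProbabilityMeasure μ
  have hr : ∀ k, Rate lo up (c k) := fun k => S.rate k ω0
  have hintg : ∀ k, IntegrableOn (fun s => c k s * Qd μ c e k s) (Ioc 0 t) := by
    intro k
    refine Integrable.mul_bdd (c := 1) ((hr k).intOn 0 t) (Qd_int S k t).2.aestronglyMeasurable
      (ae_of_all _ fun s => ?_)
    rw [Real.norm_eq_abs, Qd, abs_of_nonneg (measureReal_nonneg)]
    exact measureReal_le_one
  rw [Qd_sub S, (Qd_int S k t).1]
  rcases k with _ | k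
  · simp [ht, integral_neg]
    ring
  · simp only [Nat.add_eq_zero_iff, one_ne_zero, and_false, if_false, Nat.add_sub_cancel, zero_add]
    rw [integral_sub (hintg k) (hintg (k + 1)), (Qd_int S k t).1]

variable {c : ℕ → Ω → ℝ → ℝ} {e : ℕ → Ω → ℝ}

/-- Frozen occupation probabilities. -/
def qq (μ : Measure Ω) (c : ℕ → Ω → ℝ → ℝ) (e : ℕ → Ω → ℝ) (p : ℝ × (Ω × ℕ)) : ℝ :=
  Qd μ (fun k => c k p.2.1) e p.2.2 p.1

lemma Setup.frozen (S : Setup μ lo up H c e) (ω : Ω) : Setup μ lo up H (fun k _ => c k ω) e where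
  Hle := S.Hle
  Hmono := S.Hmono
  rate k _ := S.rate k ω
  epos := S.epos
  cmeas k := by
    let _ : MeasurableSpace Ω := H k
    exact (S.rate k ω).meas.comp measurable_snd
  emeas := S.emeas
  indep := S.indep
  eexp := S.eexp

lemma Setup.qq_meas (S : Setup μ lo up H c e) : Measurable (qq μ c e) := by
  have h : ∀ k, Measurable (fun p : ℝ × Ω => qq μ c e (p.1, (p.2, k))) := by
    intro k
    have htm : ∀ k, Measurable (fun p : (ℝ × Ω) × Ω =>
        jt (fun k => c k p.1.2) (fun j => e j p.2) k) := by
      intro k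
      refine meas_jt (c := fun k (p : (ℝ × Ω) × Ω) => c k p.1.2) (e := fun k (p : (ℝ × Ω) × Ω) => e k p.2)
        (fun k z => S.rate k _) (fun k z => S.epos k _) (fun k => ?_)
        (fun k => (S.eexp k).1.comp measurable_snd) k
      have h0 : Measurable (fun p : Ω × ℝ => c k p.1 p.2) :=
        (S.cmeas k).mono (sup_le_sup (MeasurableSpace.comap_mono (S.Hle k)) le_rfl) le_rfl
      exact h0.comp (by fun_prop : Measurable fun p : ((ℝ × Ω) × Ω) × ℝ => (p.1.1.2, p.2))
    have hset : MeasurableSet {p : (ℝ × Ω) × Ω | jt (fun k => c k p.1.2) (fun j => e j p.2) k < p.1.1 ∧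
        p.1.1 ≤ jt (fun k => c k p.1.2) (fun j => e j p.2) (k + 1)} :=
      (measurableSet_lt (htm k) (by fun_prop)).inter (measurableSet_le (by fun_prop) (htm (k + 1)))
    exact (measurable_measure_prodMk_left hset).ennreal_toReal
  have h2 : Measurable (fun p : (ℝ × Ω) × ℕ => qq μ c e (p.1.1, (p.1.2, p.2))) :=
    measurable_from_prod_countable_left h
  exact h2.comp (by fun_prop : Measurable fun p : ℝ × (Ω × ℕ) => ((p.1, p.2.1), p.2.2))

lemma qq_nonneg (p : ℝ × (Ω × ℕ)) : 0 ≤ qq μ c e p := measureReal_nonneg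

lemma Setup.qq_sum (S : Setup μ lo up H c e) (s : ℝ) (ω : Ω) :
    ∑' k, ENNReal.ofReal (qq μ c e (s, (ω, k))) ≤ 1 := by
  have S' := S.frozen ω
  have htm : ∀ k, Measurable (fun ω' => jt (fun k => c k ω) (fun j => e j ω') k) := fun k =>
    (S'.tau_meas k).mono (S'.Hle k) le_rfl
  have h1 : ∀ k, ENNReal.ofReal (qq μ c e (s, (ω, k))) =
      μ {ω' | jt (fun k => c k ω) (fun j => e j ω') k < s ∧ s ≤ jt (fun k => c k ω) (fun j => e j ω') (k + 1)} :=
    fun k => ENNReal.ofReal_toReal (measure_ne_top _ _)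
  simp_rw [h1]
  rw [← measure_iUnion]
  · exact prob_le_one
  · intro i j hij
    rw [Function.onFun, Set.disjoint_left]
    rintro ω' ⟨h2, h3⟩ ⟨h4, h5⟩
    have hm := (S'.strictMono ω').monotone
    rcases lt_or_gt_of_ne hij with h | h
    · exact absurd (h3.trans (hm h)) (not_le.2 h4)
    · exact absurd (h5.trans (hm h)) (not_le.2 h2)
  · intro k
    exact (measurableSet_lt (htm k) measurable_const).inter (measurableSet_le measurable_const (htm (k + 1)))

lemma Setup.qq_int (S : Setup μ lo up H c e) {C : ℝ} (hC : 0 < C) :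
    Integrable (qq μ c e) ((wexp C).prod (kap μ)) := by
  refine ⟨S.qq_meas.aestronglyMeasurable, ?_⟩
  unfold HasFiniteIntegral
  rw [lintegral_prod _ S.qq_meas.enorm.aemeasurable]
  have h1 : ∀ s, ∫⁻ y, ‖qq μ c e (s, y)‖ₑ ∂(kap μ) ≤ 1 := by
    intro s
    unfold kap
    have hm : Measurable (fun y : Ω × ℕ => ‖qq μ c e (s, y)‖ₑ) :=
      S.qq_meas.enorm.comp measurable_prodMk_left
    rw [lintegral_prod _ hm.aemeasurable]
    calc _ ≤ ∫⁻ _, 1 ∂μ := by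
          refine lintegral_mono fun ω => ?_
          rw [lintegral_count]
          simp_rw [Real.enorm_of_nonneg (qq_nonneg _)]
          exact S.qq_sum s ω
      _ = 1 := by simp
  refine (lintegral_mono h1).trans_lt ?_
  simpa using wexp_univ hC

lemma wexp_pos_ae (C : ℝ) : ∀ᵐ t ∂(wexp C), 0 < t := by
  unfold wexp
  exact withDensity_absolutelyContinuous _ _ (ae_restrict_mem measurableSet_Ioi)

lemma Setup.qq_flow (S : Setup μ lo up H c e) (C : ℝ) : ∀ᵐ p ∂((wexp C).prod (kap μ)),
    qq μ c e p = ini p + flow (fun p => c p.2.2 p.2.1 p.1 * qq μ c e p) p := by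
  have := Measure.quasiMeasurePreserving_fst (μ := wexp C) (ν := kap μ) |>.ae (wexp_pos_ae C)
  filter_upwards [this] with p hp
  exact Qd_flow (S.frozen p.2.1) p.2.2 hp

lemma Setup.occ {Ω : Type*} {𝒞 m0 : MeasurableSpace Ω} {μ : Measure Ω} [IsProbabilityMeasure μ]
    {lo up : ℝ} {H : ℕ → MeasurableSpace Ω} {c : ℕ → Ω → ℝ → ℝ} {e : ℕ → Ω → ℝ}
    (S : Setup μ lo up H c e) (h𝒞 : 𝒞 ≤ m0) {E : ℕ → Ω → ℝ}
    (hE : ∀ k ω, e k ω = pe (E k ω)) (hEm : ∀ k, Measurable (E k))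
    (hind : Indep 𝒞 (MeasurableSpace.comap (fun ω k => E k ω) inferInstance) μ)
    (hcm : ∀ k, Measurable[𝒞.prod inferInstance] (fun p : Ω × ℝ => c k p.1 p.2))
    {Z : Ω → ℝ≥0∞} (hZ : Measurable[𝒞] Z) (k : ℕ) (s : ℝ) :
    ∫⁻ ω, (if tau c e k ω < s ∧ s ≤ tau c e (k + 1) ω then Z ω else 0) ∂μ =
      ∫⁻ ω, Z ω * ENNReal.ofReal (qq μ c e (s, (ω, k))) ∂μ := by
  have heq : e = fun k ω => pe (E k ω) := by funext k ω; exact hE k ω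
  have hEm' : Measurable (fun ω k => E k ω) := measurable_pi_lambda _ hEm
  have key := indep_lintegral' h𝒞 hEm' hind (f := fun p : Ω × (ℕ → ℝ) =>
    if jt (fun k => c k p.1) (fun j => pe (p.2 j)) k < s ∧ s ≤ jt (fun k => c k p.1) (fun j => pe (p.2 j)) (k + 1)
      then Z p.1 else 0) (by
    let _ : MeasurableSpace Ω := 𝒞
    have htm : ∀ k, Measurable (fun p : Ω × (ℕ → ℝ) =>
        jt (fun k => c k p.1) (fun j => pe (p.2 j)) k) := by
      intro k
      refine meas_jt (c := fun k (p : Ω × (ℕ → ℝ)) => c k p.1) (e := fun k (p : Ω × (ℕ → ℝ)) => pe (p.2 k))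
        (fun k z => S.rate k _) (fun k z => pe_pos _) (fun k => ?_)
        (fun k => pe_meas.comp ((measurable_pi_apply k).comp measurable_snd)) k
      exact (hcm k).comp (by fun_prop : Measurable fun p : (Ω × (ℕ → ℝ)) × ℝ => (p.1.1, p.2))
    exact Measurable.ite ((measurableSet_lt (htm k) measurable_const).inter
      (measurableSet_le measurable_const (htm (k + 1)))) (hZ.comp measurable_fst) measurable_const)
  subst heq
  refine Eq.trans key ?_
  refine lintegral_congr fun ω => ?_
  have S' := S.frozen ω
  have htm : ∀ k, Measurable (fun ω' => jt (fun k => c k ω) (fun j => pe (E j ω')) k) := fun k =>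
    (S'.tau_meas k).mono (S'.Hle k) le_rfl
  have hs : MeasurableSet {ω' | jt (fun k => c k ω) (fun j => pe (E j ω')) k < s ∧
      s ≤ jt (fun k => c k ω) (fun j => pe (E j ω')) (k + 1)} :=
    (measurableSet_lt (htm k) measurable_const).inter (measurableSet_le measurable_const (htm (k + 1)))
  have h1 : ENNReal.ofReal (qq μ (c) (fun k ω => pe (E k ω)) (s, (ω, k))) = μ {ω' | jt (fun k => c k ω) (fun j => pe (E j ω')) k < s ∧
      s ≤ jt (fun k => c k ω) (fun j => pe (E j ω')) (k + 1)} :=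
    ENNReal.ofReal_toReal (measure_ne_top _ _)
  rw [h1, ← setLIntegral_const, ← lintegral_indicator hs]
  refine lintegral_congr fun ω' => ?_
  simp only [indicator, mem_ofPred_eq]

end ident

section ident2

lemma wexp_ae {C : ℝ} {P : ℝ → Prop} (h : ∀ᵐ s ∂(wexp C), P s) :
    ∀ᵐ s ∂(volume.restrict (Ioi (0:ℝ))), P s := by
  unfold wexp at h
  rw [ae_withDensity_iff (by fun_prop)] at h
  filter_upwards [h] with s hs
  exact hs (by simp [Real.exp_pos])

lemma Setup.occX {Ω : Type*} {𝒞 m0 : MeasurableSpace Ω} {μ : Measure Ω} [IsProbabilityMeasure μ]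
    {lo up : ℝ} {H : ℕ → MeasurableSpace Ω} {c : ℕ → Ω → ℝ → ℝ} {e : ℕ → Ω → ℝ}
    (S : Setup μ lo up H c e) (h𝒞 : 𝒞 ≤ m0) {E : ℕ → Ω → ℝ}
    (hE : ∀ k ω, e k ω = pe (E k ω)) (hEm : ∀ k, Measurable (E k))
    (hind : Indep 𝒞 (MeasurableSpace.comap (fun ω k => E k ω) inferInstance) μ)
    (hcm : ∀ k, Measurable[𝒞.prod inferInstance] (fun p : Ω × ℝ => c k p.1 p.2))
    {Sk : ℕ → Ω → ℝ} (hSk : ∀ k, Measurable[𝒞] (Sk k))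
    {Z : Ω → ℝ≥0∞} (hZ : Measurable[𝒞] Z) {s : ℝ} {Xs : Ω → ℝ}
    (hX : ∀ᵐ ω ∂μ, ∃ k, (tau c e k ω < s ∧ s ≤ tau c e (k + 1) ω) ∧ Xs ω = Sk k ω) (x : ℝ) :
    ∫⁻ ω, (if Xs ω = x then Z ω else 0) ∂μ =
      ∫⁻ y, (if Sk y.2 y.1 = x then Z y.1 * ENNReal.ofReal (qq μ c e (s, y)) else 0) ∂(kap μ) := by
  have hZk : ∀ k, Measurable[𝒞] (fun ω => if Sk k ω = x then Z ω else 0) := by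
    intro k
    let _ : MeasurableSpace Ω := 𝒞
    exact Measurable.ite (hSk k (measurableSet_singleton x)) hZ measurable_const
  have hZk0 : ∀ k, Measurable (fun ω => if Sk k ω = x then Z ω else 0) := fun k =>
    (hZk k).mono h𝒞 le_rfl
  have htm : ∀ k, Measurable (tau c e k) := fun k => (S.tau_meas k).mono (S.Hle k) le_rfl
  have hset : ∀ k, MeasurableSet {ω | tau c e k ω < s ∧ s ≤ tau c e (k + 1) ω} := fun k =>
    (measurableSet_lt (htm k) measurable_const).inter (measurableSet_le measurable_const (htm (k + 1)))
  have h1 : ∫⁻ ω, (if Xs ω = x then Z ω else 0) ∂μ =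
      ∫⁻ ω, ∑' k, (if tau c e k ω < s ∧ s ≤ tau c e (k + 1) ω then
        (if Sk k ω = x then Z ω else 0) else 0) ∂μ := by
    refine lintegral_congr_ae ?_
    filter_upwards [hX] with ω hω
    obtain ⟨k, hk, hk2⟩ := hω
    rw [tsum_eq_single k, if_pos hk, hk2]
    intro j hj
    rw [if_neg]
    rintro ⟨h4, h5⟩
    have hm := (S.strictMono ω).monotone
    rcases lt_or_gt_of_ne hj with h | h
    · exact absurd (h5.trans (hm h)) (not_le.2 hk.1)
    · exact absurd (hk.2.trans (hm h)) (not_le.2 h4)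
  rw [h1, lintegral_tsum (fun k => (Measurable.ite (hset k) (hZk0 k) measurable_const).aemeasurable)]
  have hqm : Measurable (fun y : Ω × ℕ => qq μ c e (s, y)) := S.qq_meas.comp measurable_prodMk_left
  have hym : Measurable (fun y : Ω × ℕ => if Sk y.2 y.1 = x then Z y.1 * ENNReal.ofReal (qq μ c e (s, y)) else 0) := by
    refine Measurable.ite ?_ (((hZ.mono h𝒞 le_rfl).comp measurable_fst).mul hqm.ennreal_ofReal) measurable_const
    have : Measurable (fun y : Ω × ℕ => Sk y.2 y.1) :=
      measurable_from_prod_countable_left fun k => (hSk k).mono h𝒞 le_rfl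
    exact this (measurableSet_singleton x)
  unfold kap
  rw [lintegral_prod _ hym.aemeasurable]
  simp_rw [lintegral_count]
  rw [lintegral_tsum]
  · congr 1
    funext k
    rw [S.occ h𝒞 hE hEm hind hcm (hZk k) k s]
    refine lintegral_congr fun ω => ?_
    split_ifs <;> simp
  · intro k
    exact (hym.comp (measurable_prodMk_right (y := k))).aemeasurable

theorem Dat.ident {Ω : Type*} {𝒞 m0 : MeasurableSpace Ω} {μ : Measure Ω} [IsProbabilityMeasure μ]
    {L U : ℝ} {A : Set ℝ} {Sk : ℕ → Ω → ℝ} {et : ℝ → Ω → ℝ} {lt : ℝ → ℝ → ℝ}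
    (d : Dat μ L U A Sk et lt)
    {f : ℝ × (Ω × ℕ) → ℝ} (hf : Measurable f) (hfi : Integrable f ((wexp (Cst L U)).prod (kap μ)))
    (hff : f =ᵐ[(wexp (Cst L U)).prod (kap μ)] KK μ L U Sk et lt f)
    {lo up : ℝ} {H : ℕ → MeasurableSpace Ω} {e : ℕ → Ω → ℝ} {c : ℕ → Ω → ℝ → ℝ}
    (hc : c = fun k ω s => rt Sk et lt (gg μ L U Sk et f) (s, (ω, k)))
    (S : Setup μ lo up H c e) (h𝒞 : 𝒞 ≤ m0) {E : ℕ → Ω → ℝ}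
    (hE : ∀ k ω, e k ω = pe (E k ω)) (hEm : ∀ k, Measurable (E k))
    (hind : Indep 𝒞 (MeasurableSpace.comap (fun ω k => E k ω) inferInstance) μ)
    (hcm : ∀ k, Measurable[𝒞.prod inferInstance] (fun p : Ω × ℝ => c k p.1 p.2))
    (hSk : ∀ k, Measurable[𝒞] (Sk k)) (het : ∀ s, Measurable[𝒞] (et s))
    {X : ℝ → Ω → ℝ}
    (hX : ∀ s, 0 < s → ∀ᵐ ω ∂μ, ∃ k, (tau c e k ω < s ∧ s ≤ tau c e (k + 1) ω) ∧ X s ω = Sk k ω) :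
    ∀ᵐ s ∂(volume.restrict (Ioi (0:ℝ))), ∀ x,
      gg μ L U Sk et f s x * (∫⁻ ω, (if X s ω = x then 1 else 0) ∂μ).toReal =
        (∫⁻ ω, (if X s ω = x then ENNReal.ofReal (et s ω) else 0) ∂μ).toReal := by
  have hq := S.qq_flow (Cst L U)
  have hfq := d.unique hf S.qq_meas hfi (S.qq_int d.Cst_pos) hff (fun p => qq_nonneg p) (by
    filter_upwards [hq] with p hp
    rw [hp]
    simp only [hc, Prod.mk.eta])
  have h1 := wexp_ae (Measure.ae_ae_of_ae_prod hfq)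
  have h2 := wexp_ae hfi.prod_right_ae
  filter_upwards [h1, h2, ae_restrict_mem measurableSet_Ioi] with s hs1 hs2 hs0 x
  have hqm : Measurable (fun y : Ω × ℕ => qq μ c e (s, y)) := S.qq_meas.comp measurable_prodMk_left
  have hSx : MeasurableSet {y : Ω × ℕ | Sk y.2 y.1 = x} := d.SYm (measurableSet_singleton x)
  have hetm : Measurable (fun y : Ω × ℕ => et s y.1) := d.etm.comp (by fun_prop : Measurable fun y : Ω × ℕ => (s, y.1))
  have ha : aa μ Sk f s x = (∫⁻ ω, (if X s ω = x then 1 else 0) ∂μ).toReal := by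
    rw [S.occX h𝒞 hE hEm hind hcm hSk (Z := fun _ => 1) measurable_const (hX s hs0) x]
    unfold aa
    rw [integral_eq_lintegral_of_nonneg_ae (ae_of_all _ fun y => by simp only [Pi.zero_apply]; split_ifs <;> simp)]
    · congr 1
      refine lintegral_congr_ae ?_
      filter_upwards [hs1] with y hy
      have hy' : f (s, y) = qq μ c e (s, y) := hy
      rw [hy', max_eq_left (qq_nonneg _)]
      split_ifs <;> simp
    · exact (Measurable.ite hSx ((hf.comp measurable_prodMk_left).max measurable_const) measurable_const).aestronglyMeasurable
  have hb : bb μ Sk et f s x = (∫⁻ ω, (if X s ω = x then ENNReal.ofReal (et s ω) else 0) ∂μ).toReal := by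
    rw [S.occX h𝒞 hE hEm hind hcm hSk (Z := fun ω => ENNReal.ofReal (et s ω))
      (by let _ : MeasurableSpace Ω := 𝒞
          exact (het s).ennreal_ofReal) (hX s hs0) x]
    unfold bb
    have het0 : ∀ ω, 0 ≤ et s ω := fun ω => d.hL.le.trans (d.etL s ω)
    rw [integral_eq_lintegral_of_nonneg_ae (ae_of_all _ fun y => by
      simp only [Pi.zero_apply]; split_ifs
      · exact mul_nonneg (het0 _) (le_max_right _ _)
      · simp)]
    · congr 1
      refine lintegral_congr_ae ?_
      filter_upwards [hs1] with y hy
      have hy' : f (s, y) = qq μ c e (s, y) := hy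
      rw [hy', max_eq_left (qq_nonneg _)]
      split_ifs
      · rw [ENNReal.ofReal_mul (het0 _)]
      · simp
    · exact (Measurable.ite hSx (hetm.mul ((hf.comp measurable_prodMk_left).max measurable_const)) measurable_const).aestronglyMeasurable
  rw [← ha, ← hb]
  exact d.gab hs2 x

end ident2

section paths

lemma exists_slot {τ : ℕ → ℝ} (h0 : τ 0 = 0) (ht : Tendsto τ atTop atTop) {s : ℝ} (hs : 0 < s) :
    ∃ k, τ k < s ∧ s ≤ τ (k + 1) := by
  classical
  have hex : ∃ k, s ≤ τ k := (ht.eventually_ge_atTop s).exists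
  have h1 := Nat.find_spec hex
  rcases hn : Nat.find hex with _ | k
  · rw [hn, h0] at h1; exact absurd hs (not_lt.2 h1)
  · rw [hn] at h1
    exact ⟨k, not_le.1 (Nat.find_min hex (by omega)), h1⟩

lemma exists_slot' {τ : ℕ → ℝ} (h0 : τ 0 = 0) (ht : Tendsto τ atTop atTop) {s : ℝ} (hs : 0 ≤ s) :
    ∃ k, τ k ≤ s ∧ s < τ (k + 1) := by
  classical
  have hex : ∃ k, s < τ k := (ht.eventually_gt_atTop s).exists
  have h1 := Nat.find_spec hex
  rcases hn : Nat.find hex with _ | k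
  · rw [hn, h0] at h1; exact absurd hs (not_le.2 h1)
  · rw [hn] at h1
    exact ⟨k, not_lt.1 (Nat.find_min hex (by omega)), h1⟩

lemma jumpXminus_eq {τ J : ℕ → Ω → ℝ} {ω : Ω} (hm : Monotone fun k => τ k ω) {s : ℝ} {k : ℕ}
    (h1 : τ k ω < s) (h2 : s ≤ τ (k + 1) ω) :
    jumpXminus τ J s ω = ∑ j ∈ Finset.range k, J j ω := by
  unfold jumpXminus
  rw [tsum_eq_sum (s := Finset.range k)]
  · refine Finset.sum_congr rfl fun j hj => if_pos ?_
    exact (hm (Finset.mem_range.1 hj)).trans_lt h1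
  · intro j hj
    have hj : k ≤ j := by simpa using hj
    exact if_neg (not_lt.2 (h2.trans (hm (by omega))))

lemma jumpX_eq {τ J : ℕ → Ω → ℝ} {ω : Ω} (hm : Monotone fun k => τ k ω) {s : ℝ} {k : ℕ}
    (h2 : s < τ (k + 1) ω) :
    jumpX τ J s ω = ∑ j ∈ Finset.range k, if τ (j + 1) ω ≤ s then J j ω else 0 := by
  unfold jumpX
  rw [tsum_eq_sum (s := Finset.range k)]
  intro j hj
  have hj : k ≤ j := by simpa using hj
  exact if_neg (not_le.2 (h2.trans_le (hm (by omega))))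

lemma jumpX_eq' {τ J : ℕ → Ω → ℝ} {ω : Ω} (hm : Monotone fun k => τ k ω) {s : ℝ} {k : ℕ}
    (h1 : τ k ω ≤ s) (h2 : s < τ (k + 1) ω) :
    jumpX τ J s ω = ∑ j ∈ Finset.range k, J j ω := by
  rw [jumpX_eq hm h2]
  refine Finset.sum_congr rfl fun j hj => if_pos ?_
  exact (hm (Finset.mem_range.1 hj)).trans h1

lemma sum_mem_FS {A : Set ℝ} {J : ℕ → ℝ} (h : ∀ k, J k ∈ A) (k : ℕ) :
    ∑ j ∈ Finset.range k, J j ∈ FS A :=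
  ⟨k, fun i => J i, fun i => h i, Finset.sum_range _⟩

lemma FS_countable {A : Set ℝ} (hA : A.Countable) : (FS A).Countable := by
  have : FS A ⊆ ⋃ k : ℕ, (fun a : Fin k → A => ∑ i, (a i : ℝ)) '' univ := by
    rintro x ⟨k, a, ha, rfl⟩
    exact mem_iUnion.2 ⟨k, fun i => ⟨a i, ha i⟩, mem_univ _, rfl⟩
  have := hA.to_subtype
  exact (countable_iUnion fun k => (countable_univ.image _)).mono ‹_›

lemma atomSet_countable {ν : Measure ℝ} (h : IsDiscrete ν) : (atomSet ν).Countable := by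
  obtain ⟨S, hS, h0⟩ := h
  refine hS.mono fun x hx => ?_
  by_contra hxS
  exact hx (measure_mono_null (singleton_subset_iff.2 hxS) h0)

lemma atomSet_ae {ν : Measure ℝ} (h : IsDiscrete ν) : ∀ᵐ x ∂ν, x ∈ atomSet ν := by
  obtain ⟨S, hS, h0⟩ := h
  have h1 : ν (S \ atomSet ν) = 0 := by
    rw [← biUnion_of_singleton (S \ atomSet ν)]
    refine (measure_biUnion_null_iff (hS.mono sdiff_subset)).2 fun x hx => ?_
    by_contra hne
    exact hx.2 hne
  refine measure_mono_null ?_ (measure_union_null h0 h1)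
  intro x hx
  by_cases hxS : x ∈ S
  · exact Or.inr ⟨hxS, hx⟩
  · exact Or.inl hxS

end paths

section meas

/-- Joint measurability of the clamped process. -/
lemma et_meas {F : ℝ → MeasurableSpace Ω} {η : ℝ → Ω → ℝ} (h : ProgMeas F η) (L U : ℝ) :
    Measurable[MeasurableSpace.prod inferInstance (Finfty F)]
      (fun p : ℝ × Ω => max L (min U (η (max p.1 0) p.2))) := by
  let _ : MeasurableSpace Ω := Finfty F
  refine measurable_const.max (measurable_const.min ?_)
  have hn : ∀ n : ℕ, Measurable (fun p : ℝ × Ω => η (projIcc (0:ℝ) n n.cast_nonneg p.1) p.2) := by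
    intro n
    have h1 := h n n.cast_nonneg
    have hle : F n ≤ Finfty F := le_iSup₂_of_le (n:ℝ) (mem_Ici.2 n.cast_nonneg) le_rfl
    have h2 : Measurable (fun p : Set.Icc (0:ℝ) n × Ω => η p.1 p.2) :=
      h1.mono (sup_le_sup le_rfl (MeasurableSpace.comap_mono hle)) le_rfl
    exact h2.comp (((continuous_projIcc (h := n.cast_nonneg)).measurable.comp measurable_fst).prodMk measurable_snd)
  refine measurable_of_tendsto_metrizable hn (tendsto_pi_nhds.2 fun p => ?_)
  refine tendsto_const_nhds.congr' ?_
  obtain ⟨N, hN⟩ := exists_nat_ge p.1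
  filter_upwards [eventually_ge_atTop N] with n hnN
  have : p.1 ≤ n := hN.trans (by exact_mod_cast hnN)
  simp [projIcc, max_comm, min_eq_right this]

/-- Joint measurability of the clamped intensity function. -/
lemma lt_meas {A : Set ℝ} (hA : A.Countable) {lam : ℝ → ℝ → ℝ} (h : ∀ x ∈ A, Measurable fun t => lam t x)
    (L U : ℝ) : Measurable (fun p : ℝ × ℝ => open Classical in if p.2 ∈ A then max L (min U (lam p.1 p.2)) else L) := by
  classical
  have := hA.to_subtype
  have hAm : MeasurableSet {p : ℝ × ℝ | p.2 ∈ A} := measurable_snd hA.measurableSet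
  refine measurable_of_restrict_of_restrict_compl hAm ?_ ?_
  · have h1 : Measurable (fun p : ℝ × A => max L (min U (lam p.1 p.2))) :=
      measurable_from_prod_countable_left fun x =>
        measurable_const.max (measurable_const.min (h x x.2))
    have h2 : Measurable (fun p : {p : ℝ × ℝ | p.2 ∈ A} => (p.1.1, (⟨p.1.2, p.2⟩ : A))) :=
      (measurable_fst.comp measurable_subtype_coe).prodMk
        (Measurable.subtype_mk (measurable_snd.comp measurable_subtype_coe))
    convert h1.comp h2 using 1
    funext p
    have : p.1.2 ∈ A := p.2
    simp [this]
  · convert measurable_const (a := L) using 1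
    funext p
    have : p.1.2 ∉ A := p.2
    simp [this]

end meas

section ce

lemma condExp_fibre {m0 : MeasurableSpace Ω} {μ : Measure Ω} [IsProbabilityMeasure μ] {X Y : Ω → ℝ}
    (hX : Measurable X) (hY : Integrable Y μ) {x g : ℝ} (hx : μ {ω | X ω = x} ≠ 0)
    (hg : g * μ.real {ω | X ω = x} = ∫ ω in {ω | X ω = x}, Y ω ∂μ) {ω : Ω} (hω : X ω = x) :
    (μ[Y | MeasurableSpace.comap X inferInstance]) ω = g := by
  have hm : MeasurableSpace.comap X inferInstance ≤ m0 := hX.comap_le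
  obtain ⟨φ, hφ, hφ2⟩ := (stronglyMeasurable_condExp (μ := μ) (f := Y)
    (m := MeasurableSpace.comap X inferInstance)).measurable.exists_eq_measurable_comp
  have hset : MeasurableSet[MeasurableSpace.comap X inferInstance] {ω | X ω = x} :=
    ⟨{x}, measurableSet_singleton x, rfl⟩
  have h1 := setIntegral_condExp hm hY hset
  have h2 : ∫ ω in {ω | X ω = x}, (μ[Y | MeasurableSpace.comap X inferInstance]) ω ∂μ =
      ∫ ω in {ω | X ω = x}, φ x ∂μ := by
    refine setIntegral_congr_fun (hm _ hset) fun ω' hω' => ?_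
    have : X ω' = x := hω'
    rw [hφ2, Function.comp, this]
  rw [h2, setIntegral_const, ← hg, smul_eq_mul, mul_comm] at h1
  have h3 : μ.real {ω | X ω = x} ≠ 0 := by
    rw [measureReal_def]; exact (ENNReal.toReal_pos hx (measure_ne_top _ _)).ne'
  rw [hφ2, Function.comp, hω]
  exact mul_right_cancel₀ h3 h1

end ce

section indepsec

/-- The independent family. -/
@[reducible] def mm (F : ℝ → MeasurableSpace Ω) (E J : ℕ → Ω → ℝ) (i : ℕ ⊕ ℕ ⊕ Unit) : MeasurableSpace Ω :=
  Sum.elim (fun k => MeasurableSpace.comap (E k) inferInstance)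
    (Sum.elim (fun k => MeasurableSpace.comap (J k) inferInstance) (fun _ => Finfty F)) i

/-- Indices known before the `k`-th jump. -/
def Sx (k : ℕ) : Set (ℕ ⊕ ℕ ⊕ Unit) :=
  {i | Sum.elim (fun j => j < k) (Sum.elim (fun j => j < k) (fun _ => True)) i}

/-- Information before the `k`-th jump. -/
@[reducible] def HH (F : ℝ → MeasurableSpace Ω) (E J : ℕ → Ω → ℝ) (k : ℕ) : MeasurableSpace Ω :=
  ⨆ i ∈ Sx k, mm F E J i

/-- Information without the clocks. -/
@[reducible] def CC (F : ℝ → MeasurableSpace Ω) (E J : ℕ → Ω → ℝ) : MeasurableSpace Ω :=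
  ⨆ i ∈ range Sum.inr, mm F E J i

variable {F : ℝ → MeasurableSpace Ω} {E J : ℕ → Ω → ℝ}

lemma mm_le_of {S : Set (ℕ ⊕ ℕ ⊕ Unit)} {i : ℕ ⊕ ℕ ⊕ Unit} (hi : i ∈ S) :
    mm F E J i ≤ ⨆ i ∈ S, mm F E J i := le_biSup (mm F E J) hi

lemma Finfty_le_HH (k : ℕ) : Finfty F ≤ HH F E J k :=
  mm_le_of (i := Sum.inr (Sum.inr ())) (by simp [Sx])

lemma Finfty_le_CC : Finfty F ≤ CC F E J :=
  mm_le_of (i := Sum.inr (Sum.inr ())) ⟨_, rfl⟩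

lemma HH_mono : Monotone (HH F E J) := by
  intro k l hkl
  refine biSup_mono fun i hi => ?_
  rcases i with j | j | j
  · exact lt_of_lt_of_le (show j < k from hi) hkl
  · exact lt_of_lt_of_le (show j < k from hi) hkl
  · trivial

lemma E_HH {j k : ℕ} (h : j < k) : Measurable[HH F E J k] (E j) :=
  (comap_measurable (E j)).mono (mm_le_of (F := F) (E := E) (J := J) (i := Sum.inl j) (S := Sx k) h) le_rfl

lemma J_HH {j k : ℕ} (h : j < k) : Measurable[HH F E J k] (J j) :=
  (comap_measurable (J j)).mono (mm_le_of (F := F) (E := E) (J := J) (i := Sum.inr (Sum.inl j)) (S := Sx k) h) le_rfl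

lemma J_CC (j : ℕ) : Measurable[CC F E J] (J j) :=
  (comap_measurable (J j)).mono (mm_le_of (F := F) (E := E) (J := J) (i := Sum.inr (Sum.inl j)) ⟨_, rfl⟩) le_rfl

variable {m0 : MeasurableSpace Ω} {μ : Measure Ω} [IsProbabilityMeasure μ]

lemma mm_le (hF : ∀ t, F t ≤ m0) (hE : ∀ k, Measurable (E k)) (hJ : ∀ k, Measurable (J k)) (i) :
    mm F E J i ≤ m0 := by
  rcases i with j | j | j
  · exact (hE j).comap_le
  · exact (hJ j).comap_le
  · exact iSup₂_le fun t _ => hF t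

lemma sup_le_m0 (hF : ∀ t, F t ≤ m0) (hE : ∀ k, Measurable (E k)) (hJ : ∀ k, Measurable (J k))
    (S : Set (ℕ ⊕ ℕ ⊕ Unit)) : ⨆ i ∈ S, mm F E J i ≤ m0 :=
  iSup₂_le fun i _ => mm_le hF hE hJ i

lemma comap_pe (k : ℕ) : MeasurableSpace.comap (fun ω => pe (E k ω)) inferInstance ≤
    mm F E J (Sum.inl k) := by
  have : Measurable[MeasurableSpace.comap (E k) inferInstance] (fun ω => pe (E k ω)) :=
    pe_meas.comp (comap_measurable (E k))
  exact this.comap_le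

lemma HH_indep (hF : ∀ t, F t ≤ m0) (hE : ∀ k, Measurable (E k)) (hJ : ∀ k, Measurable (J k))
    (hi : iIndep (mm F E J) μ) (k : ℕ) :
    Indep (HH F E J k) (MeasurableSpace.comap (fun ω => pe (E k ω)) inferInstance) μ := by
  have h := indep_iSup_of_disjoint (mm_le hF hE hJ) hi (S := Sx k) (T := {Sum.inl k}) (by
    rw [disjoint_singleton_right]; simp [Sx])
  exact indep_of_indep_of_le_right h ((comap_pe k).trans (mm_le_of rfl))

lemma J_indep (hF : ∀ t, F t ≤ m0) (hE : ∀ k, Measurable (E k)) (hJ : ∀ k, Measurable (J k))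
    (hi : iIndep (mm F E J) μ) (k : ℕ) :
    Indep (MeasurableSpace.comap (J k) inferInstance)
      (HH F E J k ⊔ MeasurableSpace.comap (fun ω => pe (E k ω)) inferInstance) μ := by
  have h := indep_iSup_of_disjoint (mm_le hF hE hJ) hi (S := {Sum.inr (Sum.inl k)})
    (T := Sx k ∪ {Sum.inl k}) (by
    rw [disjoint_singleton_left]; simp [Sx])
  refine indep_of_indep_of_le_right (indep_of_indep_of_le_left h
    (mm_le_of (F := F) (E := E) (J := J) (i := Sum.inr (Sum.inl k)) rfl)) (sup_le ?_ ?_)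
  · exact biSup_mono fun i hi => Or.inl hi
  · exact (comap_pe k).trans (mm_le_of (Or.inr rfl))

lemma CC_indep (hF : ∀ t, F t ≤ m0) (hE : ∀ k, Measurable (E k)) (hJ : ∀ k, Measurable (J k))
    (hi : iIndep (mm F E J) μ) :
    Indep (CC F E J) (MeasurableSpace.comap (fun ω k => E k ω) inferInstance) μ := by
  have h := indep_iSup_of_disjoint (mm_le hF hE hJ) hi (S := range Sum.inr)
    (T := range Sum.inl) (by
    rw [Set.disjoint_left]; rintro _ ⟨a, rfl⟩ ⟨b, hb⟩; cases hb)
  refine indep_of_indep_of_le_right h ?_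
  have : Measurable[⨆ i ∈ range Sum.inl, mm F E J i] (fun ω k => E k ω) := by
    let _ : MeasurableSpace Ω := ⨆ i ∈ range Sum.inl, mm F E J i
    refine measurable_pi_lambda _ fun k => ?_
    exact (comap_measurable (E k)).mono (mm_le_of (F := F) (E := E) (J := J) (i := Sum.inl k) ⟨k, rfl⟩) le_rfl
  exact this.comap_le

lemma pe_exp {e : Ω → ℝ} (h : IsExpOne μ e) : IsExpOne μ (fun ω => pe (e ω)) := by
  refine ⟨pe_meas.comp h.1, fun x hx => ?_⟩
  rw [← h.2 x hx]
  refine measure_congr ?_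
  filter_upwards [exp_pos_ae h] with ω hω
  refine propext ?_
  change x < pe (e ω) ↔ x < e ω
  simp [pe, hω]

lemma pos_fibre {lo up : ℝ} {ν : Measure ℝ} {H : ℕ → MeasurableSpace Ω} {c : ℕ → Ω → ℝ → ℝ}
    (S : Setup μ lo up H c (fun k ω => pe (E k ω))) (hE : ∀ k, IsExpOne μ (E k))
    (hJ : ∀ k, Measurable (J k)) (hJl : ∀ k, μ.map (J k) = ν)
    (hi : iIndep (mm F E J) μ) {s : ℝ} (hs : 0 < s) {x : ℝ} (hx : x ∈ FS (atomSet ν)) :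
    μ {ω | jumpXminus (tau c (fun k ω => pe (E k ω))) J s ω = x} ≠ 0 := by
  obtain ⟨n, a, ha, rfl⟩ := hx
  have hlo : 0 < lo := by
    obtain ⟨ω⟩ := nonempty_of_isProbabilityMeasure μ
    exact (S.rate 0 ω).lo_pos
  have hup : 0 < up := by
    obtain ⟨ω⟩ := nonempty_of_isProbabilityMeasure μ
    exact (S.rate 0 ω).up_pos
  set δ : ℝ := lo * s / (n + 1) with hδ
  have hδ0 : 0 < δ := by positivity
  let f : ℕ ⊕ ℕ ⊕ Unit → Set Ω := Sum.elim
    (fun k => if k < n then {ω | pe (E k ω) < δ} else {ω | up * s < pe (E k ω)})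
    (Sum.elim (fun k => if h : k < n then {ω | J k ω = a ⟨k, h⟩} else univ) (fun _ => univ))
  let T : Finset (ℕ ⊕ ℕ ⊕ Unit) := (Finset.range (n + 1)).disjSum ((Finset.range n).disjSum ∅)
  have hfm : ∀ i ∈ T, MeasurableSet[mm F E J i] (f i) := by
    intro i _
    rcases i with k | k | k
    · simp only [f, Sum.elim_inl]
      split_ifs
      · exact ⟨{y | pe y < δ}, measurableSet_lt pe_meas measurable_const, rfl⟩
      · exact ⟨{y | up * s < pe y}, measurableSet_lt measurable_const pe_meas, rfl⟩
    · simp only [f, Sum.elim_inr, Sum.elim_inl]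
      split_ifs with h
      · exact ⟨{a ⟨k, h⟩}, measurableSet_singleton _, rfl⟩
      · exact MeasurableSet.univ
    · exact MeasurableSet.univ
  have hpos : μ (⋂ i ∈ T, f i) ≠ 0 := by
    rw [hi.meas_biInter hfm]
    refine Finset.prod_ne_zero_iff.2 fun i _ => ?_
    rcases i with k | k | k
    · simp only [f, Sum.elim_inl]
      split_ifs
      · rw [exp_lt (pe_exp (hE k)) hδ0.le]
        simp [hδ0]
      · rw [(pe_exp (hE k)).2 _ (by positivity)]
        simp [Real.exp_pos]
    · simp only [f, Sum.elim_inr, Sum.elim_inl]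
      split_ifs with h
      · have : μ {ω | J k ω = a ⟨k, h⟩} = ν {a ⟨k, h⟩} := by
          rw [← hJl k, Measure.map_apply (hJ k) (measurableSet_singleton _)]
          rfl
        rw [this]
        exact ha _
      · simp
    · simp [f]
  refine fun h0 => hpos (measure_mono_null ?_ h0)
  intro ω hω
  have hω : ∀ i ∈ T, ω ∈ f i := by simpa only [mem_iInter] using hω
  have h1 : ∀ k < n, pe (E k ω) < δ := by
    intro k hk
    have := hω (Sum.inl k) (by simp [T]; omega)
    simpa [f, hk] using this
  have h2 : up * s < pe (E n ω) := by
    have := hω (Sum.inl n) (by simp [T])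
    simpa [f] using this
  have h3 : ∀ k (hk : k < n), J k ω = a ⟨k, hk⟩ := by
    intro k hk
    have := hω (Sum.inr (Sum.inl k)) (by simp [T, hk])
    simpa [f, hk] using this
  have hr := fun k => S.rate k ω
  have he := fun k => S.epos k ω
  have h4 : ∀ k ≤ n, tau c (fun k ω => pe (E k ω)) k ω ≤ k * (δ / lo) := by
    intro k
    induction k with
    | zero => intro _; simp [tau, jt]
    | succ k ih =>
      intro hk
      have h5 := ih (by omega)
      have h6 : tau c (fun k ω => pe (E k ω)) (k + 1) ω ≤ tau c (fun k ω => pe (E k ω)) k ω + pe (E k ω) / lo :=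
        jt_succ_le hr he k
      have h7 : pe (E k ω) / lo ≤ δ / lo := div_le_div_of_nonneg_right (h1 k (by omega)).le hlo.le
      push_cast
      linarith
  have h5 : tau c (fun k ω => pe (E k ω)) n ω < s := by
    refine (h4 n le_rfl).trans_lt ?_
    have : (n : ℝ) * (δ / lo) = s * (n / (n + 1)) := by rw [hδ]; field_simp
    rw [this]
    have h6 : (n : ℝ) / (n + 1) < 1 := by rw [div_lt_one (by positivity)]; linarith
    nlinarith
  have h6 : s ≤ tau c (fun k ω => pe (E k ω)) (n + 1) ω := by
    by_contra hlt
    have h7 := (jt_succ_lt_iff hr he n s).1 (not_le.1 hlt)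
    have h8 := Lam_le' hr he (k := n) hs.le
    linarith
  change jumpXminus _ J s ω = _
  rw [jumpXminus_eq (S.strictMono ω).monotone h5 h6, Finset.sum_range]
  exact Finset.sum_congr rfl fun i _ => h3 i i.2

end indepsec

section assembly

lemma comp_eq {m0 : MeasurableSpace Ω} {μ : Measure Ω} [IsProbabilityMeasure μ] {lo up : ℝ}
    {H : ℕ → MeasurableSpace Ω} {c : ℕ → Ω → ℝ → ℝ} {e : ℕ → Ω → ℝ}
    (S : Setup μ lo up H c e) {J : ℕ → Ω → ℝ} {ω : Ω} (hT : Tendsto (fun k => tau c e k ω) atTop atTop) {t : ℝ}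
    {ψ : ℝ → ℝ} (hψ : ∀ᵐ s ∂(volume.restrict (Ioc 0 t)), ∀ k, tau c e k ω < s → s ≤ tau c e (k + 1) ω →
      ψ s = c k ω s) (h : ℝ → ℝ) (m : ℝ) :
    (∑' k : ℕ, if tau c e (k + 1) ω ≤ t then h (J k ω) else 0) - m * ∫ s in Ioc 0 t, ψ s =
      ∑' k, JSetup.Mk c e J h m k t ω := by
  obtain ⟨n, hn⟩ := (hT.eventually_gt_atTop t).exists
  have hm := (S.strictMono ω).monotone
  have hr := fun k => S.rate k ω
  have he := fun k => S.epos k ω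
  have hN : ∀ k ∉ Finset.range n, (if tau c e (k + 1) ω ≤ t then h (J k ω) else 0) = 0 := by
    intro k hk
    have hk : n ≤ k := by simpa using hk
    exact if_neg (not_le.2 (hn.trans_le (hm (by omega))))
  have hM : ∀ k ∉ Finset.range n, JSetup.Mk c e J h m k t ω = 0 := by
    intro k hk
    have hk' : n ≤ k := by simpa using hk
    unfold JSetup.Mk
    rw [hN k hk]
    have h3 : LamR c e k t ω = 0 := Lam_zero (hn.le.trans (hm hk'))
    simp [h3, (S.epos k ω).le]
  rw [tsum_eq_sum hN, tsum_eq_sum hM]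
  have hI : ∫ s in Ioc 0 t, ψ s = ∑ k ∈ Finset.range n, min (LamR c e k t ω) (e k ω) := by
    have h1 : ∀ k, min (LamR c e k t ω) (e k ω) =
        ∫ s in Ioc 0 t, indicator (Ioc (tau c e k ω) (tau c e (k + 1) ω)) (c k ω) s := fun k =>
      min_eq_integral hr he k t
    simp_rw [h1]
    rw [← integral_finset_sum]
    · refine integral_congr_ae ?_
      filter_upwards [hψ, ae_restrict_mem measurableSet_Ioc] with s hs hst
      obtain ⟨k, hk1, hk2⟩ := exists_slot (τ := fun k => tau c e k ω) rfl hT hst.1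
      have hkn : k < n := by
        by_contra hkn
        have := hm (not_lt.1 hkn)
        simp only at this hk1
        linarith [hst.2]
      rw [hs k hk1 hk2, Finset.sum_eq_single k]
      · rw [indicator_of_mem]
        exact ⟨hk1, hk2⟩
      · intro j _ hj
        rw [indicator_of_notMem]
        rintro ⟨h4, h5⟩
        rcases lt_or_gt_of_ne hj with h | h
        · exact absurd (h5.trans (hm h)) (not_le.2 hk1)
        · exact absurd (hk2.trans (hm h)) (not_le.2 h4)
      · intro h; exact absurd (Finset.mem_range.2 hkn) h
    · intro k _
      exact ((hr k).intOn 0 t).indicator measurableSet_Ioc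
  rw [hI, Finset.mul_sum, ← Finset.sum_sub_distrib]
  rfl

/-- Joint measurability of the intensities. -/
lemma c_meas {𝒜 : MeasurableSpace Ω} {Sk : ℕ → Ω → ℝ} {et : ℝ → Ω → ℝ} {lt g : ℝ → ℝ → ℝ} {k : ℕ}
    (hSk : Measurable[𝒜] (Sk k)) (het : Measurable[MeasurableSpace.prod inferInstance 𝒜] (fun p : ℝ × Ω => et p.1 p.2))
    (hlt : Measurable (fun p : ℝ × ℝ => lt p.1 p.2)) (hg : Measurable (fun p : ℝ × ℝ => g p.1 p.2)) :
    Measurable[𝒜.prod inferInstance] (fun p : Ω × ℝ => rt Sk et lt g (p.2, (p.1, k))) := by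
  have h1 : Measurable (fun p : Ω × ℝ => (p.2, Sk k p.1)) := measurable_snd.prodMk (hSk.comp measurable_fst)
  exact ((het.comp measurable_swap).mul (hlt.comp h1)).div (hg.comp h1)

end assembly

/-- Inverting the Markovian projection for pure jump processes with a
general discrete jump size distribution `ν`: there exist an enlarged filtration `G` satisfying
the usual conditions and a `G`-adapted pure jump process `X_t = Σ_k J_k·1_{τ_k ≤ t}` starting
at `0`, taking values in `FS(Atom(ν))`, whose jump measure has `G`-compensator
`(η_t / E[η_t | X_{t-}]) λ(t, X_{t-}) ν(dξ) dt`; equivalently, for every measurable `h` with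
`h(J_1)` integrable, the compensated process below is a `G`-martingale. -/
theorem invert_markovian_projection_pure_jump
    {m0 : MeasurableSpace Ω} (μ : Measure Ω) [IsProbabilityMeasure μ]
    (F : ℝ → MeasurableSpace Ω) (hUC : UsualConditions μ F)
    (L U : ℝ) (hL : 0 < L) (hLU : L < U)
    (ν : Measure ℝ) [IsProbabilityMeasure ν]
    (hdiscrete : IsDiscrete ν) (hν0 : ν {(0:ℝ)} = 0)
    (hνint : Integrable (fun x : ℝ => x) ν)
    (η : ℝ → Ω → ℝ) (hη_prog : ProgMeas F η)
    (hη_bdd : ∀ᵐ p ∂(μ.prod (volume.restrict (Set.Ici (0:ℝ)))),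
      L ≤ η p.2 p.1 ∧ η p.2 p.1 ≤ U)
    (α : ℝ) (hα : 0 < α ∧ α ≤ 1)
    (hη_holder : ∀ T : ℝ, 0 < T → ∃ CT : ℝ, 0 < CT ∧
      ∀ s ∈ Set.Icc (0:ℝ) T, ∀ t ∈ Set.Icc (0:ℝ) T,
        ∫ ω, |η t ω - η s ω| ∂μ ≤ CT * |t - s| ^ α)
    (lam : ℝ → ℝ → ℝ) (hlam_meas : ∀ x ∈ FS (atomSet ν), Measurable (fun t => lam t x))
    (hlam_bdd : ∀ x ∈ FS (atomSet ν), ∀ᵐ t ∂(volume.restrict (Set.Ici (0:ℝ))),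
      L ≤ lam t x ∧ lam t x ≤ U)
    (E J : ℕ → Ω → ℝ)
    (hE : ∀ k, IsExpOne μ (E k))
    (hJmeas : ∀ k, Measurable (J k))
    (hJlaw : ∀ k, Measure.map (J k) μ = ν)
    (hindep : iIndep (fun i : ℕ ⊕ ℕ ⊕ Unit =>
      Sum.elim (fun k => MeasurableSpace.comap (E k) inferInstance)
        (Sum.elim (fun k => MeasurableSpace.comap (J k) inferInstance)
          (fun _ => Finfty F)) i) μ) :
    ∃ (G : ℝ → MeasurableSpace Ω) (τ : ℕ → Ω → ℝ),
      UsualConditions μ G ∧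
      (∀ t : ℝ, F t ≤ G t) ∧
      (∀ (k : ℕ) (t : ℝ), MeasurableSet[G t] {ω | τ k ω ≤ t}) ∧
      (∀ ω, τ 0 ω = 0) ∧
      (∀ᵐ ω ∂μ, StrictMono (fun k => τ k ω) ∧ Tendsto (fun k => τ k ω) atTop atTop) ∧
      (∀ᵐ ω ∂μ, ∀ t : ℝ, 0 ≤ t → jumpX τ J t ω ∈ FS (atomSet ν)) ∧
      (∀ᵐ ω ∂μ, jumpX τ J 0 ω = 0) ∧
      (∀ t : ℝ, 0 ≤ t → Measurable[G t] (jumpX τ J t)) ∧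
      ∀ h : ℝ → ℝ, Measurable h → Integrable (fun ω => h (J 0 ω)) μ →
        IsMartingale μ G (fun t ω =>
          (∑' k : ℕ, if τ (k + 1) ω ≤ t then h (J k ω) else 0) -
            (∫ x, h x ∂ν) *
              ∫ s in Set.Ioc 0 t,
                η s ω /
                  (μ[η s | MeasurableSpace.comap (jumpXminus τ J s) inferInstance]) ω *
                  lam s (jumpXminus τ J s ω)) := by
  classical
  have hF := hUC.1.2
  have hEm : ∀ k, Measurable (E k) := fun k => (hE k).1
  have hi : iIndep (mm F E J) μ := hindep
  have hU : 0 < U := hL.trans hLU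
  set A := FS (atomSet ν) with hA
  have hAc : A.Countable := FS_countable (atomSet_countable hdiscrete)
  have hFinf : Finfty F ≤ m0 := iSup₂_le fun t _ => hF t
  have hCCle : CC F E J ≤ m0 := sup_le_m0 hF hEm hJmeas _
  have hJA : ∀ᵐ ω ∂μ, ∀ k, J k ω ∈ atomSet ν := by
    refine ae_all_iff.2 fun k => ?_
    have h2 : ∀ᵐ x ∂(μ.map (J k)), x ∈ atomSet ν := by
      rw [hJlaw k]
      exact atomSet_ae hdiscrete
    exact ae_of_ae_map (hJmeas k).aemeasurable h2
  -- the data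
  let Sk : ℕ → Ω → ℝ := fun k ω => ∑ j ∈ Finset.range k, J j ω
  let et : ℝ → Ω → ℝ := fun s ω => max L (min U (η (max s 0) ω))
  let lt : ℝ → ℝ → ℝ := fun s x => if x ∈ A then max L (min U (lam s x)) else L
  have hSkA : ∀ᵐ ω ∂μ, ∀ k, Sk k ω ∈ A := by
    filter_upwards [hJA] with ω hω k
    exact sum_mem_FS hω k
  have hetF : Measurable[MeasurableSpace.prod inferInstance (Finfty F)] (fun p : ℝ × Ω => et p.1 p.2) :=
    et_meas hη_prog L U
  have hetof : ∀ {𝒜 : MeasurableSpace Ω}, Finfty F ≤ 𝒜 →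
      Measurable[MeasurableSpace.prod inferInstance 𝒜] (fun p : ℝ × Ω => et p.1 p.2) := fun h =>
    hetF.mono (sup_le_sup le_rfl (MeasurableSpace.comap_mono h)) le_rfl
  have hltm : Measurable (fun p : ℝ × ℝ => lt p.1 p.2) := lt_meas hAc hlam_meas L U
  have hSkC : ∀ k, Measurable[CC F E J] (Sk k) := fun k =>
    @Finset.measurable_sum _ _ _ _ _ _ (CC F E J) _ _ fun j _ => J_CC j
  have hSkH : ∀ k, Measurable[HH F E J k] (Sk k) := fun k =>
    @Finset.measurable_sum _ _ _ _ _ _ (HH F E J k) _ _ fun j hj => J_HH (Finset.mem_range.1 hj)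
  have d : Dat μ L U A Sk et lt :=
    { hL := hL, hLU := hLU, hA := hAc
      Skm := fun k => (hSkC k).mono hCCle le_rfl
      SkA := fun k => by filter_upwards [hSkA] with ω hω using hω k
      etm := hetof hFinf
      etL := fun s ω => le_max_left _ _
      etU := fun s ω => max_le hLU.le (min_le_left _ _)
      ltm := hltm
      ltL := fun s x => by
        simp only [lt]; split_ifs
        · exact le_max_left _ _
        · exact le_rfl
      ltU := fun s x => by
        simp only [lt]; split_ifs
        · exact max_le hLU.le (min_le_left _ _)
        · exact hLU.le }
  obtain ⟨f, hf, hfi, hff⟩ := d.exists_fixed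
  set g := gg μ L U Sk et f with hgdef
  have hgm : Measurable (fun p : ℝ × ℝ => g p.1 p.2) := d.gg_meas hf
  let c : ℕ → Ω → ℝ → ℝ := fun k ω s => rt Sk et lt g (s, (ω, k))
  let e : ℕ → Ω → ℝ := fun k ω => pe (E k ω)
  have hcC : ∀ k, Measurable[(CC F E J).prod inferInstance] (fun p : Ω × ℝ => c k p.1 p.2) := fun k =>
    c_meas (hSkC k) (hetof Finfty_le_CC) hltm hgm
  have hcH : ∀ k, Measurable[(HH F E J k).prod inferInstance] (fun p : Ω × ℝ => c k p.1 p.2) := fun k =>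
    c_meas (hSkH k) (hetof (Finfty_le_HH k)) hltm hgm
  have S : JSetup μ (L ^ 2 / U) (U ^ 2 / L) ν (HH F E J) c e J :=
    { Hle := fun k => sup_le_m0 hF hEm hJmeas _
      Hmono := HH_mono
      rate := fun k ω =>
        { lo_pos := by positivity
          meas := (d.rt_meas hgm).comp (by fun_prop : Measurable fun s : ℝ => (s, (ω, k)))
          lower := fun s => (d.rt_bd (gg_mem hLU f) (s, (ω, k))).1
          upper := fun s => (d.rt_bd (gg_mem hLU f) (s, (ω, k))).2 }
      epos := fun k ω => pe_pos _
      cmeas := hcH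
      emeas := fun k => pe_meas.comp (E_HH k.lt_succ_self)
      indep := HH_indep hF hEm hJmeas hi
      eexp := fun k => pe_exp (hE k)
      Jmeas := fun k => J_HH k.lt_succ_self
      Jlaw := hJlaw
      Jindep := J_indep hF hEm hJmeas hi
      Hnull := fun s hs => Finfty_le_HH 0 _ (le_iSup₂_of_le (f := fun t (_ : t ∈ Ici (0:ℝ)) => F t)
        (0:ℝ) (mem_Ici.2 le_rfl) le_rfl _ (hUC.2.2 s hs)) }
  have S0 : Setup μ (L ^ 2 / U) (U ^ 2 / L) (HH F E J) c e := S.toSetup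
  let τ := tau c e
  have hmono : ∀ ω, Monotone fun k => τ k ω := fun ω => (S0.strictMono ω).monotone
  have hm0null : ∀ s : Set Ω, μ s = 0 → MeasurableSet s := fun s hs => hF 0 _ (hUC.2.2 s hs)
  -- left limits
  have hXm : ∀ s, 0 < s → ∀ᵐ ω ∂μ, ∃ k, (τ k ω < s ∧ s ≤ τ (k + 1) ω) ∧ jumpXminus τ J s ω = Sk k ω := by
    intro s hs
    filter_upwards [S0.ae_tendsto] with ω hω
    obtain ⟨k, hk1, hk2⟩ := exists_slot (τ := fun k => τ k ω) rfl hω hs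
    exact ⟨k, ⟨hk1, hk2⟩, jumpXminus_eq (hmono ω) hk1 hk2⟩
  have hXmeas : ∀ s, Measurable (jumpXminus τ J s) := by
    intro s
    have hNm : ∀ k, Measurable (fun ω => if τ (k + 1) ω < s then J k ω else 0) := fun k =>
      Measurable.ite (measurableSet_lt (S.taum (k + 1)) measurable_const) (hJmeas k) measurable_const
    have hlim : Measurable (fun ω => limsup (fun n => ∑ k ∈ Finset.range n, if τ (k + 1) ω < s then J k ω else 0) atTop) :=
      Measurable.limsup fun n => Finset.measurable_sum _ fun k _ => hNm k
    have hae : jumpXminus τ J s =ᵐ[μ] fun ω => limsup (fun n => ∑ k ∈ Finset.range n, if τ (k + 1) ω < s then J k ω else 0) atTop := by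
      filter_upwards [S0.ae_tendsto] with ω hω
      refine (Tendsto.limsup_eq (HasSum.tendsto_sum_nat (Summable.hasSum ?_))).symm
      obtain ⟨n, hn⟩ := (hω.eventually_gt_atTop s).exists
      refine summable_of_ne_finset_zero (s := Finset.range n) fun k hk => ?_
      have hk : n ≤ k := by simpa using hk
      exact if_neg (not_lt.2 (hn.le.trans (hmono ω (by omega))))
    intro B hB
    have h0 : μ {ω | jumpXminus τ J s ω ≠ limsup (fun n => ∑ k ∈ Finset.range n, if τ (k + 1) ω < s then J k ω else 0) atTop} = 0 :=
      ae_iff.1 hae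
    set Y := fun ω => limsup (fun n => ∑ k ∈ Finset.range n, if τ (k + 1) ω < s then J k ω else 0) atTop with hY
    set N := {ω | jumpXminus τ J s ω ≠ Y ω} with hN
    have : jumpXminus τ J s ⁻¹' B = (Y ⁻¹' B \ N) ∪ (jumpXminus τ J s ⁻¹' B ∩ N) := by
      ext ω
      by_cases hω : jumpXminus τ J s ω = Y ω
      · simp [hN, hω]
      · simp [hN, hω]
    rw [this]
    exact ((hlim hB).diff (hm0null _ h0)).union (hm0null _ (measure_mono_null inter_subset_right h0))
  -- identification of the conditional expectation
  have hident := d.ident hf hfi hff (c := c) (e := e) rfl S0 hCCle (fun k ω => rfl) hEm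
    (CC_indep hF hEm hJmeas hi) hcC hSkC
    (fun s => by
      let _ : MeasurableSpace Ω := CC F E J
      exact (hetof Finfty_le_CC).comp measurable_prodMk_left)
    (X := jumpXminus τ J) hXm
  have hsub : volume.restrict (Ioi (0:ℝ)) ≤ volume.restrict (Ici (0:ℝ)) :=
    Measure.restrict_mono Ioi_subset_Ici_self le_rfl
  have hbd2 : ∀ᵐ s ∂(volume.restrict (Ioi (0:ℝ))), ∀ᵐ ω ∂μ, L ≤ η s ω ∧ η s ω ≤ U := by
    have h1 := (Measure.measurePreserving_swap (μ := volume.restrict (Ici (0:ℝ))) (ν := μ)).quasiMeasurePreserving.ae hη_bdd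
    exact ae_mono hsub (Measure.ae_ae_of_ae_prod h1)
  have hbd1 : ∀ᵐ ω ∂μ, ∀ᵐ s ∂(volume.restrict (Ioi (0:ℝ))), L ≤ η s ω ∧ η s ω ≤ U := by
    filter_upwards [Measure.ae_ae_of_ae_prod hη_bdd] with ω hω
    exact ae_mono hsub hω
  have het_eq : ∀ s ω, 0 < s → L ≤ η s ω ∧ η s ω ≤ U → et s ω = η s ω := by
    intro s ω hs h
    simp only [et]
    rw [max_eq_left hs.le, min_eq_right h.2, max_eq_right h.1]
  have hlam_eq : ∀ᵐ s ∂(volume.restrict (Ioi (0:ℝ))), ∀ x ∈ A, lam s x = lt s x := by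
    refine (ae_ball_iff hAc).2 fun x hx => ?_
    filter_upwards [ae_mono hsub (hlam_bdd x hx)] with s hs
    simp only [lt]
    rw [if_pos hx, min_eq_right hs.2, max_eq_right hs.1]
  have hce : ∀ᵐ s ∂(volume.restrict (Ioi (0:ℝ))), ∀ ω, jumpXminus τ J s ω ∈ A →
      (μ[η s | MeasurableSpace.comap (jumpXminus τ J s) inferInstance]) ω = g s (jumpXminus τ J s ω) := by
    filter_upwards [hident, hbd2, ae_restrict_mem measurableSet_Ioi] with s hs1 hs2 hs0 ω hω
    have hetsm : Measurable (et s) := d.etm.comp measurable_prodMk_left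
    have heq : et s =ᵐ[μ] η s := by
      filter_upwards [hs2] with ω' hω' using het_eq s ω' hs0 hω'
    have heti : Integrable (et s) μ := by
      refine Integrable.of_bound hetsm.aestronglyMeasurable U (ae_of_all _ fun ω' => ?_)
      rw [Real.norm_of_nonneg (hL.le.trans (d.etL s ω'))]
      exact d.etU s ω'
    have hset : MeasurableSet {ω' | jumpXminus τ J s ω' = jumpXminus τ J s ω} :=
      hXmeas s (measurableSet_singleton _)
    refine condExp_fibre (hXmeas s) (heti.congr heq)
      (pos_fibre S0 hE hJmeas hJlaw hi hs0 hω) ?_ rfl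
    rw [← setIntegral_congr_ae hset (heq.mono fun ω' h _ => h)]
    have h1 := hs1 (jumpXminus τ J s ω)
    have h2 : ∫⁻ ω', (if jumpXminus τ J s ω' = jumpXminus τ J s ω then (1:ℝ≥0∞) else 0) ∂μ =
        μ {ω' | jumpXminus τ J s ω' = jumpXminus τ J s ω} := by
      rw [← lintegral_indicator_one hset]
      refine lintegral_congr fun ω' => ?_
      simp only [indicator, mem_ofPred_eq, Pi.one_apply]
    have h3 : ∫⁻ ω', (if jumpXminus τ J s ω' = jumpXminus τ J s ω then ENNReal.ofReal (et s ω') else 0) ∂μ =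
        ∫⁻ ω' in {ω' | jumpXminus τ J s ω' = jumpXminus τ J s ω}, ENNReal.ofReal (et s ω') ∂μ := by
      rw [← lintegral_indicator hset]
      refine lintegral_congr fun ω' => ?_
      simp only [indicator, mem_ofPred_eq]
    rw [h2, h3] at h1
    rw [integral_eq_lintegral_of_nonneg_ae (ae_of_all _ fun ω' => hL.le.trans (d.etL s ω'))
      hetsm.aestronglyMeasurable]
    exact h1
  refine ⟨GF m0 (HH F E J) τ, τ, S.usual, ?_, S.stop_meas, fun ω => rfl, ?_, ?_, ?_, ?_, ?_⟩
  · intro t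
    rcases lt_or_ge t 0 with ht | ht
    · rw [GF_neg _ _ _ ht]; exact hF t
    · rw [GF_nonneg _ _ _ ht]
      intro B hB
      refine ⟨hF t _ hB, fun k => ⟨B, ?_, fun ω _ => Iff.rfl⟩⟩
      exact Finfty_le_HH k _ (le_iSup₂_of_le (f := fun t (_ : t ∈ Ici (0:ℝ)) => F t) t (mem_Ici.2 ht) le_rfl _ hB)
  · filter_upwards [S0.ae_tendsto] with ω hω
    exact ⟨S0.strictMono ω, hω⟩
  · filter_upwards [S0.ae_tendsto, hSkA] with ω hω hS t ht
    obtain ⟨k, hk1, hk2⟩ := exists_slot' (τ := fun k => τ k ω) rfl hω ht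
    rw [jumpX_eq' (hmono ω) hk1 hk2]
    exact hS k
  · refine ae_of_all _ fun ω => ?_
    have h1 : τ 0 ω < τ 1 ω := S0.strictMono ω Nat.zero_lt_one
    rw [jumpX_eq' (k := 0) (hmono ω) (le_refl (0:ℝ)) h1]
    simp
  · intro t ht
    refine S.G_meas ht (Z := fun k ω => ∑ j ∈ Finset.range k, if τ (j + 1) ω ≤ t then J j ω else 0) (fun k => ?_)
      fun k ω hk => jumpX_eq (hmono ω) hk
    refine @Finset.measurable_sum _ _ _ _ _ _ (HH F E J k) _ _ fun j hj => ?_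
    exact (S.N_meas measurable_id j t).mono (HH_mono (Finset.mem_range.1 hj)) le_rfl
  · intro h hh hhi
    refine IsMartingale.congr S.usual (S.M_mart hh (S.hν hh hhi)) fun t ht => ?_
    filter_upwards [S0.ae_tendsto, hSkA, hbd1] with ω hω hS hb
    refine comp_eq S0 hω ?_ h _
    have hle : volume.restrict (Ioc (0:ℝ) t) ≤ volume.restrict (Ioi (0:ℝ)) :=
      Measure.restrict_mono (fun s hs => hs.1) le_rfl
    filter_upwards [ae_mono hle hb, ae_mono hle hce, ae_mono hle hlam_eq, ae_restrict_mem measurableSet_Ioc]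
      with s hs1 hs2 hs3 hs4 k hk1 hk2
    have hX : jumpXminus τ J s ω = Sk k ω := jumpXminus_eq (hmono ω) hk1 hk2
    have hXA : jumpXminus τ J s ω ∈ A := by rw [hX]; exact hS k
    have h4 := hs2 ω hXA
    have h5 := hs3 _ hXA
    refine (congrArg₂ (· * ·) (congrArg (η s ω / ·) h4) h5).trans ?_
    rw [← het_eq s ω hs4.1 hs1, hX]
    simp only [c, rt]
    ring

end InvMarkovJump
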